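/- arXiv:1906.05485 — 3 statements merged into one kernel-verified Lean document; each statement's English description precedes it below -/
import Mathlib

section
/- Let Z > 0, let a < b be reals, and let w : ℝ × [1,∞) → ℂ, written w(x; λ), be smooth, supported in [a,b] in the x-variable for every λ ≥ 1, and satisfying |λ^j ∂_x^i ∂_λ^j w(x;λ)| ≤ C_{i,j}·Z for all i, j ≥ 0, all x, and all λ ≥ 1. Let f : ℝ → ℝ be smooth on an open neighborhood of [a,b] and suppose there is a point x₀ ∈ (a,b) with f(x₀) = f'(x₀) = 0, f''(x₀) ≠ 0, and f'(x) ≠ 0 for all x ∈ [a,b] with x ≠ x₀. Then for every integer j ≥ 0 there is a constant C, depending only on j, f, a, b and finitely many of the C_{i,j}, such that |d^j/dλ^j ∫_a^b e(λ f(x)) w(x; λ) dx| ≤ C·Z/λ^{1/2+j} for all λ ≥ 1. -/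
/-- `e(t) = exp(2πit)`. -/
noncomputable def e (t : ℝ) : ℂ := Complex.exp (2 * (Real.pi : ℂ) * Complex.I * t)

open Set Filter Topology MeasureTheory

namespace SP

noncomputable def D (v : ℝ × ℝ) (G : ℝ × ℝ → ℂ) : ℝ × ℝ → ℂ := fun p => fderiv ℝ G p v

lemma D_contDiffOn {U : Set (ℝ × ℝ)} (hU : IsOpen U) {G : ℝ × ℝ → ℂ}
    (hG : ContDiffOn ℝ (⊤ : ℕ∞) G U) (v : ℝ × ℝ) : ContDiffOn ℝ (⊤ : ℕ∞) (D v G) U := by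
  have := hG.fderiv_of_isOpen (m := (⊤ : ℕ∞)) hU (by simp)
  exact this.clm_apply contDiffOn_const

lemma D_iter_contDiffOn {U : Set (ℝ × ℝ)} (hU : IsOpen U) {G : ℝ × ℝ → ℂ}
    (hG : ContDiffOn ℝ (⊤ : ℕ∞) G U) (v : ℝ × ℝ) (n : ℕ) :
    ContDiffOn ℝ (⊤ : ℕ∞) ((D v)^[n] G) U := by
  induction n with
  | zero => simpa using hG
  | succ n ih => rw [Function.iterate_succ_apply']; exact D_contDiffOn hU ih v

lemma D_hasDerivAt {U : Set (ℝ × ℝ)} (hU : IsOpen U) {G : ℝ × ℝ → ℂ}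
    (hG : ContDiffOn ℝ (⊤ : ℕ∞) G U) {v : ℝ × ℝ} {γ : ℝ → ℝ × ℝ} {t : ℝ}
    (hγ : HasDerivAt γ v t) (ht : γ t ∈ U) :
    HasDerivAt (fun s => G (γ s)) (D v G (γ t)) t := by
  have h1 : DifferentiableAt ℝ G (γ t) :=
    (hG.contDiffAt (hU.mem_nhds ht)).differentiableAt (by simp)
  exact h1.hasFDerivAt.comp_hasDerivAt t hγ

lemma D_iteratedDeriv {U : Set (ℝ × ℝ)} (hU : IsOpen U) {G : ℝ × ℝ → ℂ}
    (hG : ContDiffOn ℝ (⊤ : ℕ∞) G U) {v : ℝ × ℝ} {γ : ℝ → ℝ × ℝ}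
    (hγ : ∀ t, HasDerivAt γ v t) (n : ℕ) :
    ∀ t, γ t ∈ U → iteratedDeriv n (fun s => G (γ s)) t = (D v)^[n] G (γ t) := by
  have hγc : Continuous γ := continuous_iff_continuousAt.2 fun t => (hγ t).continuousAt
  induction n with
  | zero => simp
  | succ n ih =>
    intro t ht
    rw [iteratedDeriv_succ, Function.iterate_succ_apply']
    have : iteratedDeriv n (fun s => G (γ s)) =ᶠ[𝓝 t] fun s => (D v)^[n] G (γ s) := by
      filter_upwards [(hU.preimage hγc).mem_nhds ht] with s hs using ih s hs
    rw [this.deriv_eq]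
    exact (D_hasDerivAt hU (D_iter_contDiffOn hU hG v n) (hγ t) ht).deriv

lemma D_congr {U : Set (ℝ × ℝ)} (hU : IsOpen U) {G H : ℝ × ℝ → ℂ} (h : EqOn G H U)
    (v : ℝ × ℝ) : EqOn (D v G) (D v H) U := by
  intro p hp
  have : G =ᶠ[𝓝 p] H := by filter_upwards [hU.mem_nhds hp] with q hq using h hq
  simp only [D, this.fderiv_eq]

lemma D_iter_congr {U : Set (ℝ × ℝ)} (hU : IsOpen U) {G H : ℝ × ℝ → ℂ} (h : EqOn G H U)
    (v : ℝ × ℝ) (n : ℕ) : EqOn ((D v)^[n] G) ((D v)^[n] H) U := by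
  induction n with
  | zero => simpa using h
  | succ n ih => simp only [Function.iterate_succ_apply']; exact D_congr hU ih v

lemma D_comm {U : Set (ℝ × ℝ)} (hU : IsOpen U) {G : ℝ × ℝ → ℂ}
    (hG : ContDiffOn ℝ (⊤ : ℕ∞) G U) (v u : ℝ × ℝ) : EqOn (D v (D u G)) (D u (D v G)) U := by
  intro p hp
  have hc : ContDiffAt ℝ (⊤ : ℕ∞) G p := hG.contDiffAt (hU.mem_nhds hp)
  have hs : IsSymmSndFDerivAt ℝ G p := hc.isSymmSndFDerivAt (by
    simp only [minSmoothness_of_isRCLikeNormedField]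
    exact WithTop.coe_le_coe.2 (le_top (a := (2 : ℕ∞))))
  have hd : DifferentiableAt ℝ (fderiv ℝ G) p :=
    ((hG.fderiv_of_isOpen (m := (⊤ : ℕ∞)) hU (by simp)).contDiffAt
      (hU.mem_nhds hp)).differentiableAt (by simp)
  have key : ∀ a b : ℝ × ℝ, D a (D b G) p = fderiv ℝ (fderiv ℝ G) p a b := by
    intro a b
    have := (hd.hasFDerivAt.clm_apply (hasFDerivAt_const b p)).fderiv
    change fderiv ℝ (fun y => (fderiv ℝ G y) b) p a = _
    rw [this]; simp
  rw [key, key]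
  exact hs v u

lemma D_iter_comm1 {U : Set (ℝ × ℝ)} (hU : IsOpen U) {G : ℝ × ℝ → ℂ}
    (hG : ContDiffOn ℝ (⊤ : ℕ∞) G U) (v u : ℝ × ℝ) (n : ℕ) :
    EqOn ((D v)^[n] (D u G)) (D u ((D v)^[n] G)) U := by
  induction n with
  | zero => intro p _; rfl
  | succ n ih =>
    simp only [Function.iterate_succ_apply']
    exact (D_congr hU ih v).trans (D_comm hU (D_iter_contDiffOn hU hG v n) v u)

lemma D_iter_comm {U : Set (ℝ × ℝ)} (hU : IsOpen U) {G : ℝ × ℝ → ℂ}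
    (hG : ContDiffOn ℝ (⊤ : ℕ∞) G U) (v u : ℝ × ℝ) (n m : ℕ) :
    EqOn ((D v)^[n] ((D u)^[m] G)) ((D u)^[m] ((D v)^[n] G)) U := by
  induction m with
  | zero => intro p _; rfl
  | succ m ih =>
    simp only [Function.iterate_succ_apply']
    exact (D_iter_comm1 hU (D_iter_contDiffOn hU hG u m) v u n).trans (D_congr hU ih u)

lemma hγ2 (x t : ℝ) : HasDerivAt (fun l : ℝ => (x, l)) ((0, 1) : ℝ × ℝ) t :=
  (hasDerivAt_const t x).prodMk (hasDerivAt_id t)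

lemma hγ1 (l t : ℝ) : HasDerivAt (fun x : ℝ => (x, l)) ((1, 0) : ℝ × ℝ) t :=
  (hasDerivAt_id t).prodMk (hasDerivAt_const t l)

/-- parametric integrals -/
lemma param_hasDerivAt {U : Set (ℝ × ℝ)} (hU : IsOpen U) {G : ℝ × ℝ → ℂ}
    (hG : ContDiffOn ℝ (⊤ : ℕ∞) G U) {a b : ℝ} (hab : a ≤ b) {l : ℝ}
    (hl : Icc a b ×ˢ {l} ⊆ U) :
    HasDerivAt (fun l => ∫ x in a..b, G (x, l)) (∫ x in a..b, D (0, 1) G (x, l)) l := by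
  obtain ⟨A, B, hA, hB, hIA, hlB, hAB⟩ :=
    generalized_tube_lemma isCompact_Icc (isCompact_singleton (x := l)) hU hl
  have hBn : B ∈ 𝓝 l := hB.mem_nhds (hlB rfl)
  obtain ⟨K, hKn, hKB, hK⟩ := local_compact_nhds hBn
  have hsub : Icc a b ×ˢ K ⊆ U := (Set.prod_mono hIA hKB).trans hAB
  have hDc : ContinuousOn (D (0, 1) G) (Icc a b ×ˢ K) :=
    ((D_contDiffOn hU hG (0, 1)).continuousOn).mono hsub
  obtain ⟨C, hC⟩ := (isCompact_Icc.prod hK).exists_bound_of_continuousOn hDc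
  have hsl : ∀ {H : ℝ × ℝ → ℂ}, ContinuousOn H U → ∀ m ∈ K,
      ContinuousOn (fun x => H (x, m)) (uIcc a b) := by
    intro H hH m hm
    rw [uIcc_of_le hab]
    exact hH.comp (by fun_prop) fun x hx => hsub ⟨hx, hm⟩
  have hlK : l ∈ K := mem_of_mem_nhds hKn
  refine (intervalIntegral.hasDerivAt_integral_of_dominated_loc_of_deriv_le
    (F := fun l x => G (x, l)) (F' := fun l x => D (0, 1) G (x, l)) (bound := fun _ => C)
    hKn ?_ ?_ ?_ ?_ ?_ ?_).2
  · filter_upwards [hKn] with m hm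
    exact ((hsl hG.continuousOn m hm).mono uIoc_subset_uIcc).aestronglyMeasurable measurableSet_uIoc
  · exact (hsl hG.continuousOn l hlK).intervalIntegrable
  · exact ((hsl (D_contDiffOn hU hG _).continuousOn l hlK).mono
      uIoc_subset_uIcc).aestronglyMeasurable measurableSet_uIoc
  · refine Eventually.of_forall fun x hx m hm => hC _ ⟨?_, hm⟩
    rw [uIoc_of_le hab] at hx
    exact Ioc_subset_Icc_self hx
  · exact intervalIntegrable_const
  · refine Eventually.of_forall fun x hx m hm => ?_
    rw [uIoc_of_le hab] at hx
    exact D_hasDerivAt hU hG (hγ2 x m) (hsub ⟨Ioc_subset_Icc_self hx, hm⟩)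

lemma param_iter {U : Set (ℝ × ℝ)} (hU : IsOpen U) {G : ℝ × ℝ → ℂ}
    (hG : ContDiffOn ℝ (⊤ : ℕ∞) G U) {a b : ℝ} (hab : a ≤ b) (n : ℕ) :
    ∀ l, Icc a b ×ˢ {l} ⊆ U →
    iteratedDeriv n (fun l => ∫ x in a..b, G (x, l)) l =
      ∫ x in a..b, (D (0, 1))^[n] G (x, l) := by
  induction n with
  | zero => simp
  | succ n ih =>
    intro l hl
    obtain ⟨A, B, hA, hB, hIA, hlB, hAB⟩ :=
      generalized_tube_lemma isCompact_Icc (isCompact_singleton (x := l)) hU hl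
    rw [iteratedDeriv_succ]
    have : iteratedDeriv n (fun l => ∫ x in a..b, G (x, l)) =ᶠ[𝓝 l]
        fun l => ∫ x in a..b, (D (0, 1))^[n] G (x, l) := by
      filter_upwards [hB.mem_nhds (hlB rfl)] with m hm
      exact ih m ((Set.prod_mono hIA (by simpa using hm)).trans hAB)
    rw [this.deriv_eq]
    simp only [Function.iterate_succ_apply']
    exact (param_hasDerivAt hU (D_iter_contDiffOn hU hG _ n) hab hl).deriv

lemma param_contDiff_nat {a b : ℝ} (hab : a ≤ b) (n : ℕ) : ∀ {G : ℝ × ℝ → ℂ},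
    ContDiff ℝ (⊤ : ℕ∞) G → ContDiff ℝ n (fun l => ∫ x in a..b, G (x, l)) := by
  induction n with
  | zero =>
    intro G hG
    refine contDiff_zero.2 (continuous_iff_continuousAt.2 fun l => ?_)
    exact (param_hasDerivAt isOpen_univ hG.contDiffOn hab (subset_univ _)).continuousAt
  | succ n ih =>
    intro G hG
    have hd : ∀ l, HasDerivAt (fun l => ∫ x in a..b, G (x, l)) (∫ x in a..b, D (0, 1) G (x, l)) l :=
      fun l => param_hasDerivAt isOpen_univ hG.contDiffOn hab (subset_univ _)
    push_cast
    rw [contDiff_succ_iff_deriv]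
    refine ⟨fun l => (hd l).differentiableAt, by simp, ?_⟩
    rw [show deriv (fun l => ∫ x in a..b, G (x, l)) = fun l => ∫ x in a..b, D (0, 1) G (x, l) from
      funext fun l => (hd l).deriv]
    exact ih (contDiffOn_univ.1 (D_contDiffOn isOpen_univ hG.contDiffOn _))

lemma hadamard {F : ℝ → ℂ} (hF : ContDiff ℝ (⊤ : ℕ∞) F) (x₀ : ℝ) (h0 : F x₀ = 0) :
    ∃ G : ℝ → ℂ, ContDiff ℝ (⊤ : ℕ∞) G ∧ ∀ x, F x = ((x - x₀ : ℝ) : ℂ) * G x := by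
  have hF' : ContDiff ℝ (⊤ : ℕ∞) (deriv F) := (contDiff_infty_iff_deriv.1 hF).2
  refine ⟨fun x => ∫ t in (0:ℝ)..1, deriv F (x₀ + t * (x - x₀)), ?_, ?_⟩
  · refine contDiff_infty.2 fun n => ?_
    refine param_contDiff_nat zero_le_one n
      (G := fun p : ℝ × ℝ => deriv F (x₀ + p.1 * (p.2 - x₀))) ?_
    exact hF'.comp (by fun_prop)
  · intro x
    have h1 : ∀ t ∈ uIcc (0:ℝ) 1, HasDerivAt (fun t : ℝ => F (x₀ + t * (x - x₀)))
        (((x - x₀ : ℝ) : ℂ) * deriv F (x₀ + t * (x - x₀))) t := by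
      intro t _
      have ha : HasDerivAt (fun t : ℝ => x₀ + t * (x - x₀)) (x - x₀) t := by
        simpa using ((hasDerivAt_id t).mul_const (x - x₀)).const_add x₀
      have hb : HasDerivAt F (deriv F (x₀ + t * (x - x₀))) (x₀ + t * (x - x₀)) :=
        (hF.differentiable (by simp) _).hasDerivAt
      have := hb.scomp t ha
      simpa [Function.comp_def] using this
    have h2 := intervalIntegral.integral_eq_sub_of_hasDerivAt h1 (by
      apply Continuous.intervalIntegrable
      exact continuous_const.mul (hF'.continuous.comp (by fun_prop)))
    rw [intervalIntegral.integral_const_mul] at h2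
    rw [h2]; simp [h0]

lemma e_norm (t : ℝ) : ‖e t‖ = 1 := by
  rw [e, show 2 * (Real.pi : ℂ) * Complex.I * t = ((2 * Real.pi * t : ℝ) : ℂ) * Complex.I by
    push_cast; ring]
  exact Complex.norm_exp_ofReal_mul_I _

lemma e_contDiff : ContDiff ℝ (⊤ : ℕ∞) e := by
  unfold e
  have : ContDiff ℝ (⊤ : ℕ∞) (fun t : ℝ => (t : ℂ)) := Complex.ofRealCLM.contDiff
  fun_prop

lemma e_hasDerivAt (t : ℝ) : HasDerivAt e (2 * Real.pi * Complex.I * e t) t := by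
  have h := ((Complex.ofRealCLM.hasDerivAt (x := t)).const_mul (2 * (Real.pi : ℂ) * Complex.I)).cexp
  simp only [Complex.ofRealCLM_apply, Complex.ofReal_one, mul_one] at h
  rw [mul_comm]
  exact h

lemma e_comp_hasDerivAt {f : ℝ → ℝ} (hf : ContDiff ℝ (⊤ : ℕ∞) f) (l x : ℝ) :
    HasDerivAt (fun x => e (l * f x)) (2 * Real.pi * Complex.I * l * (deriv f x : ℝ) * e (l * f x)) x := by
  have h1 : HasDerivAt (fun x => l * f x) (l * deriv f x) x :=
    ((hf.differentiable (by simp) x).hasDerivAt).const_mul l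
  have h := (e_hasDerivAt (l * f x)).scomp x h1
  refine h.congr_deriv ?_
  rw [Complex.real_smul]; push_cast; ring

lemma phi_int (a b x₀ s : ℝ) (hs : 1 ≤ s) :
    ∫ x in a..b, (1 + s ^ 2 * (x - x₀) ^ 2)⁻¹ ≤ Real.pi / s := by
  have hs0 : 0 < s := by linarith
  have h1 : ∀ x ∈ uIcc a b, HasDerivAt (fun x => Real.arctan (s * (x - x₀)) / s)
      ((1 + s ^ 2 * (x - x₀) ^ 2)⁻¹) x := by
    intro x _
    have h0 : HasDerivAt (fun x => s * (x - x₀)) s x := by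
      simpa using ((hasDerivAt_id x).sub_const x₀).const_mul s
    have := h0.arctan.div_const s
    refine this.congr_deriv ?_
    rw [one_div, mul_div_assoc, div_self hs0.ne', mul_one, mul_pow]
  rw [intervalIntegral.integral_eq_sub_of_hasDerivAt h1]
  · rw [← sub_div]
    gcongr
    linarith [Real.arctan_lt_pi_div_two (s * (b - x₀)), Real.neg_pi_div_two_lt_arctan (s * (a - x₀))]
  · apply Continuous.intervalIntegrable
    refine Continuous.inv₀ (by fun_prop) fun x => by positivity

lemma bdd_Icc {F : ℝ → ℂ} (hF : Continuous F) (a b : ℝ) :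
    ∃ C : ℝ, 0 ≤ C ∧ ∀ x ∈ Icc a b, ‖F x‖ ≤ C := by
  obtain ⟨C, hC⟩ := (isCompact_Icc (a := a) (b := b)).exists_bound_of_continuousOn hF.continuousOn
  exact ⟨max C 0, le_max_right _ _, fun x hx => (hC x hx).trans (le_max_left _ _)⟩

lemma ibp {a b : ℝ} {f : ℝ → ℝ} (hf : ContDiff ℝ (⊤ : ℕ∞) f)
    {u : ℝ → ℂ} (hu : ContDiff ℝ (⊤ : ℕ∞) u) (ha : u a = 0) (hb : u b = 0) (l : ℝ) :
    ∫ x in a..b, u x * (2 * Real.pi * Complex.I * l * (deriv f x : ℝ) * e (l * f x)) =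
      - ∫ x in a..b, deriv u x * e (l * f x) := by
  have hu' : Continuous (deriv u) := hu.continuous_deriv (by simp)
  have hf' : Continuous (deriv f) := hf.continuous_deriv (by simp)
  have hfc := hf.continuous
  have hec := e_contDiff.continuous
  have := intervalIntegral.integral_mul_deriv_eq_deriv_mul (a := a) (b := b) (u := u)
    (v := fun x => e (l * f x)) (u' := deriv u)
    (v' := fun x => 2 * Real.pi * Complex.I * l * (deriv f x : ℝ) * e (l * f x))
    (fun x _ => (hu.differentiable (by simp) x).hasDerivAt)
    (fun x _ => e_comp_hasDerivAt hf l x) (hu'.intervalIntegrable _ _)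
    (by apply Continuous.intervalIntegrable; fun_prop)
  rw [this, ha, hb]; simp

lemma base {a b : ℝ} (hab : a ≤ b) {f : ℝ → ℝ} (hf : ContDiff ℝ (⊤ : ℕ∞) f)
    (x₀ : ℝ) {R : ℝ → ℂ} (hRs : ContDiff ℝ (⊤ : ℕ∞) R)
    (hR : ∀ x ∈ Icc a b, ((deriv f x : ℝ) : ℂ) * R x = ((x - x₀ : ℝ) : ℂ)) (B0 B1 : ℝ) :
    ∃ C : ℝ, 0 ≤ C ∧ ∀ (M : ℝ) (g : ℝ → ℂ), ContDiff ℝ (⊤ : ℕ∞) g → g a = 0 → g b = 0 →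
      (∀ x ∈ Icc a b, ‖g x‖ ≤ B0 * M) → (∀ x ∈ Icc a b, ‖deriv g x‖ ≤ B1 * M) →
      0 ≤ M → ∀ s : ℝ, 1 ≤ s →
      ‖∫ x in a..b, e (s ^ 2 * f x) * g x‖ ≤ C * M / s := by
  obtain ⟨R0, hR0, hRb⟩ := bdd_Icc hRs.continuous a b
  obtain ⟨R1, hR1, hRb'⟩ := bdd_Icc (hRs.continuous_deriv (by simp)) a b
  have hpi := Real.pi_pos
  refine ⟨(|B0| + |B0| * R0) * Real.pi + (|B1| * R0 + |B0| * R1) * (b - a), ?_, ?_⟩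
  · have : 0 ≤ b - a := by linarith
    positivity
  intro M g hg hga hgb hB0 hB1 hM s hs
  have hs0 : 0 < s := by linarith
  set φ : ℝ → ℝ := fun x => (1 + s ^ 2 * (x - x₀) ^ 2)⁻¹ with hφ
  have hpos : ∀ x, 0 < 1 + s ^ 2 * (x - x₀) ^ 2 := fun x => by positivity
  have hφs : ContDiff ℝ (⊤ : ℕ∞) φ := ContDiff.inv (by fun_prop) fun x => (hpos x).ne'
  have hφc := hφs.continuous
  set ψ : ℝ → ℝ := fun x => (x - x₀) * φ x with hψ
  have hψs : ContDiff ℝ (⊤ : ℕ∞) ψ := by fun_prop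
  have hψc : ContDiff ℝ (⊤ : ℕ∞) (fun x => (ψ x : ℂ)) := Complex.ofRealCLM.contDiff.comp hψs
  have hψd : ∀ x, HasDerivAt ψ ((1 - s ^ 2 * (x - x₀) ^ 2) * φ x ^ 2) x := by
    intro x
    have h1 : HasDerivAt (fun x => x - x₀) 1 x := (hasDerivAt_id x).sub_const x₀
    have h2 := ((h1.pow 2).const_mul (s ^ 2)).const_add 1
    have h3 := h1.mul (h2.inv (hpos x).ne')
    refine h3.congr_deriv ?_
    simp only [hφ]
    have := (hpos x).ne'
    simp
    field_simp
    ring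
  have hφpos : ∀ x, 0 < φ x := fun x => inv_pos.2 (hpos x)
  have hψb : ∀ x, |ψ x| ≤ 1 / s := by
    intro x
    simp only [hψ, hφ, abs_mul, abs_of_pos (inv_pos.2 (hpos x))]
    rw [← div_eq_mul_inv, div_le_div_iff₀ (hpos x) hs0]
    nlinarith [sq_nonneg (s * |x - x₀| - 1), sq_abs (x - x₀), sq_nonneg (s * |x - x₀|)]
  have hψdb : ∀ x, |(1 - s ^ 2 * (x - x₀) ^ 2) * φ x ^ 2| ≤ φ x := by
    intro x
    have h1 : |1 - s ^ 2 * (x - x₀) ^ 2| ≤ 1 + s ^ 2 * (x - x₀) ^ 2 := by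
      have : 0 ≤ s ^ 2 * (x - x₀) ^ 2 := by positivity
      rw [abs_le]; constructor <;> linarith
    have h2 : (1 + s ^ 2 * (x - x₀) ^ 2) * φ x = 1 := mul_inv_cancel₀ (hpos x).ne'
    rw [abs_mul, abs_of_nonneg (sq_nonneg (φ x))]
    calc _ ≤ (1 + s ^ 2 * (x - x₀) ^ 2) * φ x ^ 2 := by gcongr
      _ = ((1 + s ^ 2 * (x - x₀) ^ 2) * φ x) * φ x := by ring
      _ = φ x := by rw [h2, one_mul]
  set u : ℝ → ℂ := fun x => g x * R x * (ψ x : ℂ) with hu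
  have hus : ContDiff ℝ (⊤ : ℕ∞) u := (hg.mul hRs).mul hψc
  have hud : ∀ x, deriv u x = (deriv g x * R x + g x * deriv R x) * (ψ x : ℂ) +
      g x * R x * (((1 - s ^ 2 * (x - x₀) ^ 2) * φ x ^ 2 : ℝ) : ℂ) := by
    intro x
    have h1 := (hg.differentiable (by simp) x).hasDerivAt
    have h2 := (hRs.differentiable (by simp) x).hasDerivAt
    exact ((h1.mul h2).mul (hψd x).ofReal_comp).deriv
  have hib := ibp (a := a) (b := b) hf hus (by simp [hu, hga]) (by simp [hu, hgb]) (s ^ 2)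
  have hfc := hf.continuous
  have hec := e_contDiff.continuous
  have hgc := hg.continuous
  have hu'c : Continuous (deriv u) := hus.continuous_deriv (by simp)
  have h2pi : (2 * Real.pi * Complex.I : ℂ) ≠ 0 := by simp [hpi.ne']
  have key : ∫ x in a..b, e (s ^ 2 * f x) * g x =
      ∫ x in a..b, (e (s ^ 2 * f x) * g x * (φ x : ℂ) -
        (2 * Real.pi * Complex.I)⁻¹ * (deriv u x * e (s ^ 2 * f x))) := by
    rw [intervalIntegral.integral_sub (by apply Continuous.intervalIntegrable; fun_prop)
      (by apply Continuous.intervalIntegrable; fun_prop), intervalIntegral.integral_const_mul,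
      ← neg_eq_iff_eq_neg.2 hib, mul_neg, sub_neg_eq_add,
      ← intervalIntegral.integral_const_mul, ← intervalIntegral.integral_add
      (by apply Continuous.intervalIntegrable; fun_prop)]
    · refine intervalIntegral.integral_congr fun x hx => ?_
      rw [uIcc_of_le hab] at hx
      have hRx := hR x hx
      have h2 : (1 + s ^ 2 * (x - x₀) ^ 2) * φ x = 1 := mul_inv_cancel₀ (hpos x).ne'
      have h2' : (1 + (s : ℂ) ^ 2 * ((x - x₀ : ℝ) : ℂ) ^ 2) * (φ x : ℂ) = 1 := by exact_mod_cast h2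
      have h3 : (2 * Real.pi * Complex.I)⁻¹ * (2 * Real.pi * Complex.I : ℂ) = 1 := inv_mul_cancel₀ h2pi
      simp only [hu, hψ]
      rw [Complex.ofReal_mul]
      generalize (2 * Real.pi * Complex.I : ℂ) = c at h3 ⊢
      rw [Complex.ofReal_pow]
      generalize (((x - x₀ : ℝ) : ℂ)) = y at *
      linear_combination (-(e (s^2 * f x) * g x)) * h2' - s^2 * e (s^2 * f x) * g x * y * φ x * (c⁻¹ * c) * hRx
        - s^2 * e (s^2 * f x) * g x * y * φ x * y * h3
    · have hf' : Continuous (deriv f) := hf.continuous_deriv (by simp)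
      have := hus.continuous
      apply Continuous.intervalIntegrable; fun_prop
  rw [key]
  have hbd : ∀ x ∈ Icc a b, ‖e (s ^ 2 * f x) * g x * (φ x : ℂ) -
        (2 * Real.pi * Complex.I)⁻¹ * (deriv u x * e (s ^ 2 * f x))‖ ≤
        (|B0| + |B0| * R0) * M * φ x + (|B1| * R0 + |B0| * R1) * M / s := by
    intro x hx
    have hg0 : ‖g x‖ ≤ |B0| * M := (hB0 x hx).trans (by gcongr; exact le_abs_self _)
    have hg1 : ‖deriv g x‖ ≤ |B1| * M := (hB1 x hx).trans (by gcongr; exact le_abs_self _)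
    have hinv : ‖(2 * Real.pi * Complex.I : ℂ)⁻¹‖ ≤ 1 := by
      rw [norm_inv]
      apply inv_le_one_of_one_le₀
      simp [abs_of_pos hpi]
      nlinarith [Real.pi_gt_three]
    have hd : ‖deriv u x‖ ≤ (|B1| * M * R0 + |B0| * M * R1) * (1 / s) + |B0| * M * R0 * φ x := by
      rw [hud]
      refine (norm_add_le _ _).trans (add_le_add ?_ ?_)
      · rw [norm_mul, Complex.norm_real, Real.norm_eq_abs]
        refine mul_le_mul ((norm_add_le _ _).trans (add_le_add ?_ ?_)) (hψb x) (abs_nonneg _)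
          (by positivity)
        · rw [norm_mul]; gcongr; exact hRb x hx
        · rw [norm_mul]; gcongr; exact hRb' x hx
      · rw [norm_mul, norm_mul, Complex.norm_real, Real.norm_eq_abs]
        refine mul_le_mul ?_ (hψdb x) (abs_nonneg _) (by positivity)
        gcongr; exact hRb x hx
    calc _ ≤ ‖e (s ^ 2 * f x) * g x * (φ x : ℂ)‖ +
          ‖(2 * Real.pi * Complex.I)⁻¹ * (deriv u x * e (s ^ 2 * f x))‖ := norm_sub_le _ _
      _ ≤ |B0| * M * φ x +
        1 * ((|B1| * M * R0 + |B0| * M * R1) * (1 / s) + |B0| * M * R0 * φ x) := by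
        rw [norm_mul, norm_mul, e_norm, norm_mul, norm_mul, e_norm, Complex.norm_real,
          Real.norm_eq_abs, abs_of_pos (hφpos x), one_mul, mul_one]
        have := (hφpos x).le
        gcongr
      _ = _ := by ring
  have hI1 : IntervalIntegrable (fun x => (|B0| + |B0| * R0) * M * φ x) volume a b := by
    apply Continuous.intervalIntegrable; fun_prop
  have h1 := intervalIntegral.norm_integral_le_of_norm_le hab
    (Eventually.of_forall fun x hx => hbd x (Ioc_subset_Icc_self hx))
    (hI1.add (intervalIntegrable_const (c := (|B1| * R0 + |B0| * R1) * M / s)))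
  refine h1.trans ?_
  rw [intervalIntegral.integral_add hI1 intervalIntegrable_const, intervalIntegral.integral_const_mul,
    intervalIntegral.integral_const]
  have := phi_int a b x₀ s hs
  calc _ ≤ (|B0| + |B0| * R0) * M * (Real.pi / s) + (b - a) • ((|B1| * R0 + |B0| * R1) * M / s) := by
        gcongr
    _ = _ := by rw [smul_eq_mul]; ring

lemma zero_of_off {a b : ℝ} {g : ℝ → ℂ} (hg : Continuous g) (h : ∀ x, x ∉ Icc a b → g x = 0) :
    g a = 0 ∧ g b = 0 := by
  constructor
  · have h1 : Tendsto g (𝓝[<] a) (𝓝 (g a)) := (hg.tendsto a).mono_left nhdsWithin_le_nhds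
    refine tendsto_nhds_unique h1 (tendsto_const_nhds.congr' ?_)
    filter_upwards [self_mem_nhdsWithin] with x hx
    exact (h x fun hh => not_lt.2 hh.1 hx).symm
  · have h1 : Tendsto g (𝓝[>] b) (𝓝 (g b)) := (hg.tendsto b).mono_left nhdsWithin_le_nhds
    refine tendsto_nhds_unique h1 (tendsto_const_nhds.congr' ?_)
    filter_upwards [self_mem_nhdsWithin] with x hx
    exact (h x fun hh => not_lt.2 hh.2 hx).symm

lemma one_dim {a b : ℝ} (hab : a ≤ b) {f : ℝ → ℝ} (hf : ContDiff ℝ (⊤ : ℕ∞) f)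
    (x₀ : ℝ) {R : ℝ → ℂ} (hRs : ContDiff ℝ (⊤ : ℕ∞) R)
    (hR : ∀ x ∈ Icc a b, ((deriv f x : ℝ) : ℂ) * R x = ((x - x₀ : ℝ) : ℂ))
    {H : ℝ → ℂ} (hHs : ContDiff ℝ (⊤ : ℕ∞) H)
    (hH : ∀ x ∈ Icc a b, ((deriv f x : ℝ) : ℂ) * H x = (f x : ℂ)) (k : ℕ) :
    ∀ B : ℕ → ℝ, ∃ C : ℝ, 0 ≤ C ∧ ∀ (M : ℝ) (g : ℝ → ℂ), ContDiff ℝ (⊤ : ℕ∞) g →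
      (∀ x, x ∉ Icc a b → g x = 0) →
      (∀ i, ∀ x ∈ Icc a b, ‖iteratedDeriv i g x‖ ≤ B i * M) →
      0 ≤ M → ∀ s : ℝ, 1 ≤ s →
      ‖∫ x in a..b, (f x : ℂ) ^ k * e (s ^ 2 * f x) * g x‖ ≤ C * M / s ^ (2 * k + 1) := by
  induction k with
  | zero =>
    intro B
    obtain ⟨C, hC0, hC⟩ := base hab hf x₀ hRs hR (B 0) (B 1)
    refine ⟨C, hC0, fun M g hg hoff hB hM s hs => ?_⟩
    obtain ⟨ga, gb⟩ := zero_of_off hg.continuous hoff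
    simpa using hC M g hg ga gb (fun x hx => by simpa using hB 0 x hx)
      (fun x hx => by simpa [iteratedDeriv_one] using hB 1 x hx) hM s hs
  | succ k ih =>
    intro B
    have hHb : ∀ m, ∃ C : ℝ, 0 ≤ C ∧ ∀ x ∈ Icc a b, ‖iteratedDeriv m H x‖ ≤ C := fun m =>
      bdd_Icc (hHs.continuous_iteratedDeriv m (by exact_mod_cast le_top)) a b
    choose HB hHB0 hHB using hHb
    obtain ⟨C, hC0, hC⟩ := ih (fun i => k * B i +
      ∑ m ∈ Finset.range (i + 1 + 1), ((i + 1).choose m : ℝ) * HB m * B (i + 1 - m))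
    refine ⟨C, hC0, fun M g hg hoff hB hM s hs => ?_⟩
    have hs0 : 0 < s := by linarith
    obtain ⟨ga, gb⟩ := zero_of_off hg.continuous hoff
    have hHg : ContDiff ℝ (⊤ : ℕ∞) (fun x => H x * g x) := hHs.mul hg
    have hHg' : ContDiff ℝ (⊤ : ℕ∞) (deriv (fun x => H x * g x)) :=
      (contDiff_infty_iff_deriv.1 hHg).2
    have hkg : ContDiff ℝ (⊤ : ℕ∞) (fun x => (k : ℂ) * g x) := contDiff_const.mul hg
    have hg2 : ContDiff ℝ (⊤ : ℕ∞) (fun x => (k : ℂ) * g x + deriv (fun x => H x * g x) x) :=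
      hkg.add hHg'
    have hle : ∀ i : ℕ, ((i : ℕ∞) : WithTop ℕ∞) ≤ ((⊤ : ℕ∞) : WithTop ℕ∞) := fun i => by
      exact_mod_cast le_top
    have h := hC M _ hg2 ?_ ?_ hM s hs
    · have hfC : ContDiff ℝ (⊤ : ℕ∞) (fun x => (f x : ℂ)) := Complex.ofRealCLM.contDiff.comp hf
      have hus : ContDiff ℝ (⊤ : ℕ∞) (fun x => (f x : ℂ) ^ k * (H x * g x)) := (hfC.pow k).mul hHg
      have hib := ibp (a := a) (b := b) hf hus (by simp [ga]) (by simp [gb]) (s ^ 2)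
      have hL : ∫ x in a..b, (f x : ℂ) ^ k * (H x * g x) *
          (2 * Real.pi * Complex.I * ((s ^ 2 : ℝ) : ℂ) * (deriv f x : ℝ) * e (s ^ 2 * f x)) =
          (2 * Real.pi * Complex.I * ((s ^ 2 : ℝ) : ℂ)) *
          ∫ x in a..b, (f x : ℂ) ^ (k + 1) * e (s ^ 2 * f x) * g x := by
        rw [← intervalIntegral.integral_const_mul]
        refine intervalIntegral.integral_congr fun x hx => ?_
        rw [uIcc_of_le hab] at hx
        rw [pow_succ, ← hH x hx]; ring
      have hRr : ∫ x in a..b, deriv (fun x => (f x : ℂ) ^ k * (H x * g x)) x * e (s ^ 2 * f x) =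
          ∫ x in a..b, (f x : ℂ) ^ k * e (s ^ 2 * f x) *
            ((k : ℂ) * g x + deriv (fun x => H x * g x) x) := by
        refine intervalIntegral.integral_congr fun x hx => ?_
        rw [uIcc_of_le hab] at hx
        have h1 : HasDerivAt (fun x => (f x : ℂ)) ((deriv f x : ℝ) : ℂ) x :=
          ((hf.differentiable (by simp) x).hasDerivAt).ofReal_comp
        have h2 := (h1.fun_pow k).fun_mul ((hHg.differentiable (by simp) x).hasDerivAt)
        rw [h2.deriv]
        have h3 : (k : ℂ) * (f x : ℂ) ^ (k - 1) * ((deriv f x : ℝ) : ℂ) * (H x * g x) =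
            (k : ℂ) * (f x : ℂ) ^ k * g x := by
          cases k with
          | zero => simp
          | succ k =>
            rw [Nat.add_sub_cancel, pow_succ (f x : ℂ) k]
            linear_combination ((k + 1 : ℕ) : ℂ) * (f x : ℂ) ^ k * g x * hH x hx
        rw [h3]; ring
      rw [hL, hRr] at hib
      have hn := congrArg norm hib
      rw [norm_neg, norm_mul] at hn
      have hc : s ^ 2 ≤ ‖(2 * Real.pi * Complex.I * ((s ^ 2 : ℝ) : ℂ) : ℂ)‖ := by
        have hpi := Real.pi_gt_three
        rw [norm_mul, Complex.norm_real, Real.norm_eq_abs, abs_of_nonneg (sq_nonneg s)]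
        have : 1 ≤ ‖(2 * Real.pi * Complex.I : ℂ)‖ := by
          simp [abs_of_pos Real.pi_pos]
          nlinarith
        nlinarith [sq_nonneg s]
      have h5 : s ^ 2 * ‖∫ x in a..b, (f x : ℂ) ^ (k + 1) * e (s ^ 2 * f x) * g x‖ ≤
          C * M / s ^ (2 * k + 1) := by
        refine le_trans ?_ h
        rw [← hn]
        gcongr
      rw [le_div_iff₀ (by positivity)] at h5 ⊢
      calc _ = s ^ 2 * ‖∫ x in a..b, (f x : ℂ) ^ (k + 1) * e (s ^ 2 * f x) * g x‖ *
            s ^ (2 * k + 1) := by ring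
        _ ≤ _ := h5
    · intro x hx
      have hev : (fun x => H x * g x) =ᶠ[𝓝 x] fun _ => 0 := by
        filter_upwards [isClosed_Icc.isOpen_compl.mem_nhds hx] with y hy
        rw [hoff y hy, mul_zero]
      rw [hev.deriv_eq, hoff x hx]; simp
    · intro i x hx
      rw [iteratedDeriv_fun_add (hkg.contDiffAt.of_le (hle i)) (hHg'.contDiffAt.of_le (hle i)),
        ← iteratedDeriv_succ', iteratedDeriv_const_mul_field,
        iteratedDeriv_fun_mul (hHs.contDiffAt.of_le (hle _)) (hg.contDiffAt.of_le (hle _)),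
        add_mul, Finset.sum_mul]
      refine (norm_add_le _ _).trans (add_le_add ?_ ?_)
      · rw [norm_mul, Complex.norm_natCast, mul_assoc]
        gcongr; exact hB i x hx
      · refine (norm_sum_le _ _).trans (Finset.sum_le_sum fun m _ => ?_)
        rw [norm_mul, norm_mul, Complex.norm_natCast, mul_assoc _ (B _) M]
        have := hHB0 m
        gcongr
        · exact hHB m x hx
        · exact hB _ x hx

lemma exists_cutoff {a b : ℝ} (hab : a < b) {U : Set ℝ} (hU : IsOpen U) (hI : Icc a b ⊆ U) :
    ∃ χ : ℝ → ℝ, ContDiff ℝ (⊤ : ℕ∞) χ ∧ (∃ V, IsOpen V ∧ Icc a b ⊆ V ∧ ∀ x ∈ V, χ x = 1) ∧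
      tsupport χ ⊆ U := by
  obtain ⟨δ, hδ, hsub⟩ := isCompact_Icc.exists_cthickening_subset_open hU hI
  let c : ContDiffBump ((a + b) / 2) :=
    ⟨(b - a) / 2 + δ / 2, (b - a) / 2 + δ, by linarith, by linarith⟩
  refine ⟨c, c.contDiff, ⟨Metric.ball ((a + b) / 2) ((b - a) / 2 + δ / 2), Metric.isOpen_ball, ?_, ?_⟩, ?_⟩
  · intro x hx
    rw [Metric.mem_ball, Real.dist_eq, abs_lt]
    constructor <;> linarith [hx.1, hx.2]
  · intro x hx
    exact c.one_of_mem_closedBall (Metric.ball_subset_closedBall hx)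
  · rw [c.tsupport_eq]
    refine Subset.trans ?_ hsub
    intro x hx
    change x ∈ Metric.closedBall ((a + b) / 2) ((b - a) / 2 + δ) at hx
    rw [Metric.mem_closedBall, Real.dist_eq, abs_le] at hx
    rcases lt_or_ge x a with h | h
    · refine Metric.mem_cthickening_of_dist_le x a δ _ ⟨le_rfl, hab.le⟩ ?_
      rw [Real.dist_eq, abs_le]; constructor <;> linarith
    · rcases lt_or_ge b x with h' | h'
      · refine Metric.mem_cthickening_of_dist_le x b δ _ ⟨hab.le, le_rfl⟩ ?_
        rw [Real.dist_eq, abs_le]; constructor <;> linarith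
      · exact Metric.self_subset_cthickening _ ⟨h, h'⟩

lemma contDiff_of_cutoff {F : Type*} [NormedAddCommGroup F] [NormedSpace ℝ F]
    {χ : ℝ → ℝ} (hχ : ContDiff ℝ (⊤ : ℕ∞) χ) {U : Set ℝ} (hU : IsOpen U)
    (hs : tsupport χ ⊆ U) {G : ℝ → F} (hG : ContDiffOn ℝ (⊤ : ℕ∞) G U) :
    ContDiff ℝ (⊤ : ℕ∞) (fun x => χ x • G x) := by
  rw [contDiff_iff_contDiffAt]
  intro x
  by_cases hx : x ∈ tsupport χ
  · exact hχ.contDiffAt.smul (hG.contDiffAt (hU.mem_nhds (hs hx)))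
  · have : (fun x => χ x • G x) =ᶠ[𝓝 x] fun _ => 0 := by
      filter_upwards [(isClosed_tsupport χ).isOpen_compl.mem_nhds hx] with y hy
      rw [image_eq_zero_of_notMem_tsupport hy, zero_smul]
    exact contDiffAt_const.congr_of_eventuallyEq this

lemma exists_data {a b : ℝ} (hab : a < b) {f : ℝ → ℝ} {Ω : Set ℝ} (hΩ : IsOpen Ω)
    (hsub : Set.Icc a b ⊆ Ω) (hf : ContDiffOn ℝ (⊤ : ℕ∞) f Ω)
    {x₀ : ℝ} (hx₀ : x₀ ∈ Set.Ioo a b) (hfx₀ : f x₀ = 0) (hf'x₀ : deriv f x₀ = 0)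
    (hf''x₀ : deriv (deriv f) x₀ ≠ 0)
    (hf' : ∀ x ∈ Set.Icc a b, x ≠ x₀ → deriv f x ≠ 0) :
    ∃ (h : ℝ → ℝ) (R H : ℝ → ℂ), ContDiff ℝ (⊤ : ℕ∞) h ∧ ContDiff ℝ (⊤ : ℕ∞) R ∧
      ContDiff ℝ (⊤ : ℕ∞) H ∧ (∀ x ∈ Icc a b, h x = f x) ∧
      (∀ x ∈ Icc a b, ((deriv h x : ℝ) : ℂ) * R x = ((x - x₀ : ℝ) : ℂ)) ∧
      (∀ x ∈ Icc a b, ((deriv h x : ℝ) : ℂ) * H x = (h x : ℂ)) := by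
  obtain ⟨χ, hχ, ⟨V, hV, hIV, hχ1⟩, hχs⟩ := exists_cutoff hab hΩ hsub
  set h : ℝ → ℝ := fun x => χ x • f x with hh
  have hhs : ContDiff ℝ (⊤ : ℕ∞) h := contDiff_of_cutoff hχ hΩ hχs hf
  have hhV : EqOn h f V := fun x hx => by simp [hh, hχ1 x hx]
  have hdV : EqOn (deriv h) (deriv f) V := fun x hx => by
    have : h =ᶠ[𝓝 x] f := by filter_upwards [hV.mem_nhds hx] with y hy using hhV hy
    exact this.deriv_eq
  have hx₀I : x₀ ∈ Icc a b := Ioo_subset_Icc_self hx₀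
  have hddV : deriv (deriv h) x₀ = deriv (deriv f) x₀ := by
    have : deriv h =ᶠ[𝓝 x₀] deriv f := by
      filter_upwards [hV.mem_nhds (hIV hx₀I)] with y hy using hdV hy
    exact this.deriv_eq
  have hh's : ContDiff ℝ (⊤ : ℕ∞) (deriv h) := (contDiff_infty_iff_deriv.1 hhs).2
  have hhC : ContDiff ℝ (⊤ : ℕ∞) (fun x => (h x : ℂ)) := Complex.ofRealCLM.contDiff.comp hhs
  have hhC' : ContDiff ℝ (⊤ : ℕ∞) (fun x => ((deriv h x : ℝ) : ℂ)) :=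
    Complex.ofRealCLM.contDiff.comp hh's
  have hh0 : h x₀ = 0 := by rw [hhV (hIV hx₀I), hfx₀]
  have hh'0 : deriv h x₀ = 0 := by rw [hdV (hIV hx₀I), hf'x₀]
  obtain ⟨p, hp, hpe⟩ := hadamard hhC' x₀ (by simp [hh'0])
  obtain ⟨f1, hf1, hf1e⟩ := hadamard hhC x₀ (by simp [hh0])
  have hval : ∀ {F G : ℝ → ℂ}, ContDiff ℝ (⊤ : ℕ∞) G → (∀ x, F x = ((x - x₀ : ℝ) : ℂ) * G x) →
      HasDerivAt F (G x₀) x₀ := by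
    intro F G hG hFG
    have h1 : HasDerivAt (fun x : ℝ => ((x - x₀ : ℝ) : ℂ)) ((1 : ℝ) : ℂ) x₀ :=
      ((hasDerivAt_id x₀).sub_const x₀).ofReal_comp
    have h2 := h1.fun_mul (hG.differentiable (by simp) x₀).hasDerivAt
    rw [show F = fun x => ((x - x₀ : ℝ) : ℂ) * G x from funext hFG]
    refine h2.congr_deriv ?_
    simp
  have hf10 : f1 x₀ = 0 := by
    have h1 := hval hf1 hf1e
    have h2 : HasDerivAt (fun x => (h x : ℂ)) ((deriv h x₀ : ℝ) : ℂ) x₀ :=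
      ((hhs.differentiable (by simp) x₀).hasDerivAt).ofReal_comp
    rw [h1.unique h2, hh'0]; simp
  obtain ⟨q, hq, hqe⟩ := hadamard hf1 x₀ hf10
  have hp0 : ∀ x ∈ Icc a b, p x ≠ 0 := by
    intro x hx
    by_cases hxx : x = x₀
    · subst hxx
      have h1 := hval hp hpe
      have h2 : HasDerivAt (fun y => ((deriv h y : ℝ) : ℂ)) ((deriv (deriv h) x : ℝ) : ℂ) x :=
        ((hh's.differentiable (by simp) x).hasDerivAt).ofReal_comp
      rw [h1.unique h2, hddV]
      exact_mod_cast hf''x₀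
    · intro h0
      have := hpe x
      rw [h0, mul_zero, hdV (hIV hx)] at this
      exact hf' x hx hxx (by exact_mod_cast this)
  have hU : IsOpen {x | p x ≠ 0} := isOpen_ne_fun hp.continuous continuous_const
  obtain ⟨χ2, hχ2, ⟨V2, hV2, hIV2, hχ21⟩, hχ2s⟩ := exists_cutoff hab hU hp0
  have hr : ContDiff ℝ (⊤ : ℕ∞) (fun x => χ2 x • (p x)⁻¹) :=
    contDiff_of_cutoff hχ2 hU hχ2s (hp.contDiffOn.inv fun x hx => hx)
  have hrp : ∀ x ∈ Icc a b, p x * (χ2 x • (p x)⁻¹) = 1 := by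
    intro x hx
    rw [hχ21 x (hIV2 hx), one_smul, mul_inv_cancel₀ (hp0 x hx)]
  have hy : ContDiff ℝ (⊤ : ℕ∞) (fun x : ℝ => ((x - x₀ : ℝ) : ℂ)) :=
    Complex.ofRealCLM.contDiff.comp (contDiff_id.sub contDiff_const)
  refine ⟨h, _, fun x => ((x - x₀ : ℝ) : ℂ) * q x * (χ2 x • (p x)⁻¹), hhs, hr,
    (hy.mul hq).mul hr, fun x hx => hhV (hIV hx), ?_, ?_⟩
  · intro x hx
    rw [hpe, mul_assoc, hrp x hx, mul_one]
  · intro x hx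
    rw [hpe, hf1e, hqe]
    linear_combination ((x - x₀ : ℝ) : ℂ) ^ 2 * q x * hrp x hx

lemma e_iter (c : ℝ) (n : ℕ) (l : ℝ) :
    iteratedDeriv n (fun l => e (l * c)) l = (2 * Real.pi * Complex.I * c) ^ n * e (l * c) := by
  induction n generalizing l with
  | zero => simp
  | succ n ih =>
    rw [iteratedDeriv_succ, funext ih]
    have h0 : HasDerivAt (fun l : ℝ => l * c) c l := by
      simpa using (hasDerivAt_id l).mul_const c
    have h := ((e_hasDerivAt (l * c)).scomp l h0).const_mul ((2 * Real.pi * Complex.I * c) ^ n)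
    refine Eq.trans h.deriv ?_
    rw [Complex.real_smul]; ring

end SP

open SP in
theorem stmt3 (a b : ℝ) (hab : a < b) (f : ℝ → ℝ) (Ω : Set ℝ) (hΩ : IsOpen Ω)
    (hsub : Set.Icc a b ⊆ Ω) (hf : ContDiffOn ℝ (⊤ : ℕ∞) f Ω)
    (x₀ : ℝ) (hx₀ : x₀ ∈ Set.Ioo a b) (hfx₀ : f x₀ = 0) (hf'x₀ : deriv f x₀ = 0)
    (hf''x₀ : deriv (deriv f) x₀ ≠ 0)
    (hf' : ∀ x ∈ Set.Icc a b, x ≠ x₀ → deriv f x ≠ 0)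
    (Cw : ℕ → ℕ → ℝ) (j : ℕ) :
    ∃ C : ℝ, 0 < C ∧
      ∀ (Z : ℝ) (w : ℝ → ℝ → ℂ) (Ω' : Set (ℝ × ℝ)),
        0 < Z → IsOpen Ω' → (Set.univ ×ˢ Set.Ici (1 : ℝ)) ⊆ Ω' →
        ContDiffOn ℝ (⊤ : ℕ∞) (Function.uncurry w) Ω' →
        (∀ lam : ℝ, 1 ≤ lam → Function.support (fun x => w x lam) ⊆ Set.Icc a b) →
        (∀ i jj : ℕ, ∀ x : ℝ, ∀ lam : ℝ, 1 ≤ lam →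
          lam ^ jj * ‖iteratedDeriv jj (fun l => iteratedDeriv i (fun t => w t l) x) lam‖
            ≤ Cw i jj * Z) →
        ∀ lam : ℝ, 1 ≤ lam →
          ‖iteratedDeriv j (fun l => ∫ x in a..b, e (l * f x) * w x l) lam‖
            ≤ C * Z / lam ^ ((1 : ℝ) / 2 + j) := by
  obtain ⟨h, R, H, hhs, hRs, hHs, hhf, hR, hH⟩ :=
    exists_data hab hΩ hsub hf hx₀ hfx₀ hf'x₀ hf''x₀ hf'
  choose K hK0 hK using fun i => one_dim hab.le hhs x₀ hRs hR hHs hH i (fun n => Cw n (j - i))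
  refine ⟨∑ i ∈ Finset.range (j + 1), (j.choose i : ℝ) * (2 * Real.pi) ^ i * K i + 1, ?_, ?_⟩
  · have hpi := Real.pi_pos
    have : 0 ≤ ∑ i ∈ Finset.range (j + 1), (j.choose i : ℝ) * (2 * Real.pi) ^ i * K i :=
      Finset.sum_nonneg fun i _ => by have := hK0 i; positivity
    linarith
  intro Z w U hZ hU hUs hw hsupp hbd lam hlam
  have hlam0 : 0 < lam := by linarith
  set W : ℝ × ℝ → ℂ := Function.uncurry w with hW
  have hmem : ∀ x l : ℝ, 1 ≤ l → (x, l) ∈ U := fun x l hl => hUs ⟨mem_univ _, hl⟩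
  have hle : ∀ i : ℕ, ((i : ℕ∞) : WithTop ℕ∞) ≤ ((⊤ : ℕ∞) : WithTop ℕ∞) := fun i => by
    exact_mod_cast le_top
  -- the slices
  set g : ℕ → ℝ → ℂ := fun m x => (D (0, 1))^[m] W (x, lam) with hgdef
  have hgs : ∀ m, ContDiff ℝ (⊤ : ℕ∞) (g m) := by
    intro m
    rw [← contDiffOn_univ]
    exact (D_iter_contDiffOn hU hw (0, 1) m).comp (g := (D (0, 1))^[m] W)
      (f := fun x : ℝ => (x, lam)) (by fun_prop) fun x _ => hmem x lam hlam
  have hgoff : ∀ m x, x ∉ Icc a b → g m x = 0 := by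
    intro m x hx
    have hc : ContinuousAt (fun l => (D (0, 1))^[m] W (x, l)) lam := by
      have h1 : ContinuousAt ((D (0, 1))^[m] W) (x, lam) :=
        (D_iter_contDiffOn hU hw (0, 1) m).continuousOn.continuousAt
          (hU.mem_nhds (hmem x lam hlam))
      exact ContinuousAt.comp (f := fun l : ℝ => (x, l)) h1 (by fun_prop)
    have h1 : Tendsto (fun l => (D (0, 1))^[m] W (x, l)) (𝓝[>] lam) (𝓝 (g m x)) :=
      hc.tendsto.mono_left nhdsWithin_le_nhds
    refine tendsto_nhds_unique h1 (tendsto_const_nhds.congr' ?_)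
    filter_upwards [self_mem_nhdsWithin] with l hl
    have hl1 : 1 < l := lt_of_le_of_lt hlam hl
    rw [← D_iteratedDeriv hU hw (hγ2 x) m l (hmem x l hl1.le)]
    have hev : (fun s => W (x, s)) =ᶠ[𝓝 l] fun _ => 0 := by
      filter_upwards [Ioi_mem_nhds hl1] with s hs
      by_contra hne
      exact hx (hsupp s (le_of_lt hs) hne)
    rw [hev.iteratedDeriv_eq]
    simp
  have hgb : ∀ m i, ∀ x, ‖iteratedDeriv i (g m) x‖ ≤ Cw i m * (Z / lam ^ m) := by
    intro m i x
    have hx := hmem x lam hlam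
    have h1 : iteratedDeriv i (g m) x = (D (1, 0))^[i] ((D (0, 1))^[m] W) (x, lam) :=
      D_iteratedDeriv hU (D_iter_contDiffOn hU hw (0, 1) m) (hγ1 lam) i x hx
    have h2 : iteratedDeriv m (fun l => iteratedDeriv i (fun t => w t l) x) lam =
        (D (0, 1))^[m] ((D (1, 0))^[i] W) (x, lam) := by
      rw [← D_iteratedDeriv hU (D_iter_contDiffOn hU hw (1, 0) i) (hγ2 x) m lam hx]
      refine Filter.EventuallyEq.iteratedDeriv_eq _ ?_
      have hcont : Continuous fun l : ℝ => (x, l) := by fun_prop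
      filter_upwards [(hU.preimage hcont).mem_nhds hx] with l hl
      exact D_iteratedDeriv hU hw (hγ1 l) i x hl
    rw [h1, D_iter_comm hU hw _ _ i m hx, ← h2, ← mul_div_assoc, le_div_iff₀ (by positivity),
      mul_comm]
    exact hbd i m x lam hlam
  -- differentiate under the integral
  have hGs : ContDiffOn ℝ (⊤ : ℕ∞) (fun p : ℝ × ℝ => e (p.2 * h p.1) * W p) U := by
    have h1 : ContDiff ℝ (⊤ : ℕ∞) (fun p : ℝ × ℝ => e (p.2 * h p.1)) :=
      e_contDiff.comp (contDiff_snd.mul (hhs.comp contDiff_fst))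
    exact h1.contDiffOn.mul hw
  have hF : (fun l => ∫ x in a..b, e (l * f x) * w x l) =
      fun l => ∫ x in a..b, (fun p : ℝ × ℝ => e (p.2 * h p.1) * W p) (x, l) := by
    funext l
    refine intervalIntegral.integral_congr fun x hx => ?_
    rw [uIcc_of_le hab.le] at hx
    simp only [hhf x hx, hW, Function.uncurry]
  have hhC : Continuous (fun x => (h x : ℂ)) := Complex.continuous_ofReal.comp hhs.continuous
  have hec := e_contDiff.continuous
  have hhc := hhs.continuous
  have hmain : iteratedDeriv j (fun l => ∫ x in a..b, e (l * f x) * w x l) lam =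
      ∑ i ∈ Finset.range (j + 1), ((j.choose i : ℂ) * (2 * Real.pi * Complex.I) ^ i) *
        ∫ x in a..b, (h x : ℂ) ^ i * e (lam * h x) * g (j - i) x := by
    rw [hF, param_iter hU hGs hab.le j lam (by
      rintro ⟨x, l⟩ ⟨_, hl⟩
      have hl' : l = lam := hl
      exact hmem x l (by linarith))]
    simp_rw [← intervalIntegral.integral_const_mul]
    rw [← intervalIntegral.integral_finsetSum]
    · refine intervalIntegral.integral_congr fun x hx => ?_
      have hxl := hmem x lam hlam
      rw [← D_iteratedDeriv hU hGs (hγ2 x) j lam hxl]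
      have c1 : ContDiffAt ℝ j (fun l => e (l * h x)) lam :=
        ((e_contDiff.comp (contDiff_id.mul contDiff_const)).contDiffAt).of_le (hle j)
      have c2 : ContDiffAt ℝ j (fun l => W (x, l)) lam := by
        have h1 : ContDiffAt ℝ (⊤ : ℕ∞) W (x, lam) := hw.contDiffAt (hU.mem_nhds hxl)
        exact (ContDiffAt.comp (f := fun l : ℝ => (x, l)) lam h1 (by fun_prop)).of_le (hle j)
      rw [iteratedDeriv_fun_mul c1 c2]
      refine Finset.sum_congr rfl fun i _ => ?_
      rw [e_iter, D_iteratedDeriv hU hw (hγ2 x) (j - i) lam hxl]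
      simp only [hgdef]
      ring
    · intro i _
      have := (hgs (j - i)).continuous
      apply Continuous.intervalIntegrable; fun_prop
  set s := Real.sqrt lam with hs
  have hs2 : s ^ 2 = lam := Real.sq_sqrt hlam0.le
  have hs1 : 1 ≤ s := Real.one_le_sqrt.2 hlam
  have hs0 : 0 < s := by linarith
  have hpow : lam ^ ((1 : ℝ) / 2 + j) = s ^ (2 * j + 1) := by
    rw [Real.rpow_add hlam0, Real.rpow_natCast, ← Real.sqrt_eq_rpow, ← hs, ← hs2]
    ring
  rw [hmain, hpow]
  have hterm : ∀ i ∈ Finset.range (j + 1), ‖((j.choose i : ℂ) * (2 * Real.pi * Complex.I) ^ i) *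
        ∫ x in a..b, (h x : ℂ) ^ i * e (lam * h x) * g (j - i) x‖ ≤
        (j.choose i : ℝ) * (2 * Real.pi) ^ i * K i * (Z / s ^ (2 * j + 1)) := by
    intro i hi
    have hij : i ≤ j := Nat.lt_succ_iff.1 (Finset.mem_range.1 hi)
    have h1 := hK i (Z / lam ^ (j - i)) (g (j - i)) (hgs _) (hgoff _)
      (fun n x _ => hgb (j - i) n x) (by positivity) s hs1
    rw [hs2] at h1
    have h2 : K i * (Z / lam ^ (j - i)) / s ^ (2 * i + 1) = K i * (Z / s ^ (2 * j + 1)) := by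
      rw [← hs2, ← pow_mul, mul_div_assoc, div_div, ← pow_add,
        show 2 * (j - i) + (2 * i + 1) = 2 * j + 1 by omega]
    rw [h2] at h1
    have h3 : ‖((j.choose i : ℂ) * (2 * Real.pi * Complex.I) ^ i)‖ =
        (j.choose i : ℝ) * (2 * Real.pi) ^ i := by
      rw [norm_mul, norm_pow, Complex.norm_natCast]
      simp [abs_of_pos Real.pi_pos]
    rw [norm_mul, h3, mul_assoc _ (K i)]
    have := Real.pi_pos
    gcongr
  refine (norm_sum_le _ _).trans ((Finset.sum_le_sum hterm).trans ?_)
  rw [← Finset.sum_mul, ← mul_div_assoc, add_mul]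
  gcongr
  linarith
end

section
/- Let ν, μ be complex numbers with −Re ν < Re μ < 1/2 and let a > 0. Then the improper integral lim_{δ→0⁺, R→∞} ∫_δ^R exp(iax) J_ν(ax) x^{μ−1} dx converges and equals exp(πi(ν+μ)/2) · Γ(ν+μ) · Γ(1/2 − μ) / (√π · (2a)^μ · Γ(ν − μ + 1)). -/
/-- The Bessel function of the first kind of complex order `ν`, for real
argument `x`, defined by its power series
`J_ν(x) = Σ_{n≥0} (−1)^n (x/2)^{ν+2n} / (n! Γ(ν+n+1))`. -/
noncomputable def besselJC (ν : ℂ) (x : ℝ) : ℂ :=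
  ∑' n : ℕ, ((-1 : ℂ) ^ n * ((x : ℂ) / 2) ^ (ν + 2 * n)) /
    ((n.factorial : ℂ) * Complex.Gamma (ν + n + 1))

open MeasureTheory Set Filter Topology

noncomputable def wt (β : ℂ) (s : ℝ) : ℂ := (s : ℂ) ^ (β - 1) * (1 - (s : ℂ)) ^ (β - 1)

lemma wt_int {β : ℂ} (hβ : 0 < β.re) : IntervalIntegrable (wt β) volume 0 1 :=
  Complex.betaIntegral_convergent hβ hβ

lemma wt_mul_int {β : ℂ} (hβ : 0 < β.re) {g : ℝ → ℂ} (hg : Continuous g) :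
    IntervalIntegrable (fun s => wt β s * g s) volume 0 1 :=
  (wt_int hβ).mul_continuousOn hg.continuousOn

lemma ibp {β : ℂ} (hβ : 0 < β.re) {g g' : ℝ → ℂ} (hg : ∀ s, HasDerivAt g (g' s) s)
    (hg' : Continuous g') :
    ∫ s in (0:ℝ)..1, wt β s * (β * (1 - 2 * (s:ℂ)) * g s + (s:ℂ) * (1 - (s:ℂ)) * g' s) = 0 := by
  have hgc : Continuous g := continuous_iff_continuousAt.2 fun s => (hg s).continuousAt
  have hb : β ≠ 0 := by rintro rfl; simp at hβ
  have hc := Complex.continuous_ofReal_cpow_const hβ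
  have hc2 : Continuous fun s : ℝ => (1 - (s:ℂ)) ^ β := by
    have := hc.comp (continuous_const.sub continuous_id : Continuous fun s : ℝ => 1 - s)
    simpa [Function.comp_def] using this
  rw [intervalIntegral.integral_eq_sub_of_hasDerivAt_of_le
    (f := fun s : ℝ => (s:ℂ) ^ β * (1 - (s:ℂ)) ^ β * g s) zero_le_one
    ((hc.mul hc2).mul hgc).continuousOn]
  · simp [Complex.zero_cpow hb]
  · intro s hs
    have hs0 : (s:ℂ) ≠ 0 := by exact_mod_cast hs.1.ne'
    have hs1 : (1:ℂ) - s ≠ 0 := by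
      have : (1 - s : ℝ) ≠ 0 := by linarith [hs.2]
      exact_mod_cast this
    have d1 : HasDerivAt (fun s : ℝ => (s:ℂ) ^ β) (β * (s:ℂ) ^ (β - 1)) s := by
      have := (hasDerivAt_id (s:ℂ)).cpow_const (c := β) (Or.inl hs.1)
      simpa using this.comp_ofReal
    have d2 : HasDerivAt (fun s : ℝ => (1 - (s:ℂ)) ^ β) (- (β * (1 - (s:ℂ)) ^ (β - 1))) s := by
      have := ((hasDerivAt_id (s:ℂ)).const_sub 1).cpow_const (c := β)
        (Or.inl (by simp; exact hs.2))
      simpa using this.comp_ofReal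
    refine ((d1.mul d2).mul (hg s)).congr_deriv ?_
    have e1 : (s:ℂ) ^ β = (s:ℂ) ^ (β - 1) * s := by
      rw [Complex.cpow_sub _ _ hs0]; simp [hs0]
    have e2 : (1 - (s:ℂ)) ^ β = (1 - (s:ℂ)) ^ (β - 1) * (1 - s) := by
      rw [Complex.cpow_sub _ _ hs1]; simp [hs1]
    simp only [e1, e2, wt, Pi.mul_apply]; ring
  · apply wt_mul_int hβ; fun_prop

noncomputable def NN (φ : ℝ → ℂ) (x : ℝ) : ℂ :=
  ∫ s in (0:ℝ)..1, φ s * Complex.exp (Complex.I * x * (2 * s - 1))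

lemma NN_deriv {φ : ℝ → ℂ} (h : IntervalIntegrable φ volume 0 1) (x : ℝ) :
    HasDerivAt (NN φ) (NN (fun s => φ s * (Complex.I * (2 * s - 1))) x) x := by
  unfold NN
  have key : ∀ φ : ℝ → ℂ, IntervalIntegrable φ volume 0 1 → ∀ x : ℝ, IntervalIntegrable (fun s : ℝ => φ s * Complex.exp (Complex.I * x * (2 * s - 1))) volume 0 1 := by
    intro φ h x
    exact h.mul_continuousOn (by fun_prop)
  have h2 : IntervalIntegrable (fun s : ℝ => φ s * (Complex.I * (2 * s - 1))) volume 0 1 :=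
    h.mul_continuousOn (by fun_prop)
  refine (intervalIntegral.hasDerivAt_integral_of_dominated_loc_of_deriv_le
    (F := fun (y : ℝ) (s : ℝ) => φ s * Complex.exp (Complex.I * y * (2 * s - 1)))
    (F' := fun (y : ℝ) (s : ℝ) => φ s * (Complex.I * (2 * s - 1)) * Complex.exp (Complex.I * y * (2 * s - 1)))
    (bound := fun s => ‖φ s * (Complex.I * (2 * s - 1))‖)
    (s := univ) (by simp) (Eventually.of_forall fun y => ?_) (key _ h x) ?_ ?_ h2.norm ?_).2
  · exact (intervalIntegrable_iff.1 (key _ h y)).aestronglyMeasurable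
  · exact (intervalIntegrable_iff.1 (key _ h2 x)).aestronglyMeasurable
  · refine Eventually.of_forall fun s _ y _ => ?_
    rw [norm_mul]
    have : ‖Complex.exp (Complex.I * y * (2 * s - 1))‖ = 1 := by
      rw [Complex.norm_exp]; simp
    rw [this, mul_one]
  · refine Eventually.of_forall fun s _ y _ => ?_
    have : HasDerivAt (fun y : ℂ => φ s * Complex.exp (Complex.I * y * (2 * s - 1)))
      (φ s * (Complex.exp (Complex.I * y * (2 * s - 1)) * (Complex.I * (2 * s - 1)))) (y:ℂ) := by
      have := (((hasDerivAt_id (y:ℂ)).const_mul Complex.I).mul_const (2 * (s:ℂ) - 1)).cexp.const_mul (φ s)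
      simpa using this
    refine this.comp_ofReal.congr_deriv ?_
    ring

lemma NN_ode {β : ℂ} (hβ : 0 < β.re) (x : ℝ) :
    (x:ℂ) * (NN (fun s => wt β s * (Complex.I * (2 * s - 1)) * (Complex.I * (2 * s - 1))) x + NN (wt β) x)
     + 2 * β * NN (fun s => wt β s * (Complex.I * (2 * s - 1))) x = 0 := by
  have := ibp hβ (g := fun s : ℝ => Complex.exp (Complex.I * x * (2 * s - 1)))
    (g' := fun s : ℝ => Complex.exp (Complex.I * x * (2 * s - 1)) * (Complex.I * x * 2)) (by
      intro s
      have := (((hasDerivAt_id (s:ℂ)).const_mul 2).sub_const 1).const_mul (Complex.I * x) |>.cexp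
      simpa using this.comp_ofReal) (by fun_prop)
  unfold NN
  have i1 := wt_mul_int hβ (g := fun s : ℝ => Complex.exp (Complex.I * x * (2 * s - 1))) (by fun_prop)
  have i2 := wt_mul_int hβ (g := fun s : ℝ => (Complex.I * (2 * s - 1)) * Complex.exp (Complex.I * x * (2 * s - 1))) (by fun_prop)
  have i3 := wt_mul_int hβ (g := fun s : ℝ => (Complex.I * (2 * s - 1)) *(Complex.I * (2 * s - 1)) * Complex.exp (Complex.I * x * (2 * s - 1))) (by fun_prop)
  simp only [mul_assoc] at i1 i2 i3 ⊢
  rw [← intervalIntegral.integral_add i3 i1, ← intervalIntegral.integral_const_mul,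
    ← intervalIntegral.integral_const_mul, ← intervalIntegral.integral_const_mul, ← intervalIntegral.integral_add]
  rotate_left
  · exact (i3.add i1).const_mul _
  · exact (i2.const_mul _).const_mul _
  rw [← mul_zero (-2 * Complex.I), ← this, ← intervalIntegral.integral_const_mul]
  congr 1
  ext s
  have hI := Complex.I_sq
  simp only [mul_assoc]
  linear_combination (x * wt β s * Complex.exp (Complex.I * (x * (2 * s - 1)))) * ((2*s-1)^2 + 4 * s * (1-s)) * hI

noncomputable def mom (β : ℂ) (k : ℕ) : ℂ := ∫ s in (0:ℝ)..1, wt β s * (2 * (s:ℂ) - 1) ^ k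

lemma mom_one {β : ℂ} (hβ : 0 < β.re) : mom β 1 = 0 := by
  have hb : β ≠ 0 := by rintro rfl; simp at hβ
  have := ibp hβ (g := fun _ => 1) (g' := fun _ => 0) (fun s => hasDerivAt_const _ _) (by fun_prop)
  have h2 : -β * mom β 1 = 0 := by
    rw [← this, mom, ← intervalIntegral.integral_const_mul]
    congr 1; ext s; ring
  simpa [hb] using h2

lemma mom_rec {β : ℂ} (hβ : 0 < β.re) (k : ℕ) :
    (k + 1 + 2 * β) * mom β (k + 2) = (k + 1) * mom β k := by
  have := ibp hβ (g := fun s : ℝ => (2 * (s:ℂ) - 1) ^ (k + 1))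
    (g' := fun s : ℝ => (k + 1) * (2 * (s:ℂ) - 1) ^ k * 2) (by
      intro s
      have := ((((hasDerivAt_id (s:ℂ)).const_mul 2).sub_const 1).pow (k+1)).comp_ofReal
      simpa using this) (by fun_prop)
  have i1 := wt_mul_int hβ (g := fun s : ℝ => (2 * (s:ℂ) - 1) ^ k) (by fun_prop)
  have i2 := wt_mul_int hβ (g := fun s : ℝ => (2 * (s:ℂ) - 1) ^ (k + 2)) (by fun_prop)
  have h2 : (k + 1) * mom β k - (k + 1 + 2 * β) * mom β (k + 2) = 2 * 0 := by
    rw [← this, mom, mom, ← intervalIntegral.integral_const_mul, ← intervalIntegral.integral_const_mul,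
      ← intervalIntegral.integral_const_mul, ← intervalIntegral.integral_sub (i1.const_mul _) (i2.const_mul _)]
    congr 1; ext s; ring
  linear_combination -h2

lemma mom_odd {β : ℂ} (hβ : 0 < β.re) (n : ℕ) : mom β (2 * n + 1) = 0 := by
  induction n with
  | zero => simpa using mom_one hβ
  | succ n ih =>
    have := mom_rec hβ (2 * n + 1)
    rw [ih, mul_zero] at this
    rcases mul_eq_zero.1 this with h | h
    · exfalso
      have := congrArg Complex.re h
      simp at this
      have : (0:ℝ) ≤ n := Nat.cast_nonneg _
      linarith
    · exact h

lemma mom_even {β : ℂ} (hβ : 0 < β.re) (n : ℕ) : mom β (2 * n) / ((2 * n).factorial : ℂ) =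
    mom β 0 * Complex.Gamma (β + 1 / 2) / (4 ^ n * n.factorial * Complex.Gamma (β - 1 / 2 + n + 1)) := by
  induction n with
  | zero =>
    have : Complex.Gamma (β + 1 / 2) ≠ 0 := Complex.Gamma_ne_zero_of_re_pos (by simp; linarith)
    have e : β - 1 / 2 + 0 + 1 = β + 1 / 2 := by ring
    simp only [mul_zero, Nat.factorial_zero, Nat.cast_one, div_one, pow_zero, Nat.cast_zero, e, one_mul]
    rw [mul_div_cancel_right₀ _ this]
  | succ n ih =>
    have hr := mom_rec hβ (2 * n)
    have hn : (0:ℝ) ≤ n := Nat.cast_nonneg _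
    have hp : 0 < (β - 1 / 2 + n + 1).re := by simp; linarith
    have hG := Complex.Gamma_ne_zero_of_re_pos hp
    have h0 : β - 1 / 2 + n + 1 ≠ 0 := by intro h; rw [h] at hp; simp at hp
    have e : β - 1 / 2 + ((n + 1 : ℕ) : ℂ) + 1 = (β - 1 / 2 + n + 1) + 1 := by push_cast; ring
    rw [e, Complex.Gamma_add_one _ h0]
    have f1 : ((2 * n).factorial : ℂ) ≠ 0 := by exact_mod_cast Nat.factorial_ne_zero _
    have f2 : (n.factorial : ℂ) ≠ 0 := by exact_mod_cast Nat.factorial_ne_zero _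
    have f3 : (n + 1 : ℂ) ≠ 0 := by exact_mod_cast Nat.succ_ne_zero n
    have f4 : (2 * n + 1 : ℂ) ≠ 0 := by exact_mod_cast Nat.succ_ne_zero (2 * n)
    rw [show 2 * (n + 1) = 2 * n + 2 from rfl, Nat.factorial_succ, Nat.factorial_succ, Nat.factorial_succ]
    rw [div_eq_div_iff f1 (mul_ne_zero (mul_ne_zero (pow_ne_zero _ (by norm_num)) f2) hG)] at ih
    push_cast at hr ⊢
    have hr' : (2 * (β - 1 / 2 + n + 1)) * mom β (2 * n + 2) = (2 * n + 1) * mom β (2 * n) := by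
      rw [← hr]; ring
    have hr2 : mom β (2 * n + 2) = (2 * n + 1) * mom β (2 * n) / (2 * (β - 1 / 2 + n + 1)) := by
      rw [eq_div_iff (by simpa using h0), ← hr']; ring
    rw [hr2]
    have f5 : (2 * n + 1 + 1 : ℂ) ≠ 0 := by exact_mod_cast Nat.succ_ne_zero (2 * n + 1)
    generalize β - 1 / 2 + n + 1 = z at *
    generalize Complex.Gamma z = G at *
    rw [div_div, div_eq_div_iff (by simp [f1, f4, f5, h0]) (by simp [f2, f3, h0, hG]), pow_succ]
    linear_combination (2 * n + 1 : ℂ) * 4 * (n + 1) * z * ih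

lemma NN_series {β : ℂ} (hβ : 0 < β.re) (x : ℝ) :
    HasSum (fun k : ℕ => (Complex.I * x) ^ k / (k.factorial : ℂ) * mom β k) (NN (wt β) x) := by
  have := intervalIntegral.hasSum_integral_of_dominated_convergence (a := 0) (b := 1) (μ := volume)
    (F := fun (k : ℕ) (s : ℝ) => (Complex.I * x) ^ k / (k.factorial : ℂ) * (wt β s * (2 * (s:ℂ) - 1) ^ k))
    (f := fun s => wt β s * Complex.exp (Complex.I * x * (2 * s - 1)))
    (fun k s => ‖wt β s‖ * (|x| ^ k / k.factorial)) ?_ ?_ ?_ ?_ ?_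
  · simp only [intervalIntegral.integral_const_mul] at this
    exact this
  · intro k
    exact (intervalIntegrable_iff.1 ((wt_mul_int hβ (g := fun s : ℝ => (2 * (s:ℂ) - 1) ^ k) (by fun_prop)).const_mul _)).aestronglyMeasurable
  · intro k
    refine Eventually.of_forall fun s hs => ?_
    rw [uIoc_of_le zero_le_one] at hs
    have h1 : ‖(2 * (s:ℂ) - 1)‖ ≤ 1 := by
      rw [show (2 * (s:ℂ) - 1) = ((2 * s - 1 : ℝ) : ℂ) by push_cast; ring, Complex.norm_real,
        Real.norm_eq_abs, abs_le]
      constructor <;> linarith [hs.1, hs.2]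
    have h2 : ‖(2 * (s:ℂ) - 1)‖ ^ k ≤ 1 := pow_le_one₀ (norm_nonneg _) h1
    simp only [norm_mul, norm_div, norm_pow, Complex.norm_I, Complex.norm_real, one_mul,
      Real.norm_eq_abs, Complex.norm_natCast]
    calc _ = ‖wt β s‖ * (|x| ^ k / k.factorial) * ‖(2 * (s:ℂ) - 1)‖ ^ k := by ring
      _ ≤ _ := mul_le_of_le_one_right (by positivity) h2
  · exact Eventually.of_forall fun s hs => (Real.summable_pow_div_factorial |x|).mul_left _
  · simp only [tsum_mul_left]
    exact (wt_int hβ).norm.mul_const _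
  · refine Eventually.of_forall fun s hs => ?_
    have := (NormedSpace.expSeries_div_hasSum_exp (Complex.I * x * (2 * s - 1))).mul_left (wt β s)
    rw [← Complex.exp_eq_exp_ℂ] at this
    have e : (fun k : ℕ => wt β s * ((Complex.I * x * (2 * s - 1)) ^ k / k.factorial)) =
      fun k : ℕ => (Complex.I * x) ^ k / (k.factorial : ℂ) * (wt β s * (2 * (s:ℂ) - 1) ^ k) := by
      ext k; rw [mul_pow]; ring
    rw [e] at this
    exact this

lemma bessel_eq {β : ℂ} (hβ : 0 < β.re) {x : ℝ} (hx : 0 < x) :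
    mom β 0 * Complex.Gamma (β + 1 / 2) * besselJC (β - 1 / 2) x =
      ((x:ℂ) / 2) ^ (β - 1 / 2) * NN (wt β) x := by
  have h := NN_series hβ x
  have hinj : Function.Injective (fun n : ℕ => 2 * n) := fun a b h => by simpa using h
  rw [← hinj.hasSum_iff] at h
  · rw [← h.tsum_eq, besselJC, ← tsum_mul_left, ← tsum_mul_left]
    congr 1; ext n
    have hx2 : (x:ℂ) / 2 ≠ 0 := by simp [hx.ne']
    have e : ((x:ℂ) / 2) ^ (β - 1 / 2 + 2 * n) = ((x:ℂ) / 2) ^ (β - 1 / 2) * (x / 2) ^ (2 * n) := by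
      rw [Complex.cpow_add _ _ hx2]; congr 1; exact_mod_cast Complex.cpow_natCast ((x:ℂ) / 2) (2 * n)
    simp only [Function.comp]
    rw [e, div_mul_eq_mul_div, mul_div_assoc ((Complex.I * x) ^ (2 * n)), mom_even hβ]
    have e2 : (Complex.I * x) ^ (2 * n) = (-1) ^ n * (4 ^ n * (x / 2) ^ (2 * n)) := by
      rw [pow_mul, pow_mul, ← mul_pow, ← mul_pow, mul_pow, Complex.I_sq]; congr 1; ring
    rw [e2]
    have : (4:ℂ) ^ n ≠ 0 := pow_ne_zero _ (by norm_num)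
    have f2 : (n.factorial : ℂ) ≠ 0 := by exact_mod_cast Nat.factorial_ne_zero _
    have hn : (0:ℝ) ≤ n := Nat.cast_nonneg _
    have hG : Complex.Gamma (β - 1 / 2 + n + 1) ≠ 0 :=
      Complex.Gamma_ne_zero_of_re_pos (by simp; linarith)
    generalize Complex.Gamma (β - 1 / 2 + n + 1) = G at *
    generalize Complex.Gamma (β + 1 / 2) = G' at *
    generalize ((x:ℂ) / 2) ^ (β - 1 / 2) = P at *
    field_simp
  · intro k hk
    rcases Nat.even_or_odd' k with ⟨n, rfl | rfl⟩
    · exact absurd ⟨n, rfl⟩ hk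
    · rw [mom_odd hβ, mul_zero]

lemma u_bound {β : ℂ} (hβ : 0 < β.re) : ∃ K : ℝ, 0 ≤ K ∧ ∀ x : ℝ, 1 ≤ x →
    x ^ β.re * ‖NN (wt β) x‖ ≤ K := by
  set N := NN (wt β) with hN
  set N1 := NN (fun s => wt β s * (Complex.I * (2 * s - 1))) with hN1
  set N2 := NN (fun s => wt β s * (Complex.I * (2 * s - 1)) * (Complex.I * (2 * s - 1))) with hN2
  have dN : ∀ x, HasDerivAt N (N1 x) x := fun x => NN_deriv (wt_int hβ) x
  have dN1 : ∀ x, HasDerivAt N1 (N2 x) x := fun x => NN_deriv (wt_mul_int hβ (by fun_prop)) x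
  have ode : ∀ x : ℝ, (x:ℂ) * (N2 x + N x) + 2 * β * N1 x = 0 := fun x => NN_ode hβ x
  have dc : ∀ x : ℝ, 0 < x → ∀ γ : ℂ, HasDerivAt (fun s : ℝ => (s:ℂ) ^ γ) (γ * (x:ℂ) ^ (γ - 1)) x := by
    intro x hx γ
    have := (hasDerivAt_id (x:ℂ)).cpow_const (c := γ) (Or.inl hx)
    simpa using this.comp_ofReal
  set u : ℝ → ℂ := fun x => (x:ℂ) ^ β * N x with hu
  set u1 : ℝ → ℂ := fun x => β * (x:ℂ) ^ (β - 1) * N x + (x:ℂ) ^ β * N1 x with hu1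
  have du : ∀ x : ℝ, 0 < x → HasDerivAt u (u1 x) x := fun x hx => (dc x hx β).mul (dN x)
  have du1 : ∀ x : ℝ, 0 < x → HasDerivAt u1 (β * (β - 1) / (x:ℂ) ^ 2 * u x - u x) x := by
    intro x hx
    have hx0 : (x:ℂ) ≠ 0 := by exact_mod_cast hx.ne'
    refine ((((dc x hx (β - 1)).const_mul β).mul (dN x)).add ((dc x hx β).mul (dN1 x))).congr_deriv ?_
    have e1 : (x:ℂ) ^ (β - 1) = (x:ℂ) ^ β / x := by
      rw [Complex.cpow_sub _ _ hx0]; simp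
    have e2 : (x:ℂ) ^ (β - 1 - 1) = (x:ℂ) ^ β / x / x := by
      rw [Complex.cpow_sub _ _ hx0, e1]; simp
    simp only [hu]
    rw [e2, e1]
    field_simp
    linear_combination (x:ℂ) ^ β * x * ode x
  set c : ℝ := ‖β * (β - 1)‖ with hc
  have c0 : 0 ≤ c := norm_nonneg _
  set E : ℝ → ℝ := fun x => (‖u x‖ ^ 2 + ‖u1 x‖ ^ 2) * Real.exp (c / x) with hE
  have dE : ∀ x : ℝ, 0 < x → HasDerivAt E
    ((2 * inner ℝ (u x) (u1 x) + 2 * inner ℝ (u1 x) (β * (β - 1) / (x:ℂ) ^ 2 * u x - u x)) * Real.exp (c / x)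
     + (‖u x‖ ^ 2 + ‖u1 x‖ ^ 2) * (Real.exp (c / x) * (c * (-(x ^ 2)⁻¹)))) x := by
    intro x hx
    have h3 : HasDerivAt (fun x : ℝ => Real.exp (c / x)) (Real.exp (c / x) * (c * (-(x ^ 2)⁻¹))) x := by
      simpa [div_eq_mul_inv] using ((hasDerivAt_inv hx.ne').const_mul c).exp
    exact ((du x hx).norm_sq.add (du1 x hx).norm_sq).mul h3
  have dEn : ∀ x : ℝ, 0 < x → (2 * inner ℝ (u x) (u1 x) + 2 * inner ℝ (u1 x) (β * (β - 1) / (x:ℂ) ^ 2 * u x - u x)) * Real.exp (c / x)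
     + (‖u x‖ ^ 2 + ‖u1 x‖ ^ 2) * (Real.exp (c / x) * (c * (-(x ^ 2)⁻¹))) ≤ 0 := by
    intro x hx
    have e : inner ℝ (u1 x) (β * (β - 1) / (x:ℂ) ^ 2 * u x - u x) =
      inner ℝ (u1 x) (β * (β - 1) / (x:ℂ) ^ 2 * u x) - inner ℝ (u x) (u1 x) := by
      rw [inner_sub_right, real_inner_comm (u x) (u1 x)]
    have b : inner ℝ (u1 x) (β * (β - 1) / (x:ℂ) ^ 2 * u x) ≤ ‖u1 x‖ * (c * (x ^ 2)⁻¹ * ‖u x‖) := by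
      refine (real_inner_le_norm _ _).trans (le_of_eq ?_)
      rw [norm_mul, norm_div, norm_pow, Complex.norm_real, Real.norm_eq_abs, abs_of_pos hx, div_eq_mul_inv]
    rw [e]
    have hd : 0 ≤ c * (x ^ 2)⁻¹ := by positivity
    have : 2 * inner ℝ (u1 x) (β * (β - 1) / (x:ℂ) ^ 2 * u x) ≤ (‖u x‖ ^ 2 + ‖u1 x‖ ^ 2) * (c * (x ^ 2)⁻¹) := by
      nlinarith [mul_nonneg hd (sq_nonneg (‖u x‖ - ‖u1 x‖))]
    nlinarith [mul_nonneg (Real.exp_pos (c / x)).le (sub_nonneg.2 this)]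
  have anti : AntitoneOn E (Ici 1) := by
    apply antitoneOn_of_deriv_nonpos (convex_Ici 1)
    · intro x hx; exact (dE x (zero_lt_one.trans_le hx)).continuousAt.continuousWithinAt
    · intro x hx
      rw [interior_Ici] at hx
      exact (dE x (zero_lt_one.trans hx)).differentiableAt.differentiableWithinAt
    · intro x hx
      rw [interior_Ici] at hx
      rw [(dE x (zero_lt_one.trans hx)).deriv]
      exact dEn x (zero_lt_one.trans hx)
  refine ⟨Real.sqrt (E 1), Real.sqrt_nonneg _, fun x hx => ?_⟩
  have hx0 : 0 < x := zero_lt_one.trans_le hx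
  have h1 : E x ≤ E 1 := anti (by simp) hx hx
  have h2 : ‖u x‖ ^ 2 ≤ E x := by
    have : 1 ≤ Real.exp (c / x) := Real.one_le_exp (by positivity)
    simp only [hE]
    nlinarith [sq_nonneg ‖u x‖, sq_nonneg ‖u1 x‖]
  have h3 : ‖u x‖ = x ^ β.re * ‖N x‖ := by
    simp only [hu]
    rw [norm_mul, Complex.norm_cpow_eq_rpow_re_of_pos hx0]
  rw [← h3]
  exact Real.le_sqrt_of_sq_le (h2.trans h1)

lemma gamma_cint {α : ℂ} (hα : 0 < α.re) {δ : ℝ} (hδ : 0 < δ) :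
    IntegrableOn (fun t : ℝ => t ^ (α.re - 1) * Real.exp (- (δ * t))) (Ioi 0) := by
  have := Real.integral_rpow_mul_exp_neg_mul_Ioi hα hδ
  by_contra h
  rw [integral_undef h] at this
  have h1 := Real.Gamma_pos_of_pos hα
  have : 0 < (1 / δ) ^ α.re * Real.Gamma α.re := by positivity
  linarith

lemma gamma_complex {α : ℂ} (hα : 0 < α.re) {r : ℂ} (hr : 0 < r.re) :
    ∫ t in Ioi (0:ℝ), (t:ℂ) ^ (α - 1) * Complex.exp (-(r * t)) = (1 / r) ^ α * Complex.Gamma α := by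
  have hU : IsOpen {z : ℂ | 0 < z.re} := isOpen_lt continuous_const Complex.continuous_re
  have meas : ∀ γ z : ℂ, AEStronglyMeasurable (fun t : ℝ => (t:ℂ) ^ γ * Complex.exp (-(z * t))) (volume.restrict (Ioi 0)) := by
    intro γ z
    refine ContinuousOn.aestronglyMeasurable ?_ measurableSet_Ioi
    intro t ht
    exact ((Complex.continuousAt_ofReal_cpow_const t γ (Or.inr (ne_of_gt ht))).mul
      (by fun_prop)).continuousWithinAt
  have nrm : ∀ (γ z : ℂ) (t : ℝ), t ∈ Ioi (0:ℝ) → ‖(t:ℂ) ^ γ * Complex.exp (-(z * t))‖ = t ^ γ.re * Real.exp (-(z.re * t)) := by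
    intro γ z t ht
    rw [norm_mul, Complex.norm_cpow_eq_rpow_re_of_pos ht, Complex.norm_exp]
    simp
  have int : ∀ (γ z : ℂ), 0 < γ.re → 0 < z.re → IntegrableOn (fun t : ℝ => (t:ℂ) ^ (γ - 1) * Complex.exp (-(z * t))) (Ioi 0) := by
    intro γ z hγ hz
    refine (gamma_cint hγ hz).mono' (meas _ _) ?_
    filter_upwards [ae_restrict_mem measurableSet_Ioi] with t ht
    rw [nrm _ _ _ ht]; simp
  have d1 : DifferentiableOn ℂ (fun r : ℂ => ∫ t in Ioi (0:ℝ), (t:ℂ) ^ (α - 1) * Complex.exp (-(r * t))) {z : ℂ | 0 < z.re} := by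
    intro z hz
    have hz : 0 < z.re := hz
    have hs : {w : ℂ | z.re / 2 < w.re} ∈ 𝓝 z :=
      (isOpen_lt continuous_const Complex.continuous_re).mem_nhds (by simp; linarith)
    refine (hasDerivAt_integral_of_dominated_loc_of_deriv_le (μ := volume.restrict (Ioi (0:ℝ)))
      (F := fun (r : ℂ) (t : ℝ) => (t:ℂ) ^ (α - 1) * Complex.exp (-(r * t)))
      (F' := fun (r : ℂ) (t : ℝ) => (t:ℂ) ^ (α - 1) * (Complex.exp (-(r * t)) * (-t)))
      (bound := fun t => t ^ ((α + 1).re - 1) * Real.exp (-(z.re / 2 * t)))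
      hs (Eventually.of_forall fun w => meas _ _) (int _ _ hα hz) ?_ ?_
      (gamma_cint (by simp; linarith) (by linarith)) ?_).2.differentiableAt.differentiableWithinAt
    · simp only [← mul_assoc]
      exact (meas _ _).mul (by fun_prop)
    · filter_upwards [ae_restrict_mem measurableSet_Ioi] with t ht w hw
      have ht' : 0 < t := ht
      rw [← mul_assoc, norm_mul, nrm _ _ _ ht]
      have : t ^ ((α + 1).re - 1) = t ^ (α - 1).re * t := by
        rw [← Real.rpow_add_one ht'.ne']; simp
      rw [this, norm_neg, Complex.norm_real, Real.norm_eq_abs, abs_of_pos ht', mul_assoc, mul_assoc, mul_comm (Real.exp _)]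
      gcongr
    · filter_upwards with t w hw
      have := ((((hasDerivAt_id w).mul_const (t:ℂ)).neg).cexp).const_mul ((t:ℂ) ^ (α - 1))
      simpa using this
  have d2 : DifferentiableOn ℂ (fun r : ℂ => (1 / r) ^ α * Complex.Gamma α) {z : ℂ | 0 < z.re} := by
    intro z hz
    have hz : 0 < z.re := hz
    have hz0 : z ≠ 0 := by rintro rfl; simp at hz
    refine DifferentiableAt.differentiableWithinAt (DifferentiableAt.mul_const ?_ _)
    refine DifferentiableAt.cpow_const (by fun_prop (disch := assumption)) (Or.inl ?_)
    rw [one_div, Complex.inv_re]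
    exact div_pos hz (Complex.normSq_pos.2 hz0)
  have hconn : IsPreconnected {z : ℂ | 0 < z.re} := (convex_halfSpace_re_gt 0).isPreconnected
  refine (d1.analyticOnNhd hU).eqOn_of_preconnected_of_frequently_eq (d2.analyticOnNhd hU) hconn
    (z₀ := 1) (by simp) ?_ hr
  have ht : Tendsto (fun n : ℕ => ((1 + 1 / ((n:ℝ) + 1) : ℝ) : ℂ)) atTop (𝓝[≠] 1) := by
    rw [tendsto_nhdsWithin_iff]
    constructor
    · have := (tendsto_one_div_add_atTop_nhds_zero_nat (𝕜 := ℝ)).const_add 1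
      rw [add_zero] at this
      exact_mod_cast (Complex.continuous_ofReal.tendsto _).comp this
    · refine Eventually.of_forall fun n => ?_
      simp only [mem_compl_iff, mem_singleton_iff]
      have : (1 + 1 / ((n:ℝ) + 1) : ℝ) ≠ 1 := by
        have : 0 < 1 / ((n:ℝ) + 1) := by positivity
        linarith
      exact_mod_cast this
  refine ht.frequently (Frequently.of_forall fun n => ?_)
  exact Complex.integral_cpow_mul_exp_neg_mul_Ioi hα (by positivity)

noncomputable def HH (α β : ℂ) (x : ℝ) : ℂ :=
  (x:ℂ) ^ (α - 1) * (Complex.exp (Complex.I * x) * NN (wt β) x)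

lemma NN_cont {β : ℂ} (hβ : 0 < β.re) : Continuous (NN (wt β)) :=
  continuous_iff_continuousAt.2 fun x => (NN_deriv (wt_int hβ) x).continuousAt

lemma HH_meas {α β : ℂ} (hβ : 0 < β.re) : ContinuousOn (HH α β) (Ioi 0) := by
  have := NN_cont hβ
  intro t ht
  exact ((Complex.continuousAt_ofReal_cpow_const t _ (Or.inr (ne_of_gt ht))).mul
      (by fun_prop)).continuousWithinAt

lemma HH_norm {α β : ℂ} {x : ℝ} (hx : 0 < x) : ‖HH α β x‖ = x ^ (α.re - 1) * ‖NN (wt β) x‖ := by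
  have : ‖Complex.exp (Complex.I * x)‖ = 1 := by rw [Complex.norm_exp]; simp
  rw [HH, norm_mul, norm_mul, this, one_mul, Complex.norm_cpow_eq_rpow_re_of_pos hx]; simp

lemma HH_int {α β : ℂ} (hα : 0 < α.re) (hβ : 0 < β.re) (h : α.re < β.re) :
    IntegrableOn (HH α β) (Ioi 0) := by
  have hm := (HH_meas (α := α) hβ).aestronglyMeasurable measurableSet_Ioi (μ := volume)
  rw [← Ioc_union_Ioi_eq_Ioi zero_le_one]
  refine IntegrableOn.union ?_ ?_
  · have h1 : IntegrableOn (fun x : ℝ => x ^ (α.re - 1)) (Ioc 0 1) := by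
      have := intervalIntegral.intervalIntegrable_rpow' (a := 0) (b := 1) (r := α.re - 1) (by linarith)
      rwa [intervalIntegrable_iff_integrableOn_Ioc_of_le zero_le_one] at this
    refine (h1.mul_const (∫ s in (0:ℝ)..1, ‖wt β s‖)).mono' (hm.mono_set Ioc_subset_Ioi_self) ?_
    filter_upwards [ae_restrict_mem measurableSet_Ioc] with x hx
    rw [HH_norm hx.1]
    have : 0 ≤ x ^ (α.re - 1) := Real.rpow_nonneg hx.1.le _
    gcongr
    refine (intervalIntegral.norm_integral_le_integral_norm zero_le_one).trans (le_of_eq ?_)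
    congr 1; ext s
    rw [norm_mul, Complex.norm_exp]; simp
  · obtain ⟨K, hK, hb⟩ := u_bound hβ
    have h1 := (integrableOn_Ioi_rpow_of_lt (a := α.re - 1 - β.re) (c := 1) (by linarith) one_pos).mul_const K
    refine h1.mono' (hm.mono_set (Ioi_subset_Ioi zero_le_one)) ?_
    filter_upwards [ae_restrict_mem measurableSet_Ioi] with x hx
    have hx : 1 < x := hx
    have hx0 : 0 < x := zero_lt_one.trans hx
    rw [HH_norm hx0]
    have := hb x hx.le
    calc _ = x ^ (α.re - 1 - β.re) * (x ^ β.re * ‖NN (wt β) x‖) := by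
          rw [← mul_assoc, ← Real.rpow_add hx0]; ring_nf
      _ ≤ _ := by gcongr

lemma HH_fubini {α β : ℂ} (hα : 0 < α.re) (hβ : 0 < β.re) {ε : ℝ} (hε : 0 < ε) :
    ∫ x in Ioi (0:ℝ), Complex.exp (-(ε * x)) * HH α β x =
     ∫ s in Ioc (0:ℝ) 1, wt β s * ((1 / (ε - 2 * Complex.I * s)) ^ α * Complex.Gamma α) := by
  have e1 : ∀ x : ℝ, Complex.exp (-(ε * x)) * HH α β x =
      ∫ s in Ioc (0:ℝ) 1, wt β s * ((x:ℂ) ^ (α - 1) * Complex.exp (-((ε - 2 * Complex.I * s) * x))) := by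
    intro x
    rw [HH, NN, intervalIntegral.integral_of_le zero_le_one, ← mul_assoc, ← mul_assoc, ← integral_const_mul]
    congr 1; ext s
    have : Complex.exp (-((ε - 2 * Complex.I * s) * x)) =
      Complex.exp (-(ε * x)) * Complex.exp (Complex.I * x) * Complex.exp (Complex.I * x * (2 * s - 1)) := by
      rw [← Complex.exp_add, ← Complex.exp_add]; congr 1; ring
    rw [this]; ring
  simp only [e1]
  rw [integral_integral_swap]
  · refine integral_congr_ae (Eventually.of_forall fun s => ?_)
    simp only
    rw [integral_const_mul, gamma_complex hα (by simpa using hε)]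
  · have i1 : Integrable (fun t : ℝ => (t:ℂ) ^ (α - 1) * Complex.exp (-(ε * t))) (volume.restrict (Ioi 0)) := by
      refine (gamma_cint hα hε).mono' ?_ ?_
      · refine ContinuousOn.aestronglyMeasurable ?_ measurableSet_Ioi
        intro t ht
        exact ((Complex.continuousAt_ofReal_cpow_const t _ (Or.inr (ne_of_gt ht))).mul
          (by fun_prop)).continuousWithinAt
      · filter_upwards [ae_restrict_mem measurableSet_Ioi] with t ht
        rw [norm_mul, Complex.norm_cpow_eq_rpow_re_of_pos ht, Complex.norm_exp]; simp
    have i2 : Integrable (wt β) (volume.restrict (Ioc 0 1)) :=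
      (intervalIntegrable_iff_integrableOn_Ioc_of_le zero_le_one).1 (wt_int hβ)
    have i3 := i1.mul_prod i2
    have i4 := i3.mul_bdd (c := 1) (g := fun z : ℝ × ℝ => Complex.exp (2 * Complex.I * z.2 * z.1))
      (Continuous.aestronglyMeasurable (by fun_prop)) (Eventually.of_forall fun z => by
        rw [Complex.norm_exp]; simp)
    refine i4.congr (Eventually.of_forall fun z => ?_)
    simp only [Function.uncurry]
    have : Complex.exp (-((ε - 2 * Complex.I * z.2) * z.1)) =
      Complex.exp (-(ε * z.1)) * Complex.exp (2 * Complex.I * z.2 * z.1) := by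
      rw [← Complex.exp_add]; congr 1; ring
    rw [this]; ring

lemma wt_cpow_norm {β : ℂ} {s : ℝ} (hs : s ∈ Ioo (0:ℝ) 1) : ‖wt β s‖ = s ^ (β.re - 1) * (1 - s) ^ (β.re - 1) := by
  have h1 : 0 < 1 - s := by linarith [hs.2]
  have e : (1 - (s:ℂ)) = ((1 - s : ℝ) : ℂ) := by push_cast; ring
  rw [wt, norm_mul, Complex.norm_cpow_eq_rpow_re_of_pos hs.1, e, Complex.norm_cpow_eq_rpow_re_of_pos h1]
  simp

lemma HH_value {α β : ℂ} (hα : 0 < α.re) (hβ : 0 < β.re) (h : α.re < β.re) :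
    ∫ x in Ioi (0:ℝ), HH α β x =
     Complex.exp (Real.pi * Complex.I * α / 2) * (2:ℂ) ^ (-α) * Complex.Gamma α * Complex.betaIntegral (β - α) β := by
  have t1 : Tendsto (fun ε : ℝ => ∫ x in Ioi (0:ℝ), Complex.exp (-(ε * x)) * HH α β x) (𝓝[>] 0)
      (𝓝 (∫ x in Ioi (0:ℝ), HH α β x)) := by
    refine tendsto_integral_filter_of_dominated_convergence (fun x => ‖HH α β x‖) ?_ ?_ (HH_int hα hβ h).norm ?_
    · refine Eventually.of_forall fun ε => ?_
      exact (Continuous.aestronglyMeasurable (by fun_prop)).mul (HH_int hα hβ h).aestronglyMeasurable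
    · filter_upwards [self_mem_nhdsWithin] with ε hε
      filter_upwards [ae_restrict_mem measurableSet_Ioi] with x hx
      have hε : 0 < ε := hε
      have hx : 0 < x := hx
      rw [norm_mul, Complex.norm_exp]
      refine mul_le_of_le_one_left (norm_nonneg _) ?_
      rw [Real.exp_le_one_iff]
      simp; positivity
    · refine Eventually.of_forall fun x => ?_
      have : Continuous fun ε : ℝ => Complex.exp (-(ε * x)) * HH α β x := by fun_prop
      have := this.tendsto 0
      simp only [Complex.ofReal_zero, zero_mul, neg_zero, Complex.exp_zero, one_mul] at this
      exact this.mono_left nhdsWithin_le_nhds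
  have t2 : Tendsto (fun ε : ℝ => ∫ s in Ioc (0:ℝ) 1, wt β s * ((1 / (ε - 2 * Complex.I * s)) ^ α * Complex.Gamma α)) (𝓝[>] 0)
      (𝓝 (∫ s in Ioc (0:ℝ) 1, wt β s * ((Complex.I / (2 * s)) ^ α * Complex.Gamma α))) := by
    have bi : IntegrableOn (fun s : ℝ => ‖(s:ℂ) ^ (β - α - 1) * (1 - (s:ℂ)) ^ (β - 1)‖) (Ioo 0 1) := by
      have := (Complex.betaIntegral_convergent (u := β - α) (v := β) (by simpa using h) hβ).norm
      rw [intervalIntegrable_iff_integrableOn_Ioo_of_le zero_le_one] at this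
      exact this
    rw [← restrict_Ioo_eq_restrict_Ioc]
    refine tendsto_integral_filter_of_dominated_convergence
      (fun s : ℝ => ‖(s:ℂ) ^ (β - α - 1) * (1 - (s:ℂ)) ^ (β - 1)‖ * ((2:ℝ) ^ (-α.re) * Real.exp (Real.pi * |α.im|) * ‖Complex.Gamma α‖)) ?_ ?_ (bi.mul_const _) ?_
    · filter_upwards [self_mem_nhdsWithin] with ε hε
      have hε : 0 < ε := hε
      have hw : AEStronglyMeasurable (wt β) (volume.restrict (Ioo 0 1)) :=
        ((intervalIntegrable_iff_integrableOn_Ioo_of_le zero_le_one).1 (wt_int hβ)).aestronglyMeasurable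
      refine hw.mul (Measurable.aestronglyMeasurable ?_)
      fun_prop
    · filter_upwards [self_mem_nhdsWithin] with ε hε
      have hε : 0 < ε := hε
      filter_upwards [ae_restrict_mem measurableSet_Ioo] with s hs
      have hs0 : 0 < s := hs.1
      have h1s : 0 < 1 - s := by linarith [hs.2]
      have e : (1 - (s:ℂ)) = ((1 - s : ℝ) : ℂ) := by push_cast; ring
      have n1 : 2 * s ≤ ‖(ε - 2 * Complex.I * s : ℂ)‖ := by
        have := Complex.abs_im_le_norm (ε - 2 * Complex.I * s : ℂ)
        simp at this
        rwa [abs_of_pos hs0] at this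
      have n2 : ‖(1 / (ε - 2 * Complex.I * s) : ℂ)‖ ^ α.re ≤ (2:ℝ) ^ (-α.re) * s ^ (-α.re) := by
        rw [← Real.mul_rpow (by norm_num) hs0.le, Real.rpow_neg (by positivity), ← Real.inv_rpow (by positivity)]
        rw [norm_div, norm_one, one_div]
        gcongr
      have n3 : ‖(1 / (ε - 2 * Complex.I * s) : ℂ) ^ α‖ ≤ (2:ℝ) ^ (-α.re) * s ^ (-α.re) * Real.exp (Real.pi * |α.im|) := by
        refine (Complex.norm_cpow_le _ _).trans ?_
        rw [div_eq_mul_inv, ← Real.exp_neg]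
        gcongr
        set z := (1 / (ε - 2 * Complex.I * s) : ℂ)
        calc -(z.arg * α.im) ≤ |z.arg * α.im| := neg_le_abs _
          _ = |z.arg| * |α.im| := abs_mul _ _
          _ ≤ _ := by gcongr; exact Complex.abs_arg_le_pi z
      have e3 : ‖(s:ℂ) ^ (β - α - 1) * (1 - (s:ℂ)) ^ (β - 1)‖ = s ^ (β.re - 1) * (1 - s) ^ (β.re - 1) * s ^ (-α.re) := by
        rw [norm_mul, Complex.norm_cpow_eq_rpow_re_of_pos hs.1, e, Complex.norm_cpow_eq_rpow_re_of_pos h1s]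
        rw [mul_right_comm, ← Real.rpow_add hs0]
        simp
        left; congr 1; ring
      rw [norm_mul, norm_mul, wt_cpow_norm hs, e3]
      calc _ ≤ s ^ (β.re - 1) * (1 - s) ^ (β.re - 1) * ((2:ℝ) ^ (-α.re) * s ^ (-α.re) * Real.exp (Real.pi * |α.im|) * ‖Complex.Gamma α‖) := by
            gcongr
        _ = _ := by ring
    · filter_upwards [ae_restrict_mem measurableSet_Ioo] with s hs
      have hs0 : (s:ℂ) ≠ 0 := by exact_mod_cast hs.1.ne'
      have e : (1 / ((0:ℝ) - 2 * Complex.I * s) : ℂ) = Complex.I / (2 * s) := by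
        simp; field_simp
      have hc : ContinuousAt (fun ε : ℝ => wt β s * ((1 / (ε - 2 * Complex.I * s) : ℂ) ^ α * Complex.Gamma α)) 0 := by
        refine continuousAt_const.mul (ContinuousAt.mul (ContinuousAt.cpow ?_ continuousAt_const ?_) continuousAt_const)
        · refine ContinuousAt.div continuousAt_const (by fun_prop) ?_
          simp [hs0]
        · rw [e]; right
          rw [Complex.div_im]
          simp [Complex.normSq_apply]
          exact hs.1.ne'
      have := hc.tendsto
      simp only [e] at this
      exact this.mono_left nhdsWithin_le_nhds
  have t3 := t1.congr' (f₂ := fun ε : ℝ => ∫ s in Ioc (0:ℝ) 1, wt β s * ((1 / (ε - 2 * Complex.I * s)) ^ α * Complex.Gamma α)) (by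
    filter_upwards [self_mem_nhdsWithin] with ε hε
    exact HH_fubini hα hβ hε)
  rw [tendsto_nhds_unique t3 t2, Complex.betaIntegral, intervalIntegral.integral_of_le zero_le_one, ← integral_const_mul]
  refine setIntegral_congr_fun measurableSet_Ioc fun s hs => ?_
  have hs0 : (s:ℂ) ≠ 0 := by exact_mod_cast hs.1.ne'
  have e1 : (Complex.I / (2 * s)) ^ α = Complex.exp (Real.pi * Complex.I * α / 2) * (2:ℂ) ^ (-α) * (s:ℂ) ^ (-α) := by
    have : Complex.I / (2 * s) = (((2 * s)⁻¹ : ℝ) : ℂ) * Complex.I := by push_cast; field_simp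
    have hp : 0 < (2 * s)⁻¹ := by have := hs.1; positivity
    have h2 : Complex.log 2 = ((Real.log 2 : ℝ) : ℂ) := by
      rw [Complex.ofReal_log (by norm_num)]; simp
    rw [this, Complex.cpow_def_of_ne_zero (mul_ne_zero (by exact_mod_cast hp.ne') Complex.I_ne_zero),
      Complex.log_ofReal_mul hp Complex.I_ne_zero, Complex.log_I,
      Complex.cpow_def_of_ne_zero two_ne_zero, Complex.cpow_def_of_ne_zero hs0, h2,
      ← Complex.ofReal_log hs.1.le, Real.log_inv, Real.log_mul two_ne_zero hs.1.ne',
      ← Complex.exp_add, ← Complex.exp_add]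
    congr 1; push_cast; ring
  have e2 : (s:ℂ) ^ (β - α - 1) = (s:ℂ) ^ (β - 1) * (s:ℂ) ^ (-α) := by
    rw [← Complex.cpow_add _ _ hs0]; congr 1; ring
  simp only [e1, e2, wt]
  ring

lemma mom_const {ν : ℂ} (hβ : 0 < (ν + 1 / 2).re) :
    mom (ν + 1 / 2) 0 * Complex.Gamma (ν + 1 / 2 + 1 / 2) =
      Complex.Gamma (ν + 1 / 2) * (2:ℂ) ^ (-(2 * ν)) * (Real.sqrt Real.pi : ℂ) := by
  have h0 : mom (ν + 1 / 2) 0 = Complex.betaIntegral (ν + 1 / 2) (ν + 1 / 2) := by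
    simp [mom, Complex.betaIntegral, wt]
  have h1 := Complex.Gamma_mul_Gamma_eq_betaIntegral hβ hβ
  have h2 := Complex.Gamma_mul_Gamma_add_half (ν + 1 / 2)
  rw [← two_mul, ← h0] at h1
  have e : (1 - 2 * (ν + 1 / 2)) = -(2 * ν) := by ring
  rw [e] at h2
  have hG : Complex.Gamma (2 * (ν + 1 / 2)) ≠ 0 :=
    Complex.Gamma_ne_zero_of_re_pos (by rw [two_mul, Complex.add_re]; linarith)
  apply mul_left_cancel₀ hG
  linear_combination -Complex.Gamma (ν + 1 / 2 + 1 / 2) * h1 + Complex.Gamma (ν + 1 / 2) * h2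

/-- For `−Re ν < Re μ < 1/2` and `a > 0`, the improper integral
`∫_0^∞ exp(iax) J_ν(ax) x^{μ−1} dx` (taken as a limit over `δ → 0⁺, R → ∞` of
`∫_δ^R`) converges to
`exp(πi(ν+μ)/2) Γ(ν+μ) Γ(1/2−μ) / (√π (2a)^μ Γ(ν−μ+1))`. -/
theorem stmt4 (ν μ : ℂ) (a : ℝ) (ha : 0 < a)
    (h1 : -ν.re < μ.re) (h2 : μ.re < 1 / 2) :
    Filter.Tendsto
      (fun p : ℝ × ℝ => ∫ x in p.1..p.2,
        Complex.exp (Complex.I * (a : ℂ) * (x : ℂ)) * besselJC ν (a * x) * (x : ℂ) ^ (μ - 1))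
      ((nhdsWithin (0 : ℝ) (Set.Ioi 0)) ×ˢ Filter.atTop)
      (nhds (Complex.exp ((Real.pi : ℂ) * Complex.I * (ν + μ) / 2) * Complex.Gamma (ν + μ) *
        Complex.Gamma (1 / 2 - μ) /
        ((Real.sqrt Real.pi : ℂ) * ((2 * a : ℝ) : ℂ) ^ μ * Complex.Gamma (ν - μ + 1)))) := by
  have hβ : 0 < (ν + 1 / 2).re := by simp; linarith
  have hα : 0 < (ν + μ).re := by simp; linarith
  have hαβ : (ν + μ).re < (ν + 1 / 2).re := by simp; linarith
  have ha0 : (a:ℂ) ≠ 0 := by exact_mod_cast ha.ne'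
  have hGβ := Complex.Gamma_ne_zero_of_re_pos hβ
  have hpi : (Real.sqrt Real.pi : ℂ) ≠ 0 := by
    exact_mod_cast (Real.sqrt_pos.2 Real.pi_pos).ne'
  set D : ℂ := Complex.Gamma (ν + 1 / 2) * (2:ℂ) ^ (-(2 * ν)) * (Real.sqrt Real.pi : ℂ) with hD
  have h2c : ∀ z : ℂ, (2:ℂ) ^ z ≠ 0 := fun z => by simp [Complex.cpow_eq_zero_iff]
  have hac : ∀ z : ℂ, (a:ℂ) ^ z ≠ 0 := fun z => by simp [Complex.cpow_eq_zero_iff, ha0]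
  have hD0 : D ≠ 0 := mul_ne_zero (mul_ne_zero hGβ (h2c _)) hpi
  set C : ℂ := D⁻¹ * (2:ℂ) ^ (-ν) * (a:ℂ) ^ (1 - μ) with hC
  set f : ℝ → ℂ := fun x =>
    Complex.exp (Complex.I * (a : ℂ) * (x : ℂ)) * besselJC ν (a * x) * (x : ℂ) ^ (μ - 1) with hf
  have key : ∀ x ∈ Ioi (0:ℝ), C * HH (ν + μ) (ν + 1 / 2) (a * x) = f x := by
    intro x hx
    have hx : 0 < x := hx
    have hx0 : (x:ℂ) ≠ 0 := by exact_mod_cast hx.ne'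
    have hb := bessel_eq hβ (mul_pos ha hx)
    rw [mom_const hβ, ← hD, add_sub_cancel_right] at hb
    have hb2 : besselJC ν (a * x) = D⁻¹ * ((((a * x : ℝ) : ℂ) / 2) ^ ν * NN (wt (ν + 1 / 2)) (a * x)) := by
      rw [← hb, inv_mul_cancel_left₀ hD0]
    have e1 : (((a * x : ℝ) : ℂ) / 2) ^ ν = (a:ℂ) ^ ν * (x:ℂ) ^ ν * (2:ℂ) ^ (-ν) := by
      have := Complex.div_cpow_ofReal_nonneg (mul_pos ha hx).le zero_le_two ν
      rw [Complex.ofReal_ofNat] at this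
      rw [this, Complex.ofReal_mul, Complex.mul_cpow_ofReal_nonneg ha.le hx.le, Complex.cpow_neg, div_eq_mul_inv]
    have e2 : ((a * x : ℝ) : ℂ) ^ (ν + μ - 1) = (a:ℂ) ^ ν * (a:ℂ) ^ (μ - 1) * ((x:ℂ) ^ ν * (x:ℂ) ^ (μ - 1)) := by
      rw [Complex.ofReal_mul, Complex.mul_cpow_ofReal_nonneg ha.le hx.le, add_sub_assoc,
        Complex.cpow_add _ _ ha0, Complex.cpow_add _ _ hx0]
    have e3 : (a:ℂ) ^ (1 - μ) * (a:ℂ) ^ (μ - 1) = 1 := by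
      rw [← Complex.cpow_add _ _ ha0]; simp
    have e4 : Complex.exp (Complex.I * ((a * x : ℝ) : ℂ)) = Complex.exp (Complex.I * (a : ℂ) * (x : ℂ)) := by
      congr 1; push_cast; ring
    simp only [hf, HH, hC]
    rw [hb2, e1, e2, e4]
    linear_combination (D⁻¹ * (2:ℂ) ^ (-ν) * (a:ℂ) ^ ν * ((x:ℂ) ^ ν * (x:ℂ) ^ (μ - 1)) *
      Complex.exp (Complex.I * (a : ℂ) * (x : ℂ)) * NN (wt (ν + 1 / 2)) (a * x)) * e3
  have hHi := HH_int hα hβ hαβ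
  have fi : IntegrableOn f (Ioi 0) := by
    refine IntegrableOn.congr_fun ?_ key measurableSet_Ioi
    refine Integrable.const_mul ?_ C
    have := (integrableOn_Ioi_comp_mul_left_iff (HH (ν + μ) (ν + 1 / 2)) 0 ha).2 (by simpa using hHi)
    exact this
  have fv : ∫ x in Ioi (0:ℝ), f x = Complex.exp ((Real.pi : ℂ) * Complex.I * (ν + μ) / 2) * Complex.Gamma (ν + μ) *
        Complex.Gamma (1 / 2 - μ) /
        ((Real.sqrt Real.pi : ℂ) * ((2 * a : ℝ) : ℂ) ^ μ * Complex.Gamma (ν - μ + 1)) := by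
    rw [← setIntegral_congr_fun measurableSet_Ioi key, integral_const_mul,
      integral_comp_mul_left_Ioi (HH (ν + μ) (ν + 1 / 2)) 0 ha, mul_zero, HH_value hα hβ hαβ]
    have eb : ν + 1 / 2 - (ν + μ) = 1 / 2 - μ := by ring
    have hb := Complex.Gamma_mul_Gamma_eq_betaIntegral (s := 1 / 2 - μ) (t := ν + 1 / 2) (by simp; linarith) hβ
    have eg : 1 / 2 - μ + (ν + 1 / 2) = ν - μ + 1 := by ring
    rw [eg] at hb
    have hG : Complex.Gamma (ν - μ + 1) ≠ 0 := Complex.Gamma_ne_zero_of_re_pos (by simp; linarith)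
    have e1 : ((2 * a : ℝ) : ℂ) ^ μ = (2:ℂ) ^ μ * (a:ℂ) ^ μ := by
      rw [Complex.ofReal_mul, Complex.mul_cpow_ofReal_nonneg zero_le_two ha.le, Complex.ofReal_ofNat]
    have e2 : (a:ℂ) ^ (1 - μ) = a / (a:ℂ) ^ μ := by rw [Complex.cpow_sub _ _ ha0, Complex.cpow_one]
    have e3 : (2:ℂ) ^ (-(ν + μ)) = ((2:ℂ) ^ ν)⁻¹ * ((2:ℂ) ^ μ)⁻¹ := by
      rw [neg_add, Complex.cpow_add _ _ two_ne_zero, Complex.cpow_neg, Complex.cpow_neg]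
    have e4 : (2:ℂ) ^ (-(2 * ν)) = ((2:ℂ) ^ ν)⁻¹ * ((2:ℂ) ^ ν)⁻¹ := by
      rw [two_mul, neg_add, Complex.cpow_add _ _ two_ne_zero, Complex.cpow_neg]
    rw [eb, e1, hC, hD, e2, e3, e4, Complex.cpow_neg, Complex.real_smul]
    have hbb : Complex.betaIntegral (1 / 2 - μ) (ν + 1 / 2) =
      Complex.Gamma (1 / 2 - μ) * Complex.Gamma (ν + 1 / 2) / Complex.Gamma (ν - μ + 1) := by
      rw [hb, mul_div_cancel_left₀ _ hG]
    rw [hbb]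
    have a1 := h2c ν
    have a2 := h2c μ
    have a3 := hac μ
    generalize Complex.Gamma (ν - μ + 1) = G1 at *
    generalize Complex.Gamma (1 / 2 - μ) = G2 at *
    generalize Complex.Gamma (ν + 1 / 2) = G3 at *
    generalize Complex.Gamma (ν + μ) = G4 at *
    generalize (2:ℂ) ^ ν = P1 at *
    generalize (2:ℂ) ^ μ = P2 at *
    generalize (a:ℂ) ^ μ = P3 at *
    generalize Complex.exp ((Real.pi : ℂ) * Complex.I * (ν + μ) / 2) = P4 at *
    generalize (Real.sqrt Real.pi : ℂ) = P5 at *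
    push_cast
    field_simp
  have cov : AECover (volume.restrict (Ioi (0:ℝ))) ((𝓝[>] (0:ℝ)) ×ˢ atTop) (fun p : ℝ × ℝ => Ioc p.1 p.2) := by
    refine ⟨?_, fun p => measurableSet_Ioc⟩
    filter_upwards [ae_restrict_mem measurableSet_Ioi] with x hx
    have hx : 0 < x := hx
    have l1 : ∀ᶠ y in 𝓝[>] (0:ℝ), y < x := nhdsWithin_le_nhds (Iio_mem_nhds hx)
    exact (l1.prod_mk (eventually_ge_atTop x)).mono fun p hp => ⟨hp.1, hp.2⟩
  have T := cov.integral_tendsto_of_countably_generated fi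
  rw [fv] at T
  refine T.congr' ?_
  have l1 : ∀ᶠ y in 𝓝[>] (0:ℝ), y ∈ Ioo (0:ℝ) 1 := Ioo_mem_nhdsGT one_pos
  filter_upwards [l1.prod_mk (eventually_ge_atTop (1:ℝ))] with p hp
  rw [intervalIntegral.integral_of_le (by linarith [hp.1.2, hp.2]), Measure.restrict_restrict measurableSet_Ioc,
    inter_eq_left.2]
  intro x hx
  exact hp.1.1.trans hx.1
end

section
/- Let k ≥ 1 be an integer and let U : ℝ → ℝ be a fixed smooth function compactly supported in [1,2]. Then there is a constant C, depending only on k and U, such that for all a > 0 and X > 1 with a²X > 1, |I_k(a,a;X) − (1+i)·i^{k−1}·Ũ(3/4)·X/(4π·(a²X)^{1/4})| ≤ C·X/(a²X)^{3/4}. -/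
/-- The Bessel function of the first kind of integer order `m`:
`J_m(x) = Σ_{n≥0} (−1)^n (x/2)^{m+2n} / (n! (m+n)!)`. -/
noncomputable def besselJ (m : ℕ) (x : ℝ) : ℝ :=
  ∑' n : ℕ, (-1 : ℝ) ^ n * (x / 2) ^ (m + 2 * n) / ((n.factorial : ℝ) * ((m + n).factorial : ℝ))

/-- The Bessel integral `I_k(a,b;X) = ∫_0^∞ U(x/X) e(2a√x) J_{k−1}(4πb√x) dx`. -/
noncomputable def Ik (U : ℝ → ℝ) (k : ℕ) (a b X : ℝ) : ℂ :=
  ∫ x in Set.Ioi (0 : ℝ),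
    (U (x / X) : ℂ) * e (2 * a * Real.sqrt x) *
      (besselJ (k - 1) (4 * Real.pi * b * Real.sqrt x) : ℂ)

/-- The Mellin transform `Ũ(s) = ∫_0^∞ U(x) x^{s−1} dx` (for real `s`). -/
noncomputable def mellinU (U : ℝ → ℝ) (s : ℝ) : ℝ :=
  ∫ x in Set.Ioi (0 : ℝ), U x * x ^ (s - 1)

lemma bj_summable (m : ℕ) (x : ℝ) : Summable (fun n : ℕ =>
    (-1 : ℝ) ^ n * (x / 2) ^ (m + 2 * n) / ((n.factorial : ℝ) * ((m + n).factorial : ℝ))) := by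
  have h := (Real.summable_pow_div_factorial ((x/2)^2)).mul_left (|x/2|^m)
  refine Summable.of_norm_bounded h ?_
  intro n
  rw [norm_div, norm_mul, norm_pow, norm_pow, norm_neg, norm_one, one_pow, one_mul, norm_mul,
    pow_add, pow_mul, Real.norm_eq_abs, mul_div_assoc, sq_abs]
  gcongr
  have h1 : (1:ℝ) ≤ (m+n).factorial := by exact_mod_cast Nat.succ_le_of_lt (Nat.factorial_pos _)
  have h2 : (0:ℝ) < n.factorial := by exact_mod_cast (Nat.factorial_pos _)
  rw [Real.norm_eq_abs, Real.norm_eq_abs, abs_of_pos h2, abs_of_pos (by linarith)]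
  nlinarith

lemma bj_hasSum (m : ℕ) (x : ℝ) : HasSum (fun n : ℕ =>
    (-1 : ℝ) ^ n * (x / 2) ^ (m + 2 * n) / ((n.factorial : ℝ) * ((m + n).factorial : ℝ)))
    (besselJ m x) := (bj_summable m x).hasSum

lemma bj_rec (m : ℕ) (x : ℝ) (hx : x ≠ 0) :
    besselJ (m+2) x = 2 * (m+1) / x * besselJ (m+1) x - besselJ m x := by
  have h := ((bj_hasSum (m+1) x).mul_left (2 * (m+1) / x)).sub (bj_hasSum m x)
  rw [← hasSum_nat_add_iff' 1] at h
  have h2 := bj_hasSum (m+2) x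
  refine HasSum.unique h2 ?_
  convert! h using 1
  · funext n
    have e1 : m + 1 + (n + 1) = m + n + 1 + 1 := by ring
    have e2 : m + (n+1) = m + n + 1 := by ring
    have e3 : m + 2 + n = m + n + 1 + 1 := by ring
    rw [e1, e2, e3]
    simp only [Nat.factorial_succ]
    push_cast
    have h2 : (n.factorial:ℝ) ≠ 0 := by exact_mod_cast (Nat.factorial_ne_zero _)
    have h3 : ((m+n).factorial:ℝ) ≠ 0 := by exact_mod_cast (Nat.factorial_ne_zero _)
    have h4 : ((m:ℝ)+n+1) ≠ 0 := by positivity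
    have h5 : ((m:ℝ)+n+1+1) ≠ 0 := by positivity
    have h6 : ((n:ℝ)+1) ≠ 0 := by positivity
    have p1 : (x/2)^(m+1+2*(n+1)) = (x/2) * (x/2)^(m+2+2*n) := by ring
    have p2 : (x/2)^(m+2*(n+1)) = (x/2)^(m+2+2*n) := by ring
    rw [p1, p2]
    field_simp
    ring
  · simp [Nat.factorial_succ]
    have h3 : (m.factorial:ℝ) ≠ 0 := by exact_mod_cast (Nat.factorial_ne_zero _)
    field_simp
    ring

lemma cos_even (n : ℕ) : ∫ x in (0:ℝ)..Real.pi, Real.cos x ^ (2*n) =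
    Real.pi * (2*n).factorial / (4^n * (n.factorial:ℝ)^2) := by
  induction n with
  | zero => simp
  | succ n ih =>
    have : 2*(n+1) = 2*n+2 := by ring
    rw [this, integral_cos_pow, ih]
    simp only [Nat.factorial_succ, Real.sin_pi, Real.sin_zero]
    push_cast
    have h2 : (n.factorial:ℝ) ≠ 0 := by exact_mod_cast (Nat.factorial_ne_zero _)
    have h6 : ((n:ℝ)+1) ≠ 0 := by positivity
    have h7 : (2*(n:ℝ)+2) ≠ 0 := by positivity
    field_simp
    ring

lemma cos_odd (n : ℕ) : ∫ x in (0:ℝ)..Real.pi, Real.cos x ^ (2*n+1) = 0 := by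
  induction n with
  | zero => simp
  | succ n ih =>
    have : 2*(n+1)+1 = (2*n+1)+2 := by ring
    rw [this, integral_cos_pow, ih]
    simp

open Complex in
lemma bj01_hasSum (z : ℝ) : (besselJ 0 z : ℂ) + I * besselJ 1 z =
    (1 / Real.pi) * ∫ x in (0:ℝ)..Real.pi, (1 + Real.cos x) * cexp (I * z * Real.cos x) := by
  have hpi : (Real.pi : ℂ) ≠ 0 := by exact_mod_cast Real.pi_ne_zero
  have key : HasSum (fun n : ℕ => ∫ x in (0:ℝ)..Real.pi,
      (1 + (Real.cos x : ℂ)) * ((n.factorial : ℂ)⁻¹ * (I * z * Real.cos x)^n))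
      (∫ x in (0:ℝ)..Real.pi, (1 + (Real.cos x : ℂ)) * cexp (I * z * Real.cos x)) := by
    refine intervalIntegral.hasSum_integral_of_dominated_convergence
      (fun n _ => 2 * (|z|^n / n.factorial)) ?_ ?_ ?_ ?_ ?_
    · intro n
      exact Continuous.aestronglyMeasurable (by fun_prop)
    · intro n
      refine Filter.Eventually.of_forall fun x _ => ?_
      rw [norm_mul, norm_mul, norm_pow, norm_mul, norm_mul, norm_I, one_mul, norm_real, norm_real,
        norm_inv, Complex.norm_natCast]
      have a1 : ‖(1 + (Real.cos x : ℂ))‖ ≤ 2 := by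
        refine (norm_add_le _ _).trans ?_
        rw [norm_real, norm_one, Real.norm_eq_abs]
        linarith [Real.abs_cos_le_one x]
      have a2 : (‖z‖ * ‖Real.cos x‖)^n ≤ |z|^n := by
        gcongr
        simpa using mul_le_mul_of_nonneg_left (Real.abs_cos_le_one x) (abs_nonneg z)
      rw [div_eq_inv_mul]
      gcongr
    · refine Filter.Eventually.of_forall fun x _ => ?_
      exact (Real.summable_pow_div_factorial _).mul_left 2
    · exact intervalIntegrable_const
    · refine Filter.Eventually.of_forall fun x _ => ?_
      refine HasSum.mul_left _ ?_
      have := NormedSpace.expSeries_div_hasSum_exp (I * z * Real.cos x)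
      rw [← Complex.exp_eq_exp_ℂ] at this
      convert! this using 1
      funext n
      rw [div_eq_inv_mul]
  have hM : ∀ n : ℕ, ∫ x in (0:ℝ)..Real.pi,
      (1 + (Real.cos x : ℂ)) * ((n.factorial : ℂ)⁻¹ * (I * z * Real.cos x)^n) =
      (n.factorial : ℂ)⁻¹ * (I * z)^n * (((∫ x in (0:ℝ)..Real.pi, Real.cos x ^ n) +
        (∫ x in (0:ℝ)..Real.pi, Real.cos x ^ (n+1)) : ℝ) : ℂ) := by
    intro n
    rw [← intervalIntegral.integral_add, ← intervalIntegral.integral_ofReal,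
      ← intervalIntegral.integral_const_mul]
    · refine intervalIntegral.integral_congr fun x _ => ?_
      push_cast
      ring
    · exact Continuous.intervalIntegrable (by fun_prop) _ _
    · exact Continuous.intervalIntegrable (by fun_prop) _ _
  simp_rw [hM] at key
  have h0 : HasSum (fun n : ℕ => (Real.pi : ℂ) * (((-1 : ℝ) ^ n * (z / 2) ^ (0 + 2 * n) / ((n.factorial : ℝ) * ((0 + n).factorial : ℝ)) : ℝ) : ℂ)) (Real.pi * besselJ 0 z) :=
    (Complex.hasSum_ofReal.mpr (bj_hasSum 0 z)).mul_left _
  have h1 : HasSum (fun n : ℕ => (Real.pi * I : ℂ) * (((-1 : ℝ) ^ n * (z / 2) ^ (1 + 2 * n) / ((n.factorial : ℝ) * ((1 + n).factorial : ℝ)) : ℝ) : ℂ)) (Real.pi * I * besselJ 1 z) :=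
    (Complex.hasSum_ofReal.mpr (bj_hasSum 1 z)).mul_left _
  have hI : ∀ n : ℕ, (I * z)^(2*n) = (-1)^n * (z:ℂ)^(2*n) := by
    intro n; rw [mul_pow, pow_mul I, I_sq]
  have h := key.unique (HasSum.even_add_odd (M := ℂ) (f := fun n : ℕ => (n.factorial : ℂ)⁻¹ * (I * z)^n * (((∫ x in (0:ℝ)..Real.pi, Real.cos x ^ n) +
        (∫ x in (0:ℝ)..Real.pi, Real.cos x ^ (n+1)) : ℝ) : ℂ)) (m := (Real.pi * besselJ 0 z : ℂ))
        (m' := (Real.pi * I * besselJ 1 z : ℂ)) ?_ ?_)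
  · rw [h]
    field_simp
  · convert! h0 using 1
    funext n
    rw [cos_even, cos_odd, hI]
    push_cast
    have h2 : (n.factorial:ℂ) ≠ 0 := by exact_mod_cast (Nat.factorial_ne_zero _)
    have h3 : ((2*n).factorial:ℂ) ≠ 0 := by exact_mod_cast (Nat.factorial_ne_zero _)
    rw [zero_add, zero_add, div_pow, pow_mul 2]
    field_simp
    norm_num
    ring
  · convert! h1 using 1
    funext n
    rw [show 2*n+1+1 = 2*(n+1) by ring, cos_even, cos_odd, pow_succ, hI,
      show 2*(n+1) = 2*n+1+1 by ring, show 1+n = n+1 by ring]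
    simp only [Nat.factorial_succ]
    push_cast
    have h2 : (n.factorial:ℂ) ≠ 0 := by exact_mod_cast (Nat.factorial_ne_zero _)
    have h3 : ((2*n).factorial:ℂ) ≠ 0 := by exact_mod_cast (Nat.factorial_ne_zero _)
    have h6 : ((n:ℂ)+1) ≠ 0 := by exact_mod_cast Nat.succ_ne_zero n
    have h7 : (2*(n:ℂ)+1) ≠ 0 := by exact_mod_cast Nat.succ_ne_zero (2*n)
    rw [div_pow, pow_add 2, pow_mul 2, pow_add (z:ℂ)]
    field_simp
    norm_num
    ring

open Complex Set MeasureTheory Filter Topology in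
lemma fres1 (w : ℂ) (hw : 0 < w.re) :
    ‖(∫ s in (0:ℝ)..1, cexp (-w * (s:ℂ)^2)) - (Real.pi / w) ^ (1/2 : ℂ) / 2 + cexp (-w) / (2*w)‖
      ≤ 1 / ‖w‖^2 := by
  have hw0 : w ≠ 0 := by rintro rfl; simp at hw
  have hint : Integrable (fun s : ℝ => cexp (-w * (s:ℂ)^2)) := integrable_cexp_neg_mul_sq hw
  have hE : ∀ s : ℝ, ‖cexp (-w * (s:ℂ)^2)‖ ≤ 1 := by
    intro s
    rw [Complex.norm_exp, Real.exp_le_one_iff, ← ofReal_pow, mul_comm, re_ofReal_mul, neg_re]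
    nlinarith [sq_nonneg s]
  have hsplit : (∫ s in (0:ℝ)..1, cexp (-w * (s:ℂ)^2)) =
      (Real.pi / w) ^ (1/2 : ℂ) / 2 - ∫ s in Ioi (1:ℝ), cexp (-w * (s:ℂ)^2) := by
    rw [← integral_gaussian_complex_Ioi hw]
    exact eq_sub_of_add_eq (intervalIntegral.integral_interval_add_Ioi hint.integrableOn hint.integrableOn)
  have hrp : IntegrableOn (fun s : ℝ => s ^ (-4:ℝ)) (Ioi 1) :=
    integrableOn_Ioi_rpow_of_lt (by norm_num) one_pos
  set R : ℝ → ℂ := fun s => 3 / (4 * w^2) * (cexp (-w * (s:ℂ)^2) * ((s ^ (-4:ℝ) : ℝ):ℂ)) with hR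
  have hRb : ∀ s ∈ Ioi (1:ℝ), ‖R s‖ ≤ 3 / (4 * ‖w‖^2) * s ^ (-4:ℝ) := by
    intro s hs
    have hs0 : (0:ℝ) < s := lt_trans one_pos hs
    have : (0:ℝ) ≤ s ^ (-4:ℝ) := Real.rpow_nonneg hs0.le _
    rw [hR]
    simp only [norm_mul, norm_div, norm_pow, norm_real, Real.norm_eq_abs, abs_of_nonneg this]
    norm_num
    gcongr
    simpa using mul_le_mul_of_nonneg_right (hE s) this
  have hRint : IntegrableOn R (Ioi 1) := by
    refine Integrable.mono' (hrp.const_mul (3 / (4 * ‖w‖^2))) ?_ ?_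
    · exact Measurable.aestronglyMeasurable (by fun_prop)
    · exact (ae_restrict_iff' measurableSet_Ioi).mpr (Eventually.of_forall hRb)
  have hRn : ‖∫ s in Ioi (1:ℝ), R s‖ ≤ 1 / (4 * ‖w‖^2) := by
    refine (norm_integral_le_of_norm_le (hrp.const_mul (3 / (4 * ‖w‖^2)))
      ((ae_restrict_iff' measurableSet_Ioi).mpr (Eventually.of_forall hRb))).trans ?_
    rw [integral_const_mul, integral_Ioi_rpow_of_lt (by norm_num) one_pos]
    apply le_of_eq
    norm_num
  set P : ℝ → ℂ := fun s => cexp (-w * (s:ℂ)^2) * (-1 / (2*w*s) + 1 / (4 * w^2 * (s:ℂ)^3)) with hP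
  have hderiv : ∀ s ∈ Ici (1:ℝ), HasDerivAt P (cexp (-w * (s:ℂ)^2) - R s) s := by
    intro s hs
    have hs0 : (0:ℝ) < s := lt_of_lt_of_le one_pos hs
    have hsc : (s:ℂ) ≠ 0 := by exact_mod_cast hs0.ne'
    have hid : HasDerivAt (fun s : ℝ => (s:ℂ)) 1 s := Complex.ofRealCLM.hasDerivAt
    have h1 : HasDerivAt (fun s : ℝ => cexp (-w * (s:ℂ)^2)) _ s := ((hid.pow 2).const_mul (-w)).cexp
    have h2 : HasDerivAt (fun s : ℝ => (-1:ℂ) / (2*w*s)) _ s :=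
      (hasDerivAt_const s (-1:ℂ)).div (hid.const_mul (2*w)) (by simp [hw0, hsc])
    have h3 : HasDerivAt (fun s : ℝ => (1:ℂ) / (4*w^2*(s:ℂ)^3)) _ s :=
      (hasDerivAt_const s (1:ℂ)).div ((hid.pow 3).const_mul (4*w^2)) (by simp [hw0, hsc])
    have h4 := h1.mul (h2.add h3)
    convert! h4 using 1
    change _ - 3 / (4 * w^2) * (cexp (-w * (s:ℂ)^2) * ((s ^ (-4:ℝ) : ℝ):ℂ)) =
      cexp (-w * (s:ℂ)^2) * _ * (-1 / (2*w*s) + 1 / (4 * w^2 * (s:ℂ)^3)) + _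
    rw [show ((s ^ (-4:ℝ) : ℝ):ℂ) = 1 / (s:ℂ)^4 by
      rw [Real.rpow_neg hs0.le, one_div]; norm_cast]
    field_simp
    push_cast
    ring
  have hlim : Tendsto P atTop (𝓝 0) := by
    have hb : Tendsto (fun s : ℝ => (1 / (2*‖w‖) + 1/(4 * ‖w‖^2)) * s⁻¹) atTop (𝓝 0) := by
      have := (tendsto_inv_atTop_zero (𝕜 := ℝ)).const_mul (1 / (2*‖w‖) + 1/(4 * ‖w‖^2))
      rwa [mul_zero] at this
    refine squeeze_zero_norm' ?_ hb
    filter_upwards [eventually_ge_atTop 1] with s hs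
    have hs0 : (0:ℝ) < s := lt_of_lt_of_le one_pos hs
    have hwp : 0 < ‖w‖ := norm_pos_iff.mpr hw0
    rw [hP]
    simp only [norm_mul]
    refine (mul_le_of_le_one_left (norm_nonneg _) (hE s)).trans ((norm_add_le _ _).trans ?_)
    simp only [norm_div, norm_mul, norm_neg, norm_one, norm_pow, norm_real, Real.norm_eq_abs, abs_of_pos hs0]
    norm_num
    have : (s^3)⁻¹ ≤ s⁻¹ := by
      apply inv_anti₀ hs0
      nlinarith [mul_self_nonneg (s-1), mul_self_nonneg s]
    have h5 : 0 ≤ (‖w‖^2)⁻¹ := by positivity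
    have := mul_le_mul_of_nonneg_right this h5
    ring_nf at this ⊢
    nlinarith
  have hF := integral_Ioi_of_hasDerivAt_of_tendsto' hderiv (hint.integrableOn.sub hRint) hlim
  rw [integral_sub hint.integrableOn hRint] at hF
  have hT : ∫ s in Ioi (1:ℝ), cexp (-w * (s:ℂ)^2) = (∫ s in Ioi (1:ℝ), R s) - P 1 := by
    linear_combination hF
  have e1 : (∫ s in (0:ℝ)..1, cexp (-w * (s:ℂ)^2)) - (Real.pi / w) ^ (1/2 : ℂ) / 2 + cexp (-w) / (2*w)
      = cexp (-w * ((1:ℝ):ℂ)^2) / (4*w^2) - ∫ s in Ioi (1:ℝ), R s := by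
    rw [hsplit, hT, hP]
    simp
    field_simp
    ring
  rw [e1]
  refine (norm_sub_le _ _).trans ?_
  have e2 : ‖cexp (-w * ((1:ℝ):ℂ)^2) / (4*w^2)‖ ≤ 1 / (4 * ‖w‖^2) := by
    rw [norm_div, norm_mul, norm_pow]
    norm_num only [RCLike.norm_ofNat]
    gcongr
    exact hE 1
  have : 1 / (4 * ‖w‖^2) + 1 / (4 * ‖w‖^2) ≤ 1 / ‖w‖^2 := by
    have hwp : 0 < ‖w‖ := norm_pos_iff.mpr hw0
    rw [← add_div, div_le_div_iff₀ (by positivity) (by positivity)]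
    nlinarith [sq_nonneg ‖w‖]
  linarith

open Complex Set MeasureTheory Filter Topology in
lemma fres2 (w : ℂ) (hw : 0 ≤ w.re) (hw0 : w ≠ 0) :
    ‖(∫ s in (0:ℝ)..1, cexp (-w * (s:ℂ)^2)) - (Real.pi / w) ^ (1/2 : ℂ) / 2 + cexp (-w) / (2*w)‖
      ≤ 1 / ‖w‖^2 := by
  have hc1 : Continuous (fun v : ℂ => ∫ s in (0:ℝ)..1, cexp (-v * (s:ℂ)^2)) :=
    intervalIntegral.continuous_parametric_intervalIntegral_of_continuous' (by fun_prop) 0 1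
  have hslit : (Real.pi / w : ℂ) ∈ slitPlane := by
    have hn : 0 < normSq w := normSq_pos.mpr hw0
    rw [mem_slitPlane_iff]
    rcases hw.lt_or_eq with h | h
    · left
      rw [div_re]
      simp
      positivity
    · right
      rw [div_im]
      have : w.im ≠ 0 := fun h' => hw0 (Complex.ext h.symm h')
      simp [this, hw0, Real.pi_ne_zero]
  have hcw : Tendsto (fun t : ℝ => w + t) (𝓝[>] 0) (𝓝 w) := by
    have : Continuous (fun t : ℝ => w + t) := by fun_prop
    have h := this.tendsto 0
    simp at h
    exact h.mono_left nhdsWithin_le_nhds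
  have hL : ContinuousAt (fun v : ℂ => ‖(∫ s in (0:ℝ)..1, cexp (-v * (s:ℂ)^2)) - (Real.pi / v) ^ (1/2 : ℂ) / 2 + cexp (-v) / (2*v)‖) w := by
    apply ContinuousAt.norm
    apply ContinuousAt.add
    · apply ContinuousAt.sub hc1.continuousAt
      apply ContinuousAt.div_const
      exact ContinuousAt.cpow (continuousAt_const.div continuousAt_id hw0) continuousAt_const hslit
    · apply ContinuousAt.div (by fun_prop) (by fun_prop) (by simp [hw0])
  have hRr : ContinuousAt (fun v : ℂ => 1 / ‖v‖^2) w := by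
    apply ContinuousAt.div (by fun_prop) (by fun_prop) (by simp [hw0])
  refine le_of_tendsto_of_tendsto (hL.tendsto.comp hcw) (hRr.tendsto.comp hcw) ?_
  filter_upwards [self_mem_nhdsWithin] with t ht
  exact fres1 (w + t) (by simp; linarith [show (0:ℝ) < t from ht])

open Complex in
lemma fres3 (z : ℝ) (hz : 0 < z) :
    ‖(∫ s in (0:ℝ)..1, cexp (-(2 * I * z) * (s:ℂ)^2)) - (1 - I) / 4 * (Real.sqrt (Real.pi / z) : ℝ)
      + cexp (-(2 * I * z)) / (4 * I * z)‖ ≤ 1 / z^2 := by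
  have h := fres2 (2 * I * z) (by simp) (by simp [hz.ne'])
  have hzc : (z:ℂ) ≠ 0 := by exact_mod_cast hz.ne'
  have hsq : (Real.pi / (2 * I * z) : ℂ) = ((1 - I) / 2 * (Real.sqrt (Real.pi / z) : ℝ))^2 := by
    rw [mul_pow, ← ofReal_pow, Real.sq_sqrt (by positivity)]
    push_cast
    field_simp
    ring_nf
    simp [I_sq, I_pow_three]
  have hsr : (Real.pi / (2 * I * z) : ℂ) ^ (1/2 : ℂ) = (1 - I) / 2 * (Real.sqrt (Real.pi / z) : ℝ) := by
    rw [hsq, one_div, Complex.sq_cpow_two_inv]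
    rw [mul_comm, re_ofReal_mul]
    have : 0 < Real.sqrt (Real.pi / z) := Real.sqrt_pos.mpr (by positivity)
    simp
    positivity
  rw [hsr] at h
  have e : ∀ A B : ℂ, A - (1 - I) / 4 * (Real.sqrt (Real.pi / z) : ℝ) + B / (4 * I * z) =
     A - (1 - I) / 2 * (Real.sqrt (Real.pi / z) : ℝ) / 2 + B / (2 * (2 * I * z)) := by
    intro A B; ring
  rw [e]
  refine h.trans ?_
  simp [abs_of_pos hz, mul_pow]
  have : 0 < (z^2)⁻¹ := by positivity
  nlinarith

open Complex in
lemma fresB (w : ℂ) (hw : w.re = 0) (z : ℝ) (hz : 1 ≤ z) (hwz : ‖w‖ = 2 * z) :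
    ‖∫ s in (0:ℝ)..1, cexp (-w * (s:ℂ)^2)‖ ≤ 3 / Real.sqrt z := by
  have hw0 : w ≠ 0 := by rw [← norm_pos_iff, hwz]; linarith
  have h := fres2 w hw.ge hw0
  set A := ∫ s in (0:ℝ)..1, cexp (-w * (s:ℂ)^2)
  have e1 : A = (A - (Real.pi / w) ^ (1/2 : ℂ) / 2 + cexp (-w) / (2*w)) + (Real.pi / w) ^ (1/2 : ℂ) / 2
    - cexp (-w) / (2*w) := by ring
  rw [e1]
  refine (norm_sub_le _ _).trans ((add_le_add_left (norm_add_le _ _) _).trans ?_)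
  have hz0 : 0 < z := by linarith
  have hs1 : 1 ≤ Real.sqrt z := Real.one_le_sqrt.mpr hz
  have hss : Real.sqrt z * Real.sqrt z = z := Real.mul_self_sqrt hz0.le
  have e2 : ‖(Real.pi / w) ^ (1/2 : ℂ) / 2‖ ≤ 1 / Real.sqrt z := by
    have : ((1/2 : ℂ)) = (((1/2:ℝ)):ℂ) := by push_cast; rfl
    rw [norm_div, this, Complex.norm_cpow_real, norm_div, hwz, norm_real, ← Real.sqrt_eq_rpow,
      Real.norm_eq_abs, abs_of_pos Real.pi_pos]
    norm_num only [RCLike.norm_ofNat]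
    rw [div_le_div_iff₀ (by norm_num) (by positivity), ← Real.sqrt_mul (by positivity)]
    refine Real.sqrt_le_iff.mpr ⟨by norm_num, ?_⟩
    have : Real.pi / (2 * z) * z = Real.pi / 2 := by field_simp
    rw [this]; linarith [Real.pi_lt_four]
  have e3 : ‖cexp (-w) / (2*w)‖ ≤ 1 / Real.sqrt z := by
    rw [norm_div, Complex.norm_exp, neg_re, hw, neg_zero, Real.exp_zero, norm_mul, hwz]
    norm_num only [RCLike.norm_ofNat]
    apply one_div_le_one_div_of_le (by positivity)
    nlinarith
  have e4 : 1 / ‖w‖^2 ≤ 1 / Real.sqrt z := by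
    rw [hwz]
    apply one_div_le_one_div_of_le (by positivity)
    nlinarith
  have : 3 / Real.sqrt z = 1 / Real.sqrt z + 1 / Real.sqrt z + 1 / Real.sqrt z := by ring
  linarith

noncomputable def EE (z φ : ℝ) : ℂ := Complex.exp (-(2 * Complex.I * z) * (Real.sin φ : ℂ)^2)

lemma EE_cont (z : ℝ) : Continuous (EE z) := by unfold EE; fun_prop

lemma EE_norm (z φ : ℝ) : ‖EE z φ‖ = 1 := by
  unfold EE
  rw [show (-(2 * Complex.I * z) * (Real.sin φ : ℂ)^2) = ((-2 * z * Real.sin φ ^2 : ℝ) : ℂ) * Complex.I by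
    push_cast; ring]
  exact Complex.norm_exp_ofReal_mul_I _

open Complex in
lemma int_cos (z : ℝ) : ∫ φ in (0:ℝ)..(Real.pi/2), (Real.cos φ : ℂ) * EE z φ =
    ∫ s in (0:ℝ)..1, cexp (-(2 * I * z) * (s:ℂ)^2) := by
  have h := intervalIntegral.integral_deriv_smul_comp (a := 0) (b := Real.pi/2) (f := Real.sin)
    (f' := Real.cos) (g := fun s : ℝ => cexp (-(2 * I * z) * (s:ℂ)^2))
    (fun x _ => Real.hasDerivAt_sin x) Real.continuous_cos.continuousOn (by fun_prop)
  rw [Real.sin_zero, Real.sin_pi_div_two] at h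
  rw [← h]
  refine intervalIntegral.integral_congr fun x _ => ?_
  simp [EE]

open Complex in
lemma int_sin (z : ℝ) : ∫ φ in (0:ℝ)..(Real.pi/2), (Real.sin φ : ℂ) * EE z φ =
    cexp (-(2 * I * z)) * ∫ s in (0:ℝ)..1, cexp (-(-(2 * I * z)) * (s:ℂ)^2) := by
  have h := intervalIntegral.integral_deriv_smul_comp (a := 0) (b := Real.pi/2) (f := Real.cos)
    (f' := fun x => - Real.sin x) (g := fun s : ℝ => cexp (-(-(2 * I * z)) * (s:ℂ)^2))
    (fun x _ => Real.hasDerivAt_cos x) (by fun_prop) (by fun_prop)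
  rw [Real.cos_zero, Real.cos_pi_div_two, intervalIntegral.integral_symm 0 1, eq_comm, neg_eq_iff_eq_neg] at h
  rw [h, ← intervalIntegral.integral_neg, ← intervalIntegral.integral_const_mul]
  refine intervalIntegral.integral_congr fun x _ => ?_
  simp only [EE, Function.comp, neg_smul, neg_neg, real_smul]
  rw [mul_left_comm, ← Complex.exp_add]
  congr 2
  have := Real.sin_sq x
  have : (Real.sin x : ℂ)^2 = 1 - (Real.cos x : ℂ)^2 := by exact_mod_cast this
  rw [this]; ring

open Complex in
lemma parts (Q Q' : ℝ → ℝ) (hd : ∀ φ ∈ Set.Icc 0 (Real.pi/2), HasDerivAt Q (Q' φ) φ)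
    (hc : ContinuousOn Q' (Set.Icc 0 (Real.pi/2))) (z : ℝ) (hz : 0 < z) :
    ∫ φ in (0:ℝ)..(Real.pi/2), ((Q φ * (Real.sin φ * Real.cos φ) : ℝ) : ℂ) * EE z φ =
     - (Q (Real.pi/2) * cexp (-(2 * I * z)) - Q 0) / (4 * I * z) +
      (1 / (4 * I * z)) * ∫ φ in (0:ℝ)..(Real.pi/2), (Q' φ : ℂ) * EE z φ := by
  have hp : (0:ℝ) ≤ Real.pi/2 := by positivity
  have hzc : (z:ℂ) ≠ 0 := by exact_mod_cast hz.ne'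
  have hv : ∀ φ ∈ Set.uIcc 0 (Real.pi/2), HasDerivAt (EE z)
      (-(4 * I * z) * ((Real.sin φ * Real.cos φ : ℝ):ℂ) * EE z φ) φ := by
    intro φ _
    have h1 : HasDerivAt (fun φ : ℝ => (Real.sin φ : ℂ)) ((Real.cos φ : ℝ) : ℂ) φ :=
      (Real.hasDerivAt_sin φ).ofReal_comp
    have h2 := ((h1.pow 2).const_mul (-(2 * I * z))).cexp
    unfold EE
    convert! h2 using 1
    simp
    ring
  have hu : ∀ φ ∈ Set.uIcc 0 (Real.pi/2), HasDerivAt (fun φ => (Q φ : ℂ)) ((Q' φ : ℂ)) φ := by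
    intro φ h
    rw [Set.uIcc_of_le hp] at h
    exact (hd φ h).ofReal_comp
  have h := intervalIntegral.integral_mul_deriv_eq_deriv_mul hu hv
    (by
      apply ContinuousOn.intervalIntegrable
      rw [Set.uIcc_of_le hp]
      exact Complex.continuous_ofReal.comp_continuousOn hc)
    (by
      apply Continuous.intervalIntegrable
      have := EE_cont z
      fun_prop)
  have e1 : ∫ φ in (0:ℝ)..(Real.pi/2), ((Q φ * (Real.sin φ * Real.cos φ) : ℝ) : ℂ) * EE z φ =
     (-1 / (4 * I * z)) * ∫ φ in (0:ℝ)..(Real.pi/2), (Q φ : ℂ) * (-(4 * I * z) * ((Real.sin φ * Real.cos φ : ℝ):ℂ) * EE z φ) := by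
    rw [← intervalIntegral.integral_const_mul]
    refine intervalIntegral.integral_congr fun x _ => ?_
    push_cast
    field_simp
  rw [e1, h]
  have e2 : EE z (Real.pi/2) = cexp (-(2 * I * z)) := by simp [EE]
  have e3 : EE z 0 = 1 := by simp [EE]
  rw [e2, e3]
  ring

open Complex in
lemma parts_bd (Q Q' : ℝ → ℝ) (hd : ∀ φ ∈ Set.Icc 0 (Real.pi/2), HasDerivAt Q (Q' φ) φ)
    (hc : ContinuousOn Q' (Set.Icc 0 (Real.pi/2))) : ∃ C : ℝ, 0 ≤ C ∧ ∀ z : ℝ, 1 ≤ z →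
    ‖∫ φ in (0:ℝ)..(Real.pi/2), ((Q φ * (Real.sin φ * Real.cos φ) : ℝ) : ℂ) * EE z φ‖ ≤ C / z := by
  have hp : (0:ℝ) ≤ Real.pi/2 := by positivity
  obtain ⟨M, hM⟩ := isCompact_Icc.exists_bound_of_continuousOn hc
  have hM0 : 0 ≤ M := (norm_nonneg _).trans (hM 0 ⟨le_rfl, hp⟩)
  refine ⟨|Q (Real.pi/2)| + |Q 0| + M * (Real.pi / 2), by positivity, fun z hz => ?_⟩
  have hz0 : 0 < z := by linarith
  rw [parts Q Q' hd hc z hz0]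
  have hI : ‖∫ φ in (0:ℝ)..(Real.pi/2), (Q' φ : ℂ) * EE z φ‖ ≤ M * (Real.pi/2) := by
    have := intervalIntegral.norm_integral_le_of_norm_le_const (a := 0) (b := Real.pi/2) (C := M)
      (f := fun φ => (Q' φ : ℂ) * EE z φ) (by
        intro x hx
        rw [Set.uIoc_of_le hp] at hx
        rw [norm_mul, EE_norm, mul_one, norm_real]
        exact hM x ⟨hx.1.le, hx.2⟩)
    rwa [sub_zero, abs_of_nonneg hp] at this
  have hn : ‖(4 * I * z : ℂ)‖ = 4 * z := by simp [abs_of_pos hz0]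
  have he : ‖cexp (-(2 * I * z))‖ = 1 := by
    rw [show (-(2 * I * z) : ℂ) = ((-2*z : ℝ) : ℂ) * I by push_cast; ring]
    exact norm_exp_ofReal_mul_I _
  have h1 : ‖- (Q (Real.pi/2) * cexp (-(2 * I * z)) - Q 0) / (4 * I * z)‖ ≤ (|Q (Real.pi/2)| + |Q 0|) / z := by
    rw [norm_div, norm_neg, hn]
    have : ‖(Q (Real.pi/2) * cexp (-(2 * I * z)) - Q 0)‖ ≤ |Q (Real.pi/2)| + |Q 0| := by
      refine (norm_sub_le _ _).trans ?_
      rw [norm_mul, he, mul_one, norm_real, norm_real]; rfl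
    gcongr
    linarith
  refine (norm_add_le _ _).trans ?_
  rw [norm_mul (1 / (4 * I * z)), norm_div 1, hn, norm_one, add_div]
  refine add_le_add h1 ?_
  rw [one_div_mul_eq_div]
  gcongr
  linarith

open Complex in
/-- bound for the second level -/
lemma lev2 : ∃ C : ℝ, 0 ≤ C ∧ ∀ z : ℝ, 1 ≤ z →
    ‖∫ φ in (0:ℝ)..(Real.pi/2), ((1 / (1 + Real.cos φ) : ℝ) : ℂ) * EE z φ‖ ≤ C / Real.sqrt z := by
  have hc0 : ∀ φ ∈ Set.Icc 0 (Real.pi/2), 0 ≤ Real.cos φ := fun φ h =>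
    Real.cos_nonneg_of_mem_Icc ⟨by linarith [h.1, Real.pi_pos], h.2⟩
  have hs0 : ∀ φ ∈ Set.Icc 0 (Real.pi/2), 0 ≤ Real.sin φ := fun φ h =>
    Real.sin_nonneg_of_mem_Icc ⟨h.1, by linarith [h.2, Real.pi_pos]⟩
  have hp : (0:ℝ) ≤ Real.pi/2 := by positivity
  obtain ⟨C, hC0, hC⟩ := parts_bd
    (fun φ => Real.sin φ / 2 * (1 / (1 + Real.cos φ))^2 - 1 / (1 + Real.cos φ)
      - 2 * (1 / (1 + Real.cos φ)) * (1 / (1 + Real.cos φ + Real.sin φ)))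
    (fun φ => Real.cos φ / 2 * (1 / (1 + Real.cos φ))^2 + (Real.sin φ)^2 * (1 / (1 + Real.cos φ))^3
      - Real.sin φ * (1 / (1 + Real.cos φ))^2
      - 2 * (Real.sin φ * (1 / (1 + Real.cos φ))^2 * (1 / (1 + Real.cos φ + Real.sin φ))
      + (1 / (1 + Real.cos φ)) * (Real.sin φ - Real.cos φ) * (1 / (1 + Real.cos φ + Real.sin φ))^2))
    (by
      intro φ h
      have h1 : 1 + Real.cos φ ≠ 0 := by linarith [hc0 φ h]
      have h2 : 1 + Real.cos φ + Real.sin φ ≠ 0 := by linarith [hc0 φ h, hs0 φ h]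
      have ds := Real.hasDerivAt_sin φ
      have dc := Real.hasDerivAt_cos φ
      have dA : HasDerivAt (fun φ => 1 / (1 + Real.cos φ)) (Real.sin φ * (1 / (1 + Real.cos φ))^2) φ := by
        convert! (hasDerivAt_const φ (1:ℝ)).div (dc.const_add 1) h1 using 1
        field_simp; ring
      have dB : HasDerivAt (fun φ => 1 / (1 + Real.cos φ + Real.sin φ)) ((Real.sin φ - Real.cos φ) * (1 / (1 + Real.cos φ + Real.sin φ))^2) φ := by
        convert! (hasDerivAt_const φ (1:ℝ)).div ((dc.const_add 1).add ds) h2 using 1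
        simp only [Pi.add_apply]
        field_simp; ring
      convert! (((ds.div_const 2).mul (dA.pow 2)).sub dA).sub ((dA.const_mul 2).mul dB) using 1
      simp only [Pi.pow_apply]
      ring)
    (by
      have c1 : ContinuousOn (fun φ => 1 / (1 + Real.cos φ)) (Set.Icc 0 (Real.pi/2)) := by
        apply ContinuousOn.div (by fun_prop) (by fun_prop)
        intro φ h; linarith [hc0 φ h]
      have c2 : ContinuousOn (fun φ => 1 / (1 + Real.cos φ + Real.sin φ)) (Set.Icc 0 (Real.pi/2)) := by
        apply ContinuousOn.div (by fun_prop) (by fun_prop)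
        intro φ h; linarith [hc0 φ h, hs0 φ h]
      fun_prop)
  refine ⟨3 + 3 + C, by positivity, fun z hz => ?_⟩
  have hz0 : 0 < z := by linarith
  have hC := hC z hz
  have hs1 : 1 ≤ Real.sqrt z := Real.one_le_sqrt.mpr hz
  have hss : Real.sqrt z * Real.sqrt z = z := Real.mul_self_sqrt hz0.le
  have b1 := fresB (2 * I * z) (by simp) z hz (by simp [abs_of_pos hz0])
  have b2 := fresB (-(2 * I * z)) (by simp) z hz (by simp [abs_of_pos hz0])
  rw [← int_cos] at b1
  have he : ‖cexp (-(2 * I * z))‖ = 1 := by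
    rw [show (-(2 * I * z) : ℂ) = ((-2*z : ℝ) : ℂ) * I by push_cast; ring]
    exact norm_exp_ofReal_mul_I _
  have b3 : ‖∫ φ in (0:ℝ)..(Real.pi/2), (Real.sin φ : ℂ) * EE z φ‖ ≤ 3 / Real.sqrt z := by
    rw [int_sin, norm_mul, he, one_mul]; exact b2
  set Q : ℝ → ℝ := fun φ => Real.sin φ / 2 * (1 / (1 + Real.cos φ))^2 - 1 / (1 + Real.cos φ)
      - 2 * (1 / (1 + Real.cos φ)) * (1 / (1 + Real.cos φ + Real.sin φ)) with hQ
  have c3 : ContinuousOn Q (Set.Icc 0 (Real.pi/2)) := by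
    have c1 : ContinuousOn (fun φ => 1 / (1 + Real.cos φ)) (Set.Icc 0 (Real.pi/2)) := by
      apply ContinuousOn.div (by fun_prop) (by fun_prop)
      intro φ h; linarith [hc0 φ h]
    have c2 : ContinuousOn (fun φ => 1 / (1 + Real.cos φ + Real.sin φ)) (Set.Icc 0 (Real.pi/2)) := by
      apply ContinuousOn.div (by fun_prop) (by fun_prop)
      intro φ h; linarith [hc0 φ h, hs0 φ h]
    fun_prop
  have hE := EE_cont z
  have key : ∫ φ in (0:ℝ)..(Real.pi/2), ((1 / (1 + Real.cos φ) : ℝ) : ℂ) * EE z φ =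
      (1/2) * (∫ φ in (0:ℝ)..(Real.pi/2), (Real.cos φ : ℂ) * EE z φ) +
      (∫ φ in (0:ℝ)..(Real.pi/2), (Real.sin φ : ℂ) * EE z φ) +
      ∫ φ in (0:ℝ)..(Real.pi/2), ((Q φ * (Real.sin φ * Real.cos φ) : ℝ) : ℂ) * EE z φ := by
    rw [← intervalIntegral.integral_const_mul, ← intervalIntegral.integral_add,
      ← intervalIntegral.integral_add]
    · refine intervalIntegral.integral_congr fun φ h => ?_
      rw [Set.uIcc_of_le hp] at h
      have h1 : 1 + Real.cos φ ≠ 0 := by linarith [hc0 φ h]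
      have h2 : 1 + Real.cos φ + Real.sin φ ≠ 0 := by linarith [hc0 φ h, hs0 φ h]
      have hsc := Real.sin_sq_add_cos_sq φ
      have : 1 / (1 + Real.cos φ) = Real.cos φ / 2 + Real.sin φ + Q φ * (Real.sin φ * Real.cos φ) := by
        simp only [hQ]
        generalize Real.sin φ = s at *
        generalize Real.cos φ = c at *
        field_simp
        linear_combination (-c*s - 2*(1+c)^2 + c*(1+c)) * hsc
      simp only [this]
      push_cast
      ring
    · exact Continuous.intervalIntegrable (by fun_prop) _ _
    · apply ContinuousOn.intervalIntegrable
      rw [Set.uIcc_of_le hp]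
      have : ContinuousOn (fun φ => (Q φ * (Real.sin φ * Real.cos φ))) (Set.Icc 0 (Real.pi/2)) := by fun_prop
      exact (Complex.continuous_ofReal.comp_continuousOn this).mul hE.continuousOn
    · exact Continuous.intervalIntegrable (by fun_prop) _ _
    · exact Continuous.intervalIntegrable (by fun_prop) _ _
  rw [key]
  refine (norm_add_le _ _).trans ((add_le_add_left (norm_add_le _ _) _).trans ?_)
  rw [norm_mul, add_div, add_div]
  refine add_le_add (add_le_add ?_ b3) (hC.trans ?_)
  · refine (mul_le_of_le_one_left (norm_nonneg _) ?_).trans b1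
    norm_num
  · gcongr
    nlinarith

noncomputable def WW (z : ℝ) : ℂ := ∫ φ in (0:ℝ)..(Real.pi/2), ((Real.cos φ ^ 2 : ℝ) : ℂ) * EE z φ

lemma WW_cont : Continuous WW := by
  unfold WW EE
  apply intervalIntegral.continuous_parametric_intervalIntegral_of_continuous' (by fun_prop)

open Complex in
lemma bj01_W (z : ℝ) : (besselJ 0 z : ℂ) + I * besselJ 1 z = 4 / Real.pi * cexp (I * z) * WW z := by
  have hpi : (Real.pi : ℂ) ≠ 0 := by exact_mod_cast Real.pi_ne_zero
  rw [bj01_hasSum]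
  have h := intervalIntegral.integral_comp_mul_left (a := 0) (b := Real.pi/2)
    (fun x : ℝ => (1 + (Real.cos x : ℂ)) * cexp (I * z * Real.cos x)) (c := 2) (by norm_num)
  rw [mul_zero, show 2 * (Real.pi / 2) = Real.pi by ring] at h
  have h2 : ∫ x in (0:ℝ)..Real.pi, (1 + (Real.cos x : ℂ)) * cexp (I * z * Real.cos x) =
     2 * (∫ x in (0:ℝ)..(Real.pi/2), (1 + (Real.cos (2*x) : ℂ)) * cexp (I * z * Real.cos (2*x))) := by
    rw [h]; simp
  have h3 : ∫ x in (0:ℝ)..(Real.pi/2), (1 + (Real.cos (2*x) : ℂ)) * cexp (I * z * Real.cos (2*x)) =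
     2 * cexp (I * z) * WW z := by
    rw [WW, ← intervalIntegral.integral_const_mul]
    refine intervalIntegral.integral_congr fun x _ => ?_
    have e1 : (Real.cos (2*x) : ℂ) = 2 * (Real.cos x : ℂ)^2 - 1 := by
      exact_mod_cast Real.cos_two_mul x
    have e2 : (Real.sin x : ℂ)^2 = 1 - (Real.cos x : ℂ)^2 := by exact_mod_cast Real.sin_sq x
    have e3 : cexp (I * z * (2 * (Real.cos x : ℂ)^2 - 1)) = cexp (I * z) * EE z x := by
      rw [EE, ← Complex.exp_add, e2]; congr 1; ring
    simp only [e1, e3]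
    push_cast
    ring
  rw [h2, h3]
  ring

open Complex in
lemma W_asy : ∃ C : ℝ, 0 ≤ C ∧ ∀ z : ℝ, 1 ≤ z →
    ‖WW z - (1 - I) / 4 * (Real.sqrt (Real.pi / z) : ℝ)‖ ≤ C / (z * Real.sqrt z) := by
  obtain ⟨C, hC0, hC⟩ := lev2
  refine ⟨1 + C, by positivity, fun z hz => ?_⟩
  have hc0 : ∀ φ ∈ Set.Icc 0 (Real.pi/2), 0 ≤ Real.cos φ := fun φ h =>
    Real.cos_nonneg_of_mem_Icc ⟨by linarith [h.1, Real.pi_pos], h.2⟩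
  have hp : (0:ℝ) ≤ Real.pi/2 := by positivity
  have hz0 : 0 < z := by linarith
  have hE := EE_cont z
  have hP := parts (fun φ => Real.sin φ / (1 + Real.cos φ)) (fun φ => 1 / (1 + Real.cos φ))
    (by
      intro φ h
      have h1 : 1 + Real.cos φ ≠ 0 := by linarith [hc0 φ h]
      convert! (Real.hasDerivAt_sin φ).div ((Real.hasDerivAt_cos φ).const_add 1) h1 using 1
      have := Real.sin_sq_add_cos_sq φ
      field_simp
      linear_combination -this)
    (by
      apply ContinuousOn.div (by fun_prop) (by fun_prop)
      intro φ h; linarith [hc0 φ h]) z hz0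
  have hW : WW z = (∫ φ in (0:ℝ)..(Real.pi/2), (Real.cos φ : ℂ) * EE z φ) -
     ∫ φ in (0:ℝ)..(Real.pi/2), ((Real.sin φ / (1 + Real.cos φ) * (Real.sin φ * Real.cos φ) : ℝ) : ℂ) * EE z φ := by
    rw [WW, ← intervalIntegral.integral_sub]
    · refine intervalIntegral.integral_congr fun φ h => ?_
      rw [Set.uIcc_of_le hp] at h
      have h1 : 1 + Real.cos φ ≠ 0 := by linarith [hc0 φ h]
      have : Real.cos φ ^2 = Real.cos φ - Real.sin φ / (1 + Real.cos φ) * (Real.sin φ * Real.cos φ) := by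
        have := Real.sin_sq_add_cos_sq φ
        field_simp
        linear_combination Real.cos φ * this
      simp only [this]
      push_cast
      ring
    · exact Continuous.intervalIntegrable (by fun_prop) _ _
    · apply ContinuousOn.intervalIntegrable
      rw [Set.uIcc_of_le hp]
      have : ContinuousOn (fun φ => (Real.sin φ / (1 + Real.cos φ) * (Real.sin φ * Real.cos φ))) (Set.Icc 0 (Real.pi/2)) := by
        apply ContinuousOn.mul _ (by fun_prop)
        apply ContinuousOn.div (by fun_prop) (by fun_prop)
        intro φ h; linarith [hc0 φ h]
      exact (Complex.continuous_ofReal.comp_continuousOn this).mul hE.continuousOn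
  have hF := fres3 z hz0
  rw [← int_cos] at hF
  have hC := hC z hz
  set L := ∫ φ in (0:ℝ)..(Real.pi/2), ((1 / (1 + Real.cos φ) : ℝ) : ℂ) * EE z φ
  rw [hP] at hW
  have e1 : WW z - (1 - I) / 4 * (Real.sqrt (Real.pi / z) : ℝ) =
    ((∫ φ in (0:ℝ)..(Real.pi/2), (Real.cos φ : ℂ) * EE z φ) - (1 - I) / 4 * (Real.sqrt (Real.pi / z) : ℝ)
      + cexp (-(2 * I * z)) / (4 * I * z)) - L / (4 * I * z) := by
    rw [hW, Real.sin_pi_div_two, Real.cos_pi_div_two, Real.sin_zero]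
    simp only [add_zero, div_one, zero_div, ofReal_one, ofReal_zero]
    ring
  rw [e1]
  refine (norm_sub_le _ _).trans ?_
  have hs1 : 1 ≤ Real.sqrt z := Real.one_le_sqrt.mpr hz
  have hss : Real.sqrt z * Real.sqrt z = z := Real.mul_self_sqrt hz0.le
  rw [add_div]
  refine add_le_add (hF.trans ?_) ?_
  · apply one_div_le_one_div_of_le (by positivity)
    nlinarith
  · rw [norm_div, show ‖(4 * I * z : ℂ)‖ = 4 * z by simp [abs_of_pos hz0], div_le_div_iff₀ (by positivity) (by positivity)]
    rw [le_div_iff₀ (by positivity)] at hC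
    nlinarith [norm_nonneg L]

noncomputable def KK (z : ℝ) : ℂ :=
  (1 - Complex.I) * Complex.exp (Complex.I * z) / (Real.sqrt Real.pi * Real.sqrt z : ℝ)

open Complex in
lemma bj01_asy : ∃ C : ℝ, 0 ≤ C ∧ ∀ z : ℝ, 1 ≤ z →
    ‖(besselJ 0 z : ℂ) + I * besselJ 1 z - KK z‖ ≤ C / (z * Real.sqrt z) := by
  obtain ⟨C, hC0, hC⟩ := W_asy
  refine ⟨4 / Real.pi * C, by positivity, fun z hz => ?_⟩
  have hz0 : 0 < z := by linarith
  have e1 : (besselJ 0 z : ℂ) + I * besselJ 1 z - KK z = 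
    ((4 / Real.pi : ℝ) : ℂ) * cexp (I * z) * (WW z - (1 - I) / 4 * (Real.sqrt (Real.pi / z) : ℝ)) := by
    rw [bj01_W, KK, Real.sqrt_div Real.pi_pos.le]
    have h1 : (Real.pi : ℂ) = (Real.sqrt Real.pi : ℂ) * (Real.sqrt Real.pi : ℂ) := by
      exact_mod_cast (Real.mul_self_sqrt Real.pi_pos.le).symm
    have h2 : (Real.sqrt Real.pi : ℂ) ≠ 0 := by exact_mod_cast (Real.sqrt_pos.mpr Real.pi_pos).ne'
    have h3 : (Real.sqrt z : ℂ) ≠ 0 := by exact_mod_cast (Real.sqrt_pos.mpr hz0).ne'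
    push_cast
    rw [h1]
    field_simp
  rw [e1, norm_mul, norm_mul, mul_comm I, norm_exp_ofReal_mul_I, mul_one, norm_real, Real.norm_eq_abs,
    abs_of_pos (by positivity), mul_div_assoc]
  gcongr
  exact hC z hz

open Complex in
lemma KK_norm (z : ℝ) (hz : 0 < z) : ‖KK z‖ ≤ 1 / Real.sqrt z := by
  rw [KK, norm_div, norm_mul, mul_comm I, norm_exp_ofReal_mul_I, mul_one, norm_real, Real.norm_eq_abs]
  have h1 : 0 < Real.sqrt z := Real.sqrt_pos.mpr hz
  have h2 : 0 < Real.sqrt Real.pi := Real.sqrt_pos.mpr Real.pi_pos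
  rw [abs_of_pos (by positivity)]
  have h3 : ‖(1 - I : ℂ)‖ ≤ Real.sqrt Real.pi := by
    rw [Complex.norm_eq_sqrt_sq_add_sq]
    apply Real.sqrt_le_sqrt
    simp
    linarith [Real.pi_gt_three]
  rw [div_le_div_iff₀ (by positivity) h1]
  nlinarith

lemma bj_cont01 : Continuous (besselJ 0) ∧ Continuous (besselJ 1) := by
  have h : Continuous (fun z : ℝ => 4 / Real.pi * Complex.exp (Complex.I * z) * WW z) := by
    have := WW_cont
    fun_prop
  constructor
  · have h2 := Complex.continuous_re.comp h
    convert h2 using 1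
    funext z
    simp only [Function.comp]
    rw [← bj01_W]
    simp
  · have h2 := Complex.continuous_im.comp h
    convert h2 using 1
    funext z
    simp only [Function.comp]
    rw [← bj01_W]
    simp

lemma bj_cont (m : ℕ) : ContinuousOn (besselJ m) (Set.Ioi 0) ∧ ContinuousOn (besselJ (m+1)) (Set.Ioi 0) := by
  induction m with
  | zero => exact ⟨bj_cont01.1.continuousOn, bj_cont01.2.continuousOn⟩
  | succ m ih =>
    refine ⟨ih.2, ?_⟩
    have h : ContinuousOn (fun x => 2 * ((m:ℝ)+1) / x * besselJ (m+1) x - besselJ m x) (Set.Ioi 0) := by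
      refine ContinuousOn.sub (ContinuousOn.mul ?_ ih.2) ih.1
      exact ContinuousOn.div continuousOn_const continuousOn_id (fun x hx => (ne_of_gt hx))
    exact h.congr fun x hx => bj_rec m x (ne_of_gt hx)

open Complex in
lemma bj_asy (m : ℕ) : (∃ C : ℝ, 0 ≤ C ∧ ∀ z : ℝ, 1 ≤ z →
    |besselJ m z - ((-I)^m * KK z).re| ≤ C / (z * Real.sqrt z)) ∧
    (∃ C : ℝ, 0 ≤ C ∧ ∀ z : ℝ, 1 ≤ z →
    |besselJ (m+1) z - ((-I)^(m+1) * KK z).re| ≤ C / (z * Real.sqrt z)) := by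
  induction m with
  | zero =>
    obtain ⟨C, hC0, hC⟩ := bj01_asy
    refine ⟨⟨C, hC0, fun z hz => ?_⟩, ⟨C, hC0, fun z hz => ?_⟩⟩
    · refine le_trans ?_ ((abs_re_le_norm _).trans (hC z hz))
      simp
    · refine le_trans ?_ ((abs_im_le_norm _).trans (hC z hz))
      simp
  | succ m ih =>
    refine ⟨ih.2, ?_⟩
    obtain ⟨⟨C0, hC00, hC0⟩, ⟨C1, hC10, hC1⟩⟩ := ih
    refine ⟨2 * (m+1) * (1 + C1) + C0, by positivity, fun z hz => ?_⟩
    have hz0 : 0 < z := by linarith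
    have hs1 : 1 ≤ Real.sqrt z := Real.one_le_sqrt.mpr hz
    have h0 := hC0 z hz
    have h1 := hC1 z hz
    have e1 : ((-I)^(m+1+1) * KK z).re = - ((-I)^m * KK z).re := by
      rw [pow_succ, pow_succ, mul_assoc ((-I)^m)]
      simp
    rw [e1, show m+1+1 = m+2 by ring, bj_rec m z hz0.ne']
    have hJ : |besselJ (m+1) z| ≤ (1 + C1) / Real.sqrt z := by
      have h2 : |((-I)^(m+1) * KK z).re| ≤ 1 / Real.sqrt z := by
        refine (abs_re_le_norm _).trans ?_
        rw [norm_mul, norm_pow, norm_neg, norm_I, one_pow, one_mul]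
        exact KK_norm z hz0
      have h3 : C1 / (z * Real.sqrt z) ≤ C1 / Real.sqrt z := by
        gcongr
        nlinarith
      rw [add_div]
      have := abs_add_le (besselJ (m+1) z - ((-I)^(m+1) * KK z).re) (((-I)^(m+1) * KK z).re)
      rw [sub_add_cancel] at this
      linarith
    have e2 : 2 * ((m:ℝ) + 1) / z * besselJ (m + 1) z - besselJ m z - -((-I) ^ m * KK z).re =
      2 * ((m:ℝ) + 1) / z * besselJ (m + 1) z - (besselJ m z - ((-I) ^ m * KK z).re) := by ring
    rw [e2]
    refine (abs_sub _ _).trans ?_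
    rw [abs_mul, abs_of_pos (show 0 < 2 * ((m:ℝ) + 1) / z by positivity), add_div]
    refine add_le_add ?_ h0
    calc 2 * ((m:ℝ) + 1) / z * |besselJ (m + 1) z| ≤ 2 * ((m:ℝ) + 1) / z * ((1 + C1) / Real.sqrt z) := by gcongr
      _ = _ := by field_simp

open Complex in
lemma osc (U : ℝ → ℝ) (hU : ContDiff ℝ (⊤ : ℕ∞) U) : ∃ C : ℝ, 0 ≤ C ∧ ∀ l : ℝ, 0 < l →
    ‖∫ y in (1:ℝ)..2, ((U y * y ^ (-(1/4):ℝ) : ℝ) : ℂ) * cexp (I * (l * Real.sqrt y : ℝ))‖ ≤ C / l := by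
  set u : ℝ → ℝ := fun y => U y * y ^ (1/4 : ℝ) with hu
  set u' : ℝ → ℝ := fun y => deriv U y * y ^ (1/4 : ℝ) + U y * (1/4 * y ^ (1/4 - 1 : ℝ)) with hu'
  have hd : ∀ y ∈ Set.uIcc (1:ℝ) 2, HasDerivAt (fun y => (u y : ℂ)) (u' y : ℂ) y := by
    intro y hy
    rw [Set.uIcc_of_le (by norm_num)] at hy
    have hy0 : y ≠ 0 := by linarith [hy.1]
    apply HasDerivAt.ofReal_comp
    exact ((hU.differentiable (by simp)).differentiableAt.hasDerivAt).mul
      (Real.hasDerivAt_rpow_const (Or.inl hy0))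
  have hc : ContinuousOn u' (Set.Icc 1 2) := by
    have h1 : Continuous (deriv U) := hU.continuous_deriv (by simp)
    have h2 := hU.continuous
    have h3 : ∀ p : ℝ, ContinuousOn (fun y : ℝ => y ^ p) (Set.Icc 1 2) := fun p =>
      continuousOn_id.rpow_const (fun y hy => Or.inl (by simp; linarith [hy.1]))
    have h4 := h3 (1/4)
    have h5 := h3 (1/4 - 1)
    rw [hu']
    fun_prop
  obtain ⟨M, hM⟩ := isCompact_Icc.exists_bound_of_continuousOn hc
  have hM0 : 0 ≤ M := (norm_nonneg _).trans (hM 1 ⟨le_rfl, by norm_num⟩)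
  refine ⟨2 * (|u 2| + |u 1| + M), by positivity, fun l hl => ?_⟩
  have hlc : (l:ℂ) ≠ 0 := by exact_mod_cast hl.ne'
  have hv : ∀ y ∈ Set.uIcc (1:ℝ) 2, HasDerivAt (fun y : ℝ => cexp (I * (l * Real.sqrt y : ℝ)))
      (cexp (I * (l * Real.sqrt y : ℝ)) * (I * ((l * (1 / (2 * Real.sqrt y)) : ℝ) : ℂ))) y := by
    intro y hy
    rw [Set.uIcc_of_le (by norm_num)] at hy
    have hy0 : y ≠ 0 := by linarith [hy.1]
    exact ((((Real.hasDerivAt_sqrt hy0).const_mul l).ofReal_comp).const_mul I).cexp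
  have hcE : Continuous (fun y : ℝ => cexp (I * (l * Real.sqrt y : ℝ))) := by fun_prop
  have h := intervalIntegral.integral_mul_deriv_eq_deriv_mul hd hv
    (by
      apply ContinuousOn.intervalIntegrable
      rw [Set.uIcc_of_le (by norm_num)]
      exact Complex.continuous_ofReal.comp_continuousOn hc)
    (by
      apply ContinuousOn.intervalIntegrable
      rw [Set.uIcc_of_le (by norm_num)]
      refine hcE.continuousOn.mul (continuousOn_const.mul ?_)
      refine Complex.continuous_ofReal.comp_continuousOn (f := fun y => l * (1 / (2 * Real.sqrt y))) ?_
      refine continuousOn_const.mul (continuousOn_const.div (by fun_prop) ?_)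
      intro y hy
      have : 0 < Real.sqrt y := Real.sqrt_pos.mpr (by linarith [hy.1])
      positivity)
  have e1 : ∫ y in (1:ℝ)..2, ((U y * y ^ (-(1/4):ℝ) : ℝ) : ℂ) * cexp (I * (l * Real.sqrt y : ℝ)) =
      (2 / (I * l)) * ∫ y in (1:ℝ)..2, (u y : ℂ) * (cexp (I * (l * Real.sqrt y : ℝ)) * (I * ((l * (1 / (2 * Real.sqrt y)) : ℝ) : ℂ))) := by
    rw [← intervalIntegral.integral_const_mul]
    refine intervalIntegral.integral_congr fun y hy => ?_
    rw [Set.uIcc_of_le (by norm_num)] at hy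
    have hy0 : 0 < y := by linarith [hy.1]
    have hs : 0 < Real.sqrt y := Real.sqrt_pos.mpr hy0
    have hsc : (Real.sqrt y : ℂ) ≠ 0 := by exact_mod_cast hs.ne'
    have : y ^ (-(1/4):ℝ) = y ^ (1/4 : ℝ) * (1 / Real.sqrt y) := by
      rw [Real.sqrt_eq_rpow, one_div (y ^ _), ← Real.rpow_neg hy0.le, ← Real.rpow_add hy0]
      norm_num
    simp only [hu, this]
    push_cast
    field_simp
  have hen : ∀ y : ℝ, ‖cexp (I * (l * Real.sqrt y : ℝ))‖ = 1 := by
    intro y; rw [mul_comm]; exact norm_exp_ofReal_mul_I _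
  have hI : ‖∫ y in (1:ℝ)..2, (u' y : ℂ) * cexp (I * (l * Real.sqrt y : ℝ))‖ ≤ M := by
    have := intervalIntegral.norm_integral_le_of_norm_le_const (a := 1) (b := 2) (C := M)
      (f := fun y => (u' y : ℂ) * cexp (I * (l * Real.sqrt y : ℝ))) (by
        intro x hx
        rw [Set.uIoc_of_le (by norm_num)] at hx
        rw [norm_mul, hen, mul_one, norm_real]
        exact hM x ⟨hx.1.le, hx.2⟩)
    norm_num at this ⊢
    exact this
  rw [e1, h, norm_mul, norm_div, norm_mul, norm_I, one_mul, norm_real, Real.norm_eq_abs, abs_of_pos hl]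
  norm_num only [RCLike.norm_ofNat]
  rw [div_mul_eq_mul_div]
  gcongr
  refine (norm_sub_le _ _).trans (add_le_add ((norm_sub_le _ _).trans ?_) hI)
  have h1e := hen 1
  rw [Real.sqrt_one] at h1e
  rw [norm_mul, norm_mul, hen, h1e, mul_one, mul_one, norm_real, norm_real]
  rfl


open Complex in
lemma ptw (m : ℕ) (T y : ℝ) (hT : 0 < T) (hy : 0 < y) :
    cexp (I * (4 * Real.pi * T * Real.sqrt y : ℝ)) *
      ((((-I)^m * KK (4 * Real.pi * T * Real.sqrt y)).re : ℝ) : ℂ) =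
    (I^m * (1 + I) / (4 * Real.pi * Real.sqrt T : ℝ)) * ((y ^ (-(1/4):ℝ) : ℝ) : ℂ) +
    ((-I)^m * (1 - I) / (4 * Real.pi * Real.sqrt T : ℝ)) *
      (((y ^ (-(1/4):ℝ) : ℝ) : ℂ) * cexp (I * (8 * Real.pi * T * Real.sqrt y : ℝ))) := by
  have hsz : Real.sqrt (4 * Real.pi * T * Real.sqrt y) =
      2 * Real.sqrt Real.pi * Real.sqrt T * y ^ (1/4:ℝ) := by
    rw [Real.sqrt_mul (by positivity), Real.sqrt_mul (by positivity), Real.sqrt_mul (by norm_num)]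
    rw [show (4:ℝ) = 2^2 by norm_num, Real.sqrt_sq (by norm_num)]
    congr 1
    rw [Real.sqrt_eq_rpow, Real.sqrt_eq_rpow, ← Real.rpow_mul hy.le]
    norm_num
  have hyn : y ^ (-(1/4):ℝ) = (y ^ (1/4:ℝ))⁻¹ := Real.rpow_neg hy.le _
  rw [re_eq_add_conj, KK, hsz, hyn]
  set z : ℝ := 4 * Real.pi * T * Real.sqrt y with hz
  have h8 : cexp (I * (8 * Real.pi * T * Real.sqrt y : ℝ)) = cexp (I * z) * cexp (I * z) := by
    rw [← Complex.exp_add, hz]; congr 1; push_cast; ring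
  rw [h8]
  have hy4 : (((y ^ (1/4:ℝ) : ℝ)) : ℂ) ≠ 0 := by exact_mod_cast (Real.rpow_pos_of_pos hy _).ne'
  set q : ℝ := y ^ (1/4:ℝ)
  have hTs : (Real.sqrt T : ℂ) ≠ 0 := by exact_mod_cast (Real.sqrt_pos.mpr hT).ne'
  have hpis : (Real.sqrt Real.pi : ℂ) ≠ 0 := by exact_mod_cast (Real.sqrt_pos.mpr Real.pi_pos).ne'
  have hpi : (Real.pi : ℂ) = (Real.sqrt Real.pi : ℂ) * (Real.sqrt Real.pi : ℂ) := by
    exact_mod_cast (Real.mul_self_sqrt Real.pi_pos.le).symm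
  have hconj : (starRingEnd ℂ) (cexp (I * z)) = (cexp (I * z))⁻¹ := by
    rw [← Complex.exp_conj, ← Complex.exp_neg]; simp
  have hE : cexp (I * z) ≠ 0 := Complex.exp_ne_zero _
  simp only [map_mul, map_div₀, map_pow, map_neg, map_sub, map_one, conj_I, conj_ofReal, hconj, neg_neg]
  set E := cexp (I * z)
  push_cast
  rw [hpi]
  field_simp
  ring

lemma icc_red (g : ℝ → ℂ) (hg : ∀ y, y ∉ Set.Icc (1:ℝ) 2 → g y = 0) :
    ∫ y in Set.Ioi (0:ℝ), g y = ∫ y in (1:ℝ)..2, g y := by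
  rw [intervalIntegral.integral_of_le (by norm_num), ← MeasureTheory.integral_Icc_eq_integral_Ioc]
  apply MeasureTheory.setIntegral_eq_of_subset_of_forall_sdiff_eq_zero measurableSet_Ioi
  · intro y hy; exact lt_of_lt_of_le one_pos hy.1
  · intro y hy; exact hg y hy.2

open Complex in
lemma main_red (U : ℝ → ℝ) (hsupp : Function.support U ⊆ Set.Icc 1 2) (m : ℕ) (a X : ℝ)
    (hX : 0 < X) :
    Ik U (m+1) a a X = X * ∫ y in (1:ℝ)..2, (U y : ℂ) *
      cexp (I * (4 * Real.pi * (a * Real.sqrt X) * Real.sqrt y : ℝ)) *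
      (besselJ m (4 * Real.pi * (a * Real.sqrt X) * Real.sqrt y) : ℂ) := by
  have hU0 : ∀ y, y ∉ Set.Icc (1:ℝ) 2 → U y = 0 := fun y hy => by
    by_contra h; exact hy (hsupp h)
  rw [← icc_red]
  · have h := MeasureTheory.integral_comp_mul_left_Ioi (fun x : ℝ => (U (x / X) : ℂ) * e (2 * a * Real.sqrt x) *
      (besselJ m (4 * Real.pi * a * Real.sqrt x) : ℂ)) 0 hX
    rw [mul_zero] at h
    have hXc : (X : ℂ) ≠ 0 := by exact_mod_cast hX.ne'
    rw [Ik, Nat.add_sub_cancel]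
    have h2 : ∀ A B : ℂ, A = X⁻¹ • B → B = X * A := by
      intro A B hAB
      rw [hAB, real_smul, ofReal_inv, mul_inv_cancel_left₀ hXc]
    rw [h2 _ _ h]
    congr 1
    refine MeasureTheory.setIntegral_congr_fun measurableSet_Ioi fun y _ => ?_
    rw [mul_div_cancel_left₀ _ hX.ne', Real.sqrt_mul hX.le, e]
    congr 1
    · congr 2
      push_cast
      ring
    · congr 2
      ring
  · intro y hy
    simp [hU0 y hy]

lemma mellin_red (U : ℝ → ℝ) (hsupp : Function.support U ⊆ Set.Icc 1 2) :
    (mellinU U (3/4) : ℂ) = ∫ y in (1:ℝ)..2, ((U y * y ^ (-(1/4):ℝ) : ℝ) : ℂ) := by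
  rw [← icc_red]
  · rw [integral_complex_ofReal, mellinU]
    norm_num
  · intro y hy
    have : U y = 0 := by by_contra h; exact hy (hsupp h)
    simp [this]

open Complex in
lemma core (m : ℕ) (U : ℝ → ℝ) (hU : ContDiff ℝ (⊤ : ℕ∞) U) : ∃ C : ℝ, 0 ≤ C ∧ ∀ T : ℝ, 1 < T →
    ‖(∫ y in (1:ℝ)..2, (U y : ℂ) * cexp (I * (4 * Real.pi * T * Real.sqrt y : ℝ)) *
      (besselJ m (4 * Real.pi * T * Real.sqrt y) : ℂ)) -
      (I^m * (1 + I) / (4 * Real.pi * Real.sqrt T : ℝ)) *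
        ∫ y in (1:ℝ)..2, ((U y * y ^ (-(1/4):ℝ) : ℝ) : ℂ)‖ ≤ C / (T * Real.sqrt T) := by
  obtain ⟨Co, hCo0, hCo⟩ := osc U hU
  obtain ⟨Cb, hCb0, hCb⟩ := (bj_asy m).1
  obtain ⟨B, hB⟩ := (isCompact_Icc (a := (1:ℝ)) (b := 2)).exists_bound_of_continuousOn hU.continuous.continuousOn
  have hB0 : 0 ≤ B := (norm_nonneg _).trans (hB 1 ⟨le_rfl, by norm_num⟩)
  refine ⟨B * Cb + Co, by positivity, fun T hT => ?_⟩
  have hT0 : 0 < T := by linarith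
  have hsT : 0 < Real.sqrt T := Real.sqrt_pos.mpr hT0
  have hzT : ∀ y ∈ Set.Icc (1:ℝ) 2, T ≤ 4 * Real.pi * T * Real.sqrt y := by
    intro y hy
    have h1 : 1 ≤ Real.sqrt y := Real.one_le_sqrt.mpr hy.1
    have h2 := Real.pi_gt_three
    have h3 : 1 ≤ 4 * Real.pi * Real.sqrt y := by nlinarith
    nlinarith
  have hrp : ContinuousOn (fun y : ℝ => y ^ (-(1/4):ℝ)) (Set.Icc 1 2) :=
      continuousOn_id.rpow_const (fun y hy => Or.inl (by simp; linarith [hy.1]))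
  have hUc := hU.continuous
  have hg : ContinuousOn (fun y => ((U y * y ^ (-(1/4):ℝ) : ℝ) : ℂ)) (Set.Icc 1 2) :=
    Complex.continuous_ofReal.comp_continuousOn (hUc.continuousOn.mul hrp)
  have hex : Continuous (fun y : ℝ => cexp (I * (8 * Real.pi * T * Real.sqrt y : ℝ))) := by fun_prop
  have hex4 : Continuous (fun y : ℝ => cexp (I * (4 * Real.pi * T * Real.sqrt y : ℝ))) := by fun_prop
  have hJ : ContinuousOn (fun y => (besselJ m (4 * Real.pi * T * Real.sqrt y) : ℂ)) (Set.Icc 1 2) := by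
    refine Complex.continuous_ofReal.comp_continuousOn ?_
    refine (bj_cont m).1.comp (f := fun y => 4 * Real.pi * T * Real.sqrt y) (by fun_prop) ?_
    intro y hy
    exact lt_of_lt_of_le hT0 (hzT y hy)
  have hii : ∀ f : ℝ → ℂ, ContinuousOn f (Set.Icc 1 2) → IntervalIntegrable f MeasureTheory.volume 1 2 := by
    intro f hf
    apply ContinuousOn.intervalIntegrable
    rwa [Set.uIcc_of_le (by norm_num)]
  have hF : IntervalIntegrable (fun y : ℝ => (U y : ℂ) * cexp (I * (4 * Real.pi * T * Real.sqrt y : ℝ)) *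
      (besselJ m (4 * Real.pi * T * Real.sqrt y) : ℂ)) MeasureTheory.volume 1 2 := hii _ (((Complex.continuous_ofReal.comp hUc).continuousOn.mul hex4.continuousOn).mul hJ)
  have hG := hii _ hg
  have hO : IntervalIntegrable (fun y : ℝ => ((U y * y ^ (-(1/4):ℝ) : ℝ) : ℂ) *
      cexp (I * (8 * Real.pi * T * Real.sqrt y : ℝ))) MeasureTheory.volume 1 2 := hii _ (hg.mul hex.continuousOn)
  set c1 : ℂ := I^m * (1 + I) / (4 * Real.pi * Real.sqrt T : ℝ) with hc1
  set c2 : ℂ := (-I)^m * (1 - I) / (4 * Real.pi * Real.sqrt T : ℝ) with hc2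
  have hsplit : (∫ y in (1:ℝ)..2, (U y : ℂ) * cexp (I * (4 * Real.pi * T * Real.sqrt y : ℝ)) *
      (besselJ m (4 * Real.pi * T * Real.sqrt y) : ℂ)) -
      c1 * ∫ y in (1:ℝ)..2, ((U y * y ^ (-(1/4):ℝ) : ℝ) : ℂ) =
      (∫ y in (1:ℝ)..2, (U y : ℂ) * cexp (I * (4 * Real.pi * T * Real.sqrt y : ℝ)) *
        ((besselJ m (4 * Real.pi * T * Real.sqrt y) - ((-I)^m * KK (4 * Real.pi * T * Real.sqrt y)).re : ℝ) : ℂ)) +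
      c2 * ∫ y in (1:ℝ)..2, ((U y * y ^ (-(1/4):ℝ) : ℝ) : ℂ) * cexp (I * (8 * Real.pi * T * Real.sqrt y : ℝ)) := by
    rw [sub_eq_iff_eq_add, add_assoc, ← sub_eq_iff_eq_add]
    rw [← intervalIntegral.integral_const_mul, ← intervalIntegral.integral_const_mul]
    rw [← intervalIntegral.integral_add (hO.const_mul c2) (hG.const_mul c1)]
    rw [← intervalIntegral.integral_sub hF ((hO.const_mul c2).add (hG.const_mul c1))]
    refine intervalIntegral.integral_congr fun y hy => ?_
    rw [Set.uIcc_of_le (by norm_num)] at hy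
    have hp := ptw m T y hT0 (by linarith [hy.1])
    rw [← hc1, ← hc2] at hp
    simp only [Function.comp, ofReal_sub, ofReal_mul (U y)]
    linear_combination (U y : ℂ) * hp
  rw [hsplit]
  refine (norm_add_le _ _).trans ?_
  rw [add_div]
  refine add_le_add ?_ ?_
  · have := intervalIntegral.norm_integral_le_of_norm_le_const (a := 1) (b := 2) (C := B * Cb / (T * Real.sqrt T))
      (f := fun y => (U y : ℂ) * cexp (I * (4 * Real.pi * T * Real.sqrt y : ℝ)) *
        ((besselJ m (4 * Real.pi * T * Real.sqrt y) - ((-I)^m * KK (4 * Real.pi * T * Real.sqrt y)).re : ℝ) : ℂ)) (by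
        intro y hy
        rw [Set.uIoc_of_le (by norm_num)] at hy
        have hy' : y ∈ Set.Icc (1:ℝ) 2 := ⟨hy.1.le, hy.2⟩
        have hz := hzT y hy'
        rw [norm_mul, norm_mul, mul_comm I, norm_exp_ofReal_mul_I, mul_one, norm_real, norm_real, mul_div_assoc]
        refine mul_le_mul (hB y hy') ?_ (norm_nonneg _) hB0
        refine (hCb _ (by linarith)).trans ?_
        gcongr)
    rw [show |(2:ℝ) - 1| = 1 by norm_num, mul_one] at this
    exact this
  · rw [norm_mul]
    have ho := hCo (8 * Real.pi * T) (by positivity)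
    have hpi := Real.pi_gt_three
    have h1 : ‖c2‖ ≤ 1 / Real.sqrt T := by
      rw [hc2, norm_div, norm_mul, norm_pow, norm_neg, norm_I, one_pow, one_mul, norm_real,
        Real.norm_eq_abs, abs_of_pos (by positivity), div_le_div_iff₀ (by positivity) hsT, one_mul]
      have : ‖(1 - I : ℂ)‖ ≤ 2 := (norm_sub_le _ _).trans (by simp; norm_num)
      have : ‖(1 - I : ℂ)‖ ≤ 4 * Real.pi := by linarith
      gcongr
    have h2 : Co / (8 * Real.pi * T) ≤ Co / T := by
      gcongr
      nlinarith
    refine (mul_le_mul h1 (ho.trans h2) (norm_nonneg _) (by positivity)).trans (le_of_eq ?_)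
    field_simp

/-- Asymptotic for the diagonal Bessel integral: for `k ≥ 1` and a fixed smooth
`U` supported in `[1,2]`, one has
`I_k(a,a;X) = (1+i) i^{k−1} Ũ(3/4) X / (4π (a²X)^{1/4}) + O(X/(a²X)^{3/4})`
uniformly in `a > 0`, `X > 1` with `a²X > 1`. -/
theorem stmt5 (k : ℕ) (hk : 1 ≤ k) (U : ℝ → ℝ) (hU : ContDiff ℝ (⊤ : ℕ∞) U)
    (hsupp : Function.support U ⊆ Set.Icc 1 2) :
    ∃ C : ℝ, 0 < C ∧
      ∀ a X : ℝ, 0 < a → 1 < X → 1 < a ^ 2 * X →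
        ‖Ik U k a a X -
            (1 + Complex.I) * Complex.I ^ (k - 1) * (mellinU U (3 / 4) : ℂ) * (X : ℂ) /
              (4 * (Real.pi : ℂ) * (((a ^ 2 * X) ^ ((1 : ℝ) / 4) : ℝ) : ℂ))‖
          ≤ C * X / (a ^ 2 * X) ^ ((3 : ℝ) / 4) := by
  obtain ⟨m, rfl⟩ : ∃ m, k = m + 1 := ⟨k - 1, by omega⟩
  obtain ⟨C, hC0, hC⟩ := core m U hU
  refine ⟨C + 1, by positivity, fun a X ha hX haX => ?_⟩
  have hX0 : 0 < X := by linarith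
  have hsX : 0 < Real.sqrt X := Real.sqrt_pos.mpr hX0
  set T := a * Real.sqrt X with hTdef
  have hT0 : 0 < T := by positivity
  have hTT : a ^ 2 * X = T ^ 2 := by
    rw [hTdef, mul_pow, Real.sq_sqrt hX0.le]
  have hT : 1 < T := by
    rw [hTT] at haX
    nlinarith
  have hsT : 0 < Real.sqrt T := Real.sqrt_pos.mpr hT0
  have h14 : (a ^ 2 * X) ^ ((1:ℝ)/4) = Real.sqrt T := by
    rw [hTT, ← Real.rpow_natCast, ← Real.rpow_mul hT0.le, Real.sqrt_eq_rpow]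
    norm_num
  have h34 : (a ^ 2 * X) ^ ((3:ℝ)/4) = T * Real.sqrt T := by
    rw [hTT, ← Real.rpow_natCast, ← Real.rpow_mul hT0.le, Real.sqrt_eq_rpow]
    nth_rewrite 2 [← Real.rpow_one T]
    rw [← Real.rpow_add hT0]
    norm_num
  have h := hC T hT
  rw [h14, h34, main_red U hsupp m a X hX0, mellin_red U hsupp, Nat.add_sub_cancel, ← hTdef]
  set A := ∫ y in (1:ℝ)..2, (U y : ℂ) * Complex.exp (Complex.I * (4 * Real.pi * T * Real.sqrt y : ℝ)) *
      (besselJ m (4 * Real.pi * T * Real.sqrt y) : ℂ)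
  set M := ∫ y in (1:ℝ)..2, ((U y * y ^ (-(1/4):ℝ) : ℝ) : ℂ)
  have e1 : (X : ℂ) * A - (1 + Complex.I) * Complex.I ^ m * M * X / (4 * Real.pi * (Real.sqrt T : ℂ)) =
      X * (A - (Complex.I^m * (1 + Complex.I) / (4 * Real.pi * Real.sqrt T : ℝ)) * M) := by
    push_cast
    ring
  rw [e1, norm_mul, Complex.norm_real, Real.norm_eq_abs, abs_of_pos hX0]
  calc X * _ ≤ X * (C / (T * Real.sqrt T)) := by gcongr
    _ = C * X / (T * Real.sqrt T) := by ring
    _ ≤ (C + 1) * X / (T * Real.sqrt T) := by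
      gcongr
      linarith
end
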